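/- arXiv:math/0502270 — 6 statements merged into one kernel-verified Lean document; each statement's English description precedes it below -/
import Mathlib

section
/- Let (W,S) be a Coxeter system satisfying: (1) for all s ≠ t ∈ S with m(s,t) odd, {s,t} is a maximal spherical subset of S; (2) there is no three-element subset {s,t,u} ⊆ S such that m(s,t) and m(t,u) are both odd; (3) for all s ≠ t ∈ S with m(s,t) odd, the number of maximal spherical subsets of S intersecting {s,t} is at most two. Then (W,S) is reflection rigid: for every Coxeter generating set S' for W such that the set of reflections of (W,S') equals the set of reflections of (W,S), there exists a bijection ψ : S → S' with m(s,t) = m'(ψ(s),ψ(t)) for all s,t ∈ S. -/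
/-!
Odd entries make generators conjugate, and the conjugacy classes of simple reflections are the
components of the graph of odd edges. Condition (2) makes the odd edges a matching, so every class
in `S` has at most two members. Conditions (1) and (3) say that at most one member of a two-element
class, the *hub*, is linked by finite edges to generators outside the class (`free_end`), and that
all those neighbours are finitely linked among themselves (`linked_neighbours`).

Let `S'` be another Coxeter generating set with the same reflections. The structure of `S` is
carried over to `S'` by homomorphisms from `W` to well-understood groups:

* The geometric representation shows that each conjugacy class of reflections contains equally many
  elements of `S` and `S'` (`rank_le`). Hence classes in `S'` also have at most two members, joined
  by an odd edge.
* Homomorphisms to generalised dihedral groups `A ⋊ ±1` (`dihedral_transfer`) detect whether two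
  classes are joined by a finite edge (`adjacent_classes`, with `A = ℤ`), and bound the orders
  `m(i, j)` inside a class and between hubs (`ord_dvd_of_class`, `ord_le_of_hubs`, with `A` a finite
  product of cyclic groups).
* The essential point is that classes in `S'` also have at most one hub (`hub_transfer`). If `{s, t}`
  is a class in `S` with `m(s, t) = n` and `t` not a hub, then `W` is an amalgam of `⟨s, t⟩` and
  `⟨S ∖ {t}⟩` over `⟨s⟩`. Instead of the Bass–Serre tree an action of `W` on `ℤ × ℤ/n` is used
  (`exists_tree_hom`), in which the reflections outside the class act on each fibre `ℤ` as point
  reflections. Two hubs in the corresponding class of `S'` would fix a common point, and then `W`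
  would fix a point of `ℤ/n`, on which `s` and `t` act without common fixed point.

Matching hubs with hubs and non-hubs with non-hubs inside every class gives the bijection `ψ`;
orders agree because each is bounded by the other.
-/

/-- The standard parabolic subgroup `W_T` of a Coxeter system, generated by the
simple reflections indexed by `T`. -/
def CoxeterSystem.parabolic {B W : Type*} [Group W] {M : CoxeterMatrix B}
    (cs : CoxeterSystem M W) (T : Set B) : Subgroup W :=
  Subgroup.closure (cs.simple '' T)

/-- `T` is a spherical subset: the parabolic subgroup `W_T` is finite. -/
def CoxeterSystem.IsSpherical {B W : Type*} [Group W] {M : CoxeterMatrix B}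
    (cs : CoxeterSystem M W) (T : Set B) : Prop :=
  Finite (cs.parabolic T)

/-- `T` is a maximal spherical subset: spherical and maximal under inclusion
among spherical subsets. -/
def CoxeterSystem.IsMaxSpherical {B W : Type*} [Group W] {M : CoxeterMatrix B}
    (cs : CoxeterSystem M W) (T : Set B) : Prop :=
  cs.IsSpherical T ∧ ∀ U : Set B, cs.IsSpherical U → T ⊆ U → U = T

/-- The conjugate subgroup `g H g⁻¹`. -/
def conjSubgroup {G : Type*} [Group G] (g : G) (H : Subgroup G) : Subgroup G :=
  Subgroup.map (MulAut.conj g).toMonoidHom H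

namespace HosakaRigid

variable {B B' W : Type*} [Group W] {M : CoxeterMatrix B} {M' : CoxeterMatrix B'}

/-! ### Orders of products of simple reflections, and lifting -/

/-- The order `m(i, j)` of the product of two simple reflections; `0` encodes infinite order. -/
noncomputable def ord (cs : CoxeterSystem M W) (i j : B) : ℕ :=
  orderOf (cs.simple i * cs.simple j)

lemma ord_self (cs : CoxeterSystem M W) (i : B) : ord cs i i = 1 := by
  simp [ord]

lemma ord_comm (cs : CoxeterSystem M W) (i j : B) : ord cs i j = ord cs j i := by
  have : cs.simple j * cs.simple i = (cs.simple i * cs.simple j)⁻¹ := by simp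
  rw [ord, ord, this, orderOf_inv]

lemma pow_ord (cs : CoxeterSystem M W) (i j : B) :
    (cs.simple i * cs.simple j) ^ ord cs i j = 1 := pow_orderOf_eq_one _

/-- The universal property, with the relations phrased through the actual orders in `W`. These
divide the entries of the Coxeter matrix, so no knowledge that they agree is required. -/
lemma exists_lift (cs : CoxeterSystem M W) {G : Type*} [Group G] (f : B → G)
    (hf : ∀ i j, (f i * f j) ^ ord cs i j = 1) :
    ∃ F : W →* G, ∀ i, F (cs.simple i) = f i := by
  have hl : M.IsLiftable f := by
    intro i j
    obtain ⟨c, hc⟩ := orderOf_dvd_of_pow_eq_one (cs.simple_mul_simple_pow i j)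
    change M.M i j = ord cs i j * c at hc
    change (f i * f j) ^ M.M i j = 1
    rw [hc, pow_mul, hf, one_pow]
  exact ⟨cs.lift ⟨f, hl⟩, fun i => cs.lift_apply_simple hl i⟩

/-- In a dihedral group with odd rotation order the two generating involutions are conjugate. -/
lemma isConj_of_pow_odd {G : Type*} [Group G] {a b : G} (ha : a * a = 1) (hb : b * b = 1)
    {k : ℕ} (hk : Odd k) (h : (a * b) ^ k = 1) : IsConj a b := by
  obtain ⟨l, rfl⟩ := hk
  have hinv : (a * b)⁻¹ = b * a := by
    rw [mul_inv_rev, inv_eq_of_mul_eq_one_left ha, inv_eq_of_mul_eq_one_left hb]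
  have hflip : ∀ n : ℕ, a * (b * a) ^ n = (a * b) ^ n * a := by
    intro n
    induction n with
    | zero => simp
    | succ n ih => rw [pow_succ, ← mul_assoc, ih, pow_succ]; simp only [mul_assoc]
  refine isConj_iff.mpr ⟨(a * b) ^ l, ?_⟩
  have h2 : (a * b) ^ (2 * l) = b * a := by
    rw [← hinv, eq_inv_iff_mul_eq_one, ← pow_succ]; exact h
  rw [← inv_pow, hinv, mul_assoc, hflip, ← mul_assoc, ← pow_add, ← two_mul, h2, mul_assoc, ha,
    mul_one]

lemma isConj_of_odd_ord (cs : CoxeterSystem M W) {i j : B} (h : Odd (ord cs i j)) :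
    IsConj (cs.simple i) (cs.simple j) :=
  isConj_of_pow_odd (cs.simple_mul_simple_self i) (cs.simple_mul_simple_self j) h (pow_ord cs i j)

lemma isConj_congr {x y z : W} (h : IsConj x y) : IsConj x z ↔ IsConj y z :=
  ⟨fun k => h.symm.trans k, fun k => h.trans k⟩

/-- A set of generators closed under odd edges yields a sign character, so it is closed under
conjugacy. -/
lemma mem_of_isConj (cs : CoxeterSystem M W) (X : Set B)
    (hX : ∀ a b, a ∈ X → Odd (ord cs a b) → b ∈ X) {i j : B} (hi : i ∈ X)
    (h : IsConj (cs.simple i) (cs.simple j)) : j ∈ X := by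
  classical
  obtain ⟨F, hF⟩ := exists_lift cs (fun a => if a ∈ X then (-1 : ℤˣ) else 1) (by
    intro a b
    have hab : Odd (ord cs a b) → (a ∈ X ↔ b ∈ X) := fun ho =>
      ⟨fun ha => hX a b ha ho, fun hb => hX b a hb (by rwa [ord_comm])⟩
    rcases Nat.even_or_odd (ord cs a b) with he | ho
    · obtain ⟨c, hc⟩ := he
      rw [hc, ← two_mul, pow_mul, Int.units_sq, one_pow]
    · simp only [hab ho]
      split_ifs <;> simp)
  obtain ⟨g, hg⟩ := isConj_iff.mp h
  have := congrArg F hg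
  rw [map_mul, map_mul, hF, mul_right_comm, ← map_mul, mul_inv_cancel, map_one, one_mul, hF,
    if_pos hi] at this
  by_contra hj
  rw [if_neg hj] at this
  exact absurd this (by decide)

/-- Two distinct conjugate simple reflections: the first one has an odd edge. -/
lemma exists_odd_of_isConj (cs : CoxeterSystem M W) {i j : B} (hij : i ≠ j)
    (h : IsConj (cs.simple i) (cs.simple j)) : ∃ k, k ≠ i ∧ Odd (ord cs i k) := by
  by_contra hc
  push Not at hc
  have := mem_of_isConj cs {i} (by
    rintro a b rfl ho
    by_contra hb
    exact absurd ho (by simpa using hc b hb)) rfl h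
  exact hij this.symm

/-- If odd edges form a matching, distinct conjugate simple reflections are joined by one. -/
lemma odd_of_isConj (cs : CoxeterSystem M W)
    (h2 : ¬ ∃ i j k : B, i ≠ j ∧ j ≠ k ∧ i ≠ k ∧ Odd (ord cs i j) ∧ Odd (ord cs j k))
    {i j : B} (hij : i ≠ j) (h : IsConj (cs.simple i) (cs.simple j)) : Odd (ord cs i j) := by
  have := mem_of_isConj cs {x | x = i ∨ Odd (ord cs i x)} (by
    rintro a b (rfl | ha) ho
    · exact Or.inr ho
    · by_cases h1 : b = i
      · exact Or.inl h1
      by_cases h3 : a = i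
      · subst h3; exact Or.inr ho
      by_cases h4 : a = b
      · subst h4; exact Or.inr ha
      exact absurd ⟨i, a, b, fun h => h3 h.symm, h4, fun h => h1 h.symm, ha, ho⟩ h2) (Or.inl rfl) h
  rcases this with h1 | h1
  · exact absurd h1.symm hij
  · exact h1

/-- If the conjugacy class of `i` contains at most one further simple reflection, distinct
conjugate simple reflections in it are joined by an odd edge. -/
lemma odd_of_isConj_of_class (cs : CoxeterSystem M W) {i j : B}
    (hcl : ∀ k, IsConj (cs.simple i) (cs.simple k) → k = i ∨ k = j) (hij : i ≠ j)
    (h : IsConj (cs.simple i) (cs.simple j)) : Odd (ord cs i j) := by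
  obtain ⟨k, hk, ho⟩ := exists_odd_of_isConj cs hij h
  rcases hcl k (isConj_of_odd_ord cs ho) with rfl | rfl
  · exact absurd rfl hk
  · exact ho

/-! ### The geometric representation and the number of generators in a class -/

section Rank

open Polynomial.Chebyshev in
/-- The product of two reflections at angle `π / m` has order dividing `m`. -/
lemma reflection_pow_eq_one {V : Type*} [AddCommGroup V] [Module ℝ V] {x y : V}
    {f g : Module.Dual ℝ V} (hf : f x = 2) (hg : g y = 2) {m : ℕ} (hm : 2 ≤ m)
    (hfy : f y = -2 * Real.cos (Real.pi / m)) (hgx : g x = -2 * Real.cos (Real.pi / m)) :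
    (Module.reflection hf * Module.reflection hg) ^ m = 1 := by
  rcases hm.eq_or_lt with rfl | hm
  · have h0 : Real.cos (Real.pi / (2 : ℕ)) = 0 := by norm_num
    rw [h0, mul_zero] at hfy hgx
    ext z
    simp [pow_two, Module.reflection_apply, hfy, hgx, hf, hg]
    module
  · have hm0 : (m : ℝ) ≠ 0 := by positivity
    set θ : ℝ := 2 * (Real.pi / m) with hθ
    have ht : f y * g x - 2 = 2 * Real.cos θ := by
      rw [hfy, hgx, hθ, Real.cos_two_mul]; ring
    have hsin : Real.sin θ ≠ 0 := by
      apply ne_of_gt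
      apply Real.sin_pos_of_pos_of_lt_pi
      · have := Real.pi_pos; positivity
      · have h3 : (2 : ℝ) < m := by exact_mod_cast hm
        rw [hθ, mul_div_assoc', div_lt_iff₀ (by positivity)]
        nlinarith [Real.pi_pos]
    have hmθ : (m : ℝ) * θ = 2 * Real.pi := by rw [hθ]; field_simp
    have key := Module.reflection_mul_reflection_pow hf hg m (2 * Real.cos θ) ht.symm
    rcases Nat.even_or_odd m with ⟨k, hk⟩ | ⟨k, hk⟩
    · have e1 : ((m : ℤ) - 2) / 2 = k - 1 := by omega
      have e2 : ((m : ℤ) - 1) / 2 = k - 1 := by omega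
      have hS : (S ℝ ((k : ℤ) - 1)).eval (2 * Real.cos θ) = 0 := by
        have := S_two_mul_real_cos θ ((k : ℤ) - 1)
        push_cast at this
        have h5 : ((k : ℝ) - 1 + 1) * θ = Real.pi := by
          have : (m : ℝ) = k + k := by exact_mod_cast hk
          rw [this] at hmθ; linarith
        rw [h5, Real.sin_pi] at this
        exact (mul_eq_zero.mp this).resolve_right hsin
      rw [e1, e2, hS] at key
      apply LinearEquiv.toLinearMap_injective
      rw [key]; ext z; simp
    · have e1 : ((m : ℤ) - 2) / 2 = k - 1 := by omega
      have e2 : ((m : ℤ) - 1) / 2 = k := by omega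
      have e3 : ((m : ℤ) - 3) / 2 = k - 1 := by omega
      have e4 : (m : ℤ) / 2 = k := by omega
      have hS : (S ℝ (k : ℤ)).eval (2 * Real.cos θ) +
          (S ℝ ((k : ℤ) - 1)).eval (2 * Real.cos θ) = 0 := by
        have h6 := S_two_mul_real_cos θ ((k : ℤ) - 1)
        have h7 := S_two_mul_real_cos θ (k : ℤ)
        push_cast at h6 h7
        have h5 : ((k : ℝ) + 1) * θ = 2 * Real.pi - (k - 1 + 1) * θ := by
          have : (m : ℝ) = 2 * k + 1 := by exact_mod_cast hk
          rw [this] at hmθ; linarith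
        rw [h5, Real.sin_two_pi_sub] at h7
        have : ((S ℝ (k : ℤ)).eval (2 * Real.cos θ) +
          (S ℝ ((k : ℤ) - 1)).eval (2 * Real.cos θ)) * Real.sin θ = 0 := by
          rw [add_mul, h6, h7]; ring
        exact (mul_eq_zero.mp this).resolve_right hsin
      rw [e1, e2, e3, e4, hS] at key
      apply LinearEquiv.toLinearMap_injective
      rw [key]; ext z; simp

/-- If reflections `g j` generate `W`, a conjugation-invariant set `act` contains at most as many
simple reflections as there are active `g j`. The group acts on the space with basis its active
generators (geometric representation on those, trivially for the others). Every active `g j` acts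
as a reflection, and the roots of these reflections span, because the group acts trivially modulo
their span. -/
theorem rank_le_of_generators {J : Type*} [Fintype J] [Fintype B'] (cs' : CoxeterSystem M' W)
    (g : J → W) (hgen : Submonoid.closure (Set.range g) = ⊤) (hg : ∀ j, cs'.IsReflection (g j))
    (act : W → Prop) (hact : ∀ x y, IsConj x y → (act x ↔ act y)) :
    Nat.card {i' // act (cs'.simple i')} ≤ Nat.card {j // act (g j)} := by
  classical
  let ι := {i' // act (cs'.simple i')}
  let κ : ι → ι → ℝ := fun i j => -2 * Real.cos (Real.pi / M'.M i j)
  let α : ι → (ι → ℝ) := fun i => Pi.single i 1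
  let f : ι → Module.Dual ℝ (ι → ℝ) := fun i => ∑ j, κ i j • LinearMap.proj j
  have hfα : ∀ i j, f i (α j) = κ i j := by
    intro i j
    simp only [f, α, LinearMap.sum_apply, LinearMap.smul_apply, LinearMap.proj_apply,
      Pi.single_apply, smul_eq_mul, mul_ite, mul_one, mul_zero]
    exact (Finset.sum_ite_eq' Finset.univ j _).trans (if_pos (Finset.mem_univ j))
  have hfαi : ∀ i, f i (α i) = 2 := by
    intro i; rw [hfα]; simp [κ]
  let ρ₀ : B' → ((ι → ℝ) ≃ₗ[ℝ] (ι → ℝ)) := fun i =>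
    if h : act (cs'.simple i) then Module.reflection (hfαi ⟨i, h⟩) else 1
  have hρsq : ∀ i, ρ₀ i * ρ₀ i = 1 := by
    intro i
    by_cases h : act (cs'.simple i)
    · simp only [ρ₀, dif_pos h]
      ext1 z
      exact Module.involutive_reflection (hfαi ⟨i, h⟩) z
    · simp [ρ₀, dif_neg h]
  have hl : M'.IsLiftable ρ₀ := by
    intro i j
    change (ρ₀ i * ρ₀ j) ^ M'.M i j = 1
    have heven : (act (cs'.simple i) ↔ ¬ act (cs'.simple j)) → Even (M'.M i j) := by
      intro hij
      by_contra hne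
      rw [Nat.not_even_iff_odd] at hne
      have := hact _ _ (isConj_of_pow_odd (cs'.simple_mul_simple_self i)
        (cs'.simple_mul_simple_self j) hne (cs'.simple_mul_simple_pow i j))
      tauto
    by_cases hi : act (cs'.simple i) <;> by_cases hj : act (cs'.simple j)
    · by_cases hij : i = j
      · subst hij
        rw [hρsq, one_pow]
      · rcases Nat.eq_zero_or_pos (M'.M i j) with h0 | h0
        · rw [h0, pow_zero]
        · have h1 : M'.M i j ≠ 1 := M'.off_diagonal i j hij
          have := reflection_pow_eq_one (hfαi ⟨i, hi⟩) (hfαi ⟨j, hj⟩) (m := M'.M i j)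
            (by omega) (hfα _ _) (by
              rw [hfα]
              change -2 * Real.cos (Real.pi / M'.M j i) = _
              rw [M'.symmetric j i])
          simpa only [ρ₀, dif_pos hi, dif_pos hj] using this
    · obtain ⟨c, hc⟩ := heven (by tauto)
      have : ρ₀ j = 1 := by simp only [ρ₀, dif_neg hj]
      rw [this, mul_one, hc, ← two_mul, pow_mul, pow_two, hρsq, one_pow]
    · obtain ⟨c, hc⟩ := heven (by tauto)
      have : ρ₀ i = 1 := by simp only [ρ₀, dif_neg hi]
      rw [this, one_mul, hc, ← two_mul, pow_mul, pow_two, hρsq, one_pow]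
    · simp only [ρ₀, dif_neg hi, dif_neg hj, one_mul, one_pow]
  let ρ : W →* ((ι → ℝ) ≃ₗ[ℝ] (ι → ℝ)) := cs'.lift ⟨ρ₀, hl⟩
  have hρ : ∀ i, ρ (cs'.simple i) = ρ₀ i := fun i => cs'.lift_apply_simple hl i
  have hβ : ∀ i : {j // act (g j)}, ∃ β : ι → ℝ, ∀ v, ∃ c : ℝ,
      ρ (g i) v - v = c • β := by
    rintro ⟨i, hi⟩
    obtain ⟨w, x, hx⟩ := hg i
    have hx' : act (cs'.simple x) :=
      (hact _ _ (isConj_iff.mpr ⟨w, hx.symm⟩)).mpr hi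
    refine ⟨ρ w (α ⟨x, hx'⟩), fun v => ⟨-f ⟨x, hx'⟩ ((ρ w)⁻¹ v), ?_⟩⟩
    have h1 : ρ w ((ρ w)⁻¹ v) = v := by
      rw [← LinearEquiv.mul_apply, mul_inv_cancel]; rfl
    simp only [hx, map_mul, map_inv, hρ, ρ₀, dif_pos hx', LinearEquiv.mul_apply,
      Module.reflection_apply, map_sub, map_smul, h1]
    module
  choose β hβ using hβ
  let U := Submodule.span ℝ (Set.range β)
  have hU : ∀ w v, ρ w v - v ∈ U := by
    intro w
    have hw : w ∈ Submonoid.closure (Set.range g) := hgen ▸ Submonoid.mem_top w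
    induction hw using Submonoid.closure_induction with
    | mem x hx =>
      obtain ⟨i, rfl⟩ := hx
      intro v
      by_cases hi : act (g i)
      · obtain ⟨c, hc⟩ := hβ ⟨i, hi⟩ v
        rw [hc]
        exact U.smul_mem _ (Submodule.subset_span ⟨_, rfl⟩)
      · obtain ⟨w, x, hx⟩ := hg i
        have hx' : ¬ act (cs'.simple x) := fun h =>
          hi ((hact _ _ (isConj_iff.mpr ⟨w, hx.symm⟩)).mp h)
        have : ρ (g i) = 1 := by
          rw [hx, map_mul, map_mul, hρ]
          simp only [ρ₀, dif_neg hx', mul_one, map_inv, mul_inv_cancel]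
        rw [this]; simp
    | one => intro v; simp
    | mul w w' _ _ h h' =>
      intro v
      have := U.add_mem (h (ρ w' v)) (h' v)
      rw [map_mul, LinearEquiv.mul_apply]
      simpa using this
  have hα : ∀ i, α i ∈ U := by
    intro i
    have h1 := hU (cs'.simple i.1) (α i)
    rw [hρ] at h1
    simp only [ρ₀, dif_pos i.2] at h1
    rw [Module.reflection_apply_self] at h1
    have h2 := U.smul_mem (-(1 / 2) : ℝ) h1
    have h3 : (-(1 / 2) : ℝ) • (-α i - α i) = α i := by module
    rwa [h3] at h2
  have htop : U = ⊤ := by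
    rw [eq_top_iff]
    intro v _
    have : v = ∑ i, v i • α i := by
      ext j
      simp only [α, Finset.sum_apply, Pi.smul_apply, Pi.single_apply, smul_eq_mul, mul_ite,
        mul_one, mul_zero]
      exact ((Finset.sum_ite_eq Finset.univ j _).trans (if_pos (Finset.mem_univ j))).symm
    rw [this]
    exact U.sum_mem fun i _ => U.smul_mem _ (hα i)
  have h1 : Module.finrank ℝ (ι → ℝ) = Fintype.card ι := Module.finrank_fintype_fun_eq_card ℝ
  have h2 := finrank_range_le_card (R := ℝ) β
  rw [Set.finrank] at h2
  change Module.finrank ℝ U ≤ _ at h2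
  rw [htop, finrank_top, h1] at h2
  rw [Nat.card_eq_fintype_card, Nat.card_eq_fintype_card]
  exact h2

theorem rank_le [Fintype B] [Fintype B'] (cs : CoxeterSystem M W) (cs' : CoxeterSystem M' W)
    (hR : ∀ w : W, cs'.IsReflection w ↔ cs.IsReflection w)
    (act : W → Prop) (hact : ∀ x y, IsConj x y → (act x ↔ act y)) :
    Nat.card {i' // act (cs'.simple i')} ≤ Nat.card {i // act (cs.simple i)} :=
  rank_le_of_generators cs' cs.simple cs.submonoid_closure_range_simple
    (fun i => (hR _).mpr (cs.isReflection_simple i)) act hact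

/-- Distinct indices give distinct simple reflections: a redundant generator would contradict
the lower bound on the number of reflections needed to generate `W`. -/
lemma ord_ne_one [Fintype B] (cs : CoxeterSystem M W) {s t : B} (hst : s ≠ t) :
    ord cs s t ≠ 1 := by
  classical
  intro h
  have hst' : cs.simple s = cs.simple t := by
    rw [ord, orderOf_eq_one_iff, mul_eq_one_iff_eq_inv, cs.inv_simple] at h
    exact h
  have hrange : Set.range (fun i : {i // i ≠ t} => cs.simple i) = Set.range cs.simple := by
    ext w
    constructor
    · rintro ⟨i, rfl⟩; exact ⟨i, rfl⟩
    · rintro ⟨i, rfl⟩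
      by_cases hi : i = t
      · exact ⟨⟨s, hst⟩, by rw [hi]; exact hst'⟩
      · exact ⟨⟨i, hi⟩, rfl⟩
  have := rank_le_of_generators cs (fun i : {i // i ≠ t} => cs.simple i)
    (by rw [hrange]; exact cs.submonoid_closure_range_simple)
    (fun i => cs.isReflection_simple i) (fun _ => True) (by simp)
  have h1 : Nat.card {i : B // True} = Fintype.card B := by simp
  have h2 : Nat.card {j : {i // i ≠ t} // True} = Fintype.card {i // i ≠ t} := by simp
  rw [h1, h2] at this
  have := Fintype.card_subtype_lt (p := fun i => i ≠ t) (x := t) (by simp)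
  omega

end Rank

/-! ### Homomorphisms to generalised dihedral groups -/

section Dihedral

variable {A : Type*} [AddCommGroup A]

/-- The translation by `a` in the generalised dihedral group of `A`, which is realised inside
`Perm A × ℤˣ`; the sign keeps translations and point reflections apart even when `2A = 0`. -/
def rot (a : A) : Equiv.Perm A × ℤˣ := (Equiv.addLeft a, 1)

/-- The point reflection `z ↦ a - z` in the generalised dihedral group of `A`. -/
def mirror (a : A) : Equiv.Perm A × ℤˣ := (Equiv.subLeft a, -1)

lemma rot_mul_rot (a b : A) : rot a * rot b = rot (a + b) := by
  ext <;> simp [rot]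

lemma rot_mul_mirror (a b : A) : rot a * mirror b = mirror (a + b) := by
  ext <;> simp [rot, mirror, add_sub_assoc]

lemma mirror_mul_rot (a b : A) : mirror a * rot b = mirror (a - b) := by
  ext <;> simp [rot, mirror, sub_sub]

lemma mirror_mul_mirror (a b : A) : mirror a * mirror b = rot (a - b) := by
  ext <;> simp [rot, mirror, sub_add]

lemma rot_zero : rot (0 : A) = 1 := by
  ext <;> simp [rot]

lemma rot_pow (a : A) (k : ℕ) : rot a ^ k = rot (k • a) := by
  induction k with
  | zero => simp [rot_zero]
  | succ k ih => rw [pow_succ, ih, rot_mul_rot, succ_nsmul]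

lemma rot_inj {a b : A} (h : rot a = rot b) : a = b := by
  have := congrArg (fun g => g.1 0) h
  simpa [rot] using this

lemma mirror_inj {a b : A} (h : mirror a = mirror b) : a = b := by
  have := congrArg (fun g => g.1 0) h
  simpa [mirror] using this

lemma mirror_ne_rot (a b : A) : mirror a ≠ rot b := by
  intro h
  have := congrArg Prod.snd h
  simp only [rot, mirror] at this
  exact absurd this (by decide)

/-- A dihedral homomorphism defined through the first system, read off on the second. The active
generators of the first system are sent to point reflections at `θ i`, the others to `1`; then the
active generators of the second system go to point reflections at certain `θ' i'`. -/
theorem dihedral_transfer (cs : CoxeterSystem M W) (cs' : CoxeterSystem M' W)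
    (hR : ∀ w : W, cs'.IsReflection w ↔ cs.IsReflection w)
    (act : W → Prop) (hact : ∀ x y, IsConj x y → (act x ↔ act y)) (θ : B → A)
    (hθ : ∀ i j, act (cs.simple i) → act (cs.simple j) → ord cs i j • (θ i - θ j) = 0) :
    ∃ θ' : B' → A,
      (∀ i j, act (cs'.simple i) → act (cs'.simple j) → ord cs' i j • (θ' i - θ' j) = 0) ∧
      (∀ (H : AddSubgroup A) (x : A), (∀ i, act (cs'.simple i) → θ' i - x ∈ H) →
        ∀ i, act (cs.simple i) → θ i - x ∈ H) ∧
      (∀ i i', act (cs.simple i) → IsConj (cs.simple i) (cs'.simple i') →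
        ∃ a, θ' i' = θ i + (a + a)) := by
  classical
  have hm2 : ∀ a : A, mirror a * mirror a = 1 := fun a => by
    rw [mirror_mul_mirror, sub_self, rot_zero]
  obtain ⟨F, hF⟩ := exists_lift cs
      (fun i => if act (cs.simple i) then mirror (θ i) else 1) (by
    intro i j
    have heven : (act (cs.simple i) ↔ ¬ act (cs.simple j)) → Even (ord cs i j) := by
      intro hij
      by_contra hne
      rw [Nat.not_even_iff_odd] at hne
      have := hact _ _ (isConj_of_odd_ord cs hne)
      tauto
    by_cases hi : act (cs.simple i) <;> by_cases hj : act (cs.simple j)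
    · simp only [if_pos hi, if_pos hj]
      rw [mirror_mul_mirror, rot_pow, hθ i j hi hj, rot_zero]
    · obtain ⟨c, hc⟩ := heven (by tauto)
      simp only [if_pos hi, if_neg hj]
      rw [mul_one, hc, ← two_mul, pow_mul, pow_two, hm2, one_pow]
    · obtain ⟨c, hc⟩ := heven (by tauto)
      simp only [if_neg hi, if_pos hj]
      rw [one_mul, hc, ← two_mul, pow_mul, pow_two, hm2, one_pow]
    · simp [if_neg hi, if_neg hj])
  have hall : ∀ w, ∃ a : A, F w = rot a ∨ F w = mirror a := by
    intro w
    induction w using cs.simple_induction with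
    | simple i =>
      by_cases hi : act (cs.simple i)
      · exact ⟨θ i, Or.inr (by rw [hF, if_pos hi])⟩
      · exact ⟨0, Or.inl (by rw [hF, if_neg hi, rot_zero])⟩
    | one => exact ⟨0, Or.inl (by rw [map_one, rot_zero])⟩
    | mul w w' h h' =>
      obtain ⟨a, ha | ha⟩ := h <;> obtain ⟨b, hb | hb⟩ := h' <;> rw [map_mul, ha, hb]
      · exact ⟨_, Or.inl (rot_mul_rot a b)⟩
      · exact ⟨_, Or.inr (rot_mul_mirror a b)⟩
      · exact ⟨_, Or.inr (mirror_mul_rot a b)⟩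
      · exact ⟨_, Or.inl (mirror_mul_mirror a b)⟩
  have hconj : ∀ i r, act (cs.simple i) → IsConj (cs.simple i) r →
      ∃ a, F r = mirror (θ i + (a + a)) := by
    intro i r hi hr
    obtain ⟨w, rfl⟩ := isConj_iff.mp hr
    rw [map_mul, map_mul, hF, if_pos hi, map_inv]
    obtain ⟨a, ha | ha⟩ := hall w <;> rw [ha]
    · refine ⟨a, ?_⟩
      rw [mul_inv_eq_iff_eq_mul, rot_mul_mirror, mirror_mul_rot]
      congr 1; abel
    · refine ⟨a - θ i, ?_⟩
      rw [mul_inv_eq_iff_eq_mul, mirror_mul_mirror, mirror_mul_mirror]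
      congr 1; abel
  have hsource : ∀ i', ∃ i, IsConj (cs.simple i) (cs'.simple i') := by
    intro i'
    obtain ⟨w, i, h⟩ := (hR _).mp (cs'.isReflection_simple i')
    exact ⟨i, isConj_iff.mpr ⟨w, h.symm⟩⟩
  have hmir : ∀ i', ∃ a, act (cs'.simple i') → F (cs'.simple i') = mirror a := by
    intro i'
    by_cases h : act (cs'.simple i')
    · obtain ⟨i, hi⟩ := hsource i'
      obtain ⟨a, ha⟩ := hconj i _ ((hact _ _ hi).mpr h) hi
      exact ⟨_, fun _ => ha⟩
    · exact ⟨0, fun h' => absurd h' h⟩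
  choose θ' hθ' using hmir
  refine ⟨θ', ?_, ?_, ?_⟩
  · intro i j hi hj
    have := congrArg F (pow_ord cs' i j)
    rw [map_pow, map_mul, hθ' i hi, hθ' j hj, mirror_mul_mirror, rot_pow, map_one,
      ← rot_zero] at this
    exact rot_inj this
  · intro H x hH i hi
    have key : ∀ w, ∃ h ∈ H, F w = rot h ∨ F w = mirror (x + h) := by
      intro w
      induction w using cs'.simple_induction with
      | simple j =>
        by_cases hj : act (cs'.simple j)
        · exact ⟨_, hH j hj, Or.inr (by rw [hθ' j hj]; congr 1; abel)⟩
        · refine ⟨0, H.zero_mem, Or.inl ?_⟩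
          obtain ⟨k, hk⟩ := hsource j
          obtain ⟨w, hw⟩ := isConj_iff.mp hk
          rw [← hw, map_mul, map_mul, hF, if_neg (fun h => hj ((hact _ _ hk).mp h)), mul_one,
            ← map_mul, mul_inv_cancel, map_one, rot_zero]
      | one => exact ⟨0, H.zero_mem, Or.inl (by rw [map_one, rot_zero])⟩
      | mul w w' h h' =>
        obtain ⟨a, ha, ha' | ha'⟩ := h <;> obtain ⟨b, hb, hb' | hb'⟩ := h' <;>
          rw [map_mul, ha', hb']
        · exact ⟨a + b, H.add_mem ha hb, Or.inl (rot_mul_rot a b)⟩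
        · exact ⟨a + b, H.add_mem ha hb, Or.inr (by rw [rot_mul_mirror]; congr 1; abel)⟩
        · exact ⟨a - b, H.sub_mem ha hb, Or.inr (by rw [mirror_mul_rot]; congr 1; abel)⟩
        · exact ⟨a - b, H.sub_mem ha hb, Or.inl (by rw [mirror_mul_mirror]; congr 1; abel)⟩
    obtain ⟨h, hh, h1 | h1⟩ := key (cs.simple i) <;> rw [hF, if_pos hi] at h1
    · exact absurd h1 (mirror_ne_rot _ _)
    · rw [mirror_inj h1]
      simpa using hh
  · intro i i' hi hc
    obtain ⟨a, ha⟩ := hconj i _ hi hc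
    rw [hθ' i' ((hact _ _ hc).mp hi)] at ha
    exact ⟨a, mirror_inj ha⟩

end Dihedral

/-! ### The tree of an odd edge with a free end -/

section Tree

/-- The central homomorphism. Suppose `m(s, t) = n`, no other edge at `s` is odd, and all other
edges at `t` are infinite, so that `W` splits as an amalgam of the dihedral group
`⟨s, t⟩` with `⟨S ∖ {t}⟩` over `⟨s⟩`. Let `W` act on `ℤ × ℤ/n`: `s` and `t` act on `ℤ/n` as the point
reflections `j ↦ -j` and `j ↦ 1 - j`, and every other generator acts on the fibre over `0` as
`z ↦ -z`, on the other fibres as `z ↦ 1 - z`. -/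
lemma exists_tree_hom (cs : CoxeterSystem M W) {s t : B} (hst : s ≠ t)
    (hs : ∀ k, k ≠ s → k ≠ t → ¬ Odd (ord cs s k))
    (ht : ∀ k, k ≠ s → k ≠ t → ord cs t k = 0) :
    ∃ (F : W →* Equiv.Perm (ℤ × ZMod (ord cs s t))) (φ : W →* Equiv.Perm (ZMod (ord cs s t))),
      (∀ w x, (F w x).2 = φ w x.2) ∧
      (∀ x, F (cs.simple s) x = (x.1, -x.2)) ∧ (∀ x, F (cs.simple t) x = (x.1, 1 - x.2)) ∧
      (∀ k, k ≠ s → k ≠ t → ∀ x, F (cs.simple k) x = ((if x.2 = 0 then 0 else 1) - x.1, x.2)) := by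
  classical
  set n := ord cs s t with hn
  let a : Equiv.Perm (ℤ × ZMod n) := ⟨fun x => (x.1, -x.2), fun x => (x.1, -x.2),
    fun x => by simp, fun x => by simp⟩
  let b : Equiv.Perm (ℤ × ZMod n) := ⟨fun x => (x.1, 1 - x.2), fun x => (x.1, 1 - x.2),
    fun x => by simp, fun x => by simp⟩
  let c : Equiv.Perm (ℤ × ZMod n) := ⟨fun x => ((if x.2 = 0 then 0 else 1) - x.1, x.2),
    fun x => ((if x.2 = 0 then 0 else 1) - x.1, x.2), fun x => by simp, fun x => by simp⟩
  have haa : a * a = 1 := by ext x <;> simp [a]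
  have hbb : b * b = 1 := by ext x <;> simp [b]
  have hcc : c * c = 1 := by ext x <;> simp [c]
  have hac : (a * c) * (a * c) = 1 := by ext x <;> simp [a, c]
  have hca : (c * a) * (c * a) = 1 := by ext x <;> simp [a, c]
  have hab : (a * b) ^ n = 1 := by
    have : ∀ k : ℕ, ∀ x, ((a * b) ^ k) x = (x.1, x.2 - k) := by
      intro k
      induction k with
      | zero => intro x; simp
      | succ k ih =>
        intro x
        rw [pow_succ, Equiv.Perm.mul_apply, ih]
        simp [a, b]; ring
    ext x <;> simp [this]
  have hba : (b * a) ^ n = 1 := by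
    have : b * a = (a * b)⁻¹ := by
      rw [mul_inv_rev, inv_eq_of_mul_eq_one_left haa, inv_eq_of_mul_eq_one_left hbb]
    rw [this, inv_pow, hab, inv_one]
  obtain ⟨F, hF⟩ := exists_lift cs (fun k => if k = s then a else if k = t then b else c) (by
    intro i j
    by_cases his : i = s
    · subst his
      by_cases hjs : j = i
      · subst hjs; simp [haa]
      by_cases hjt : j = t
      · subst hjt; simpa [hjs] using hab
      · obtain ⟨l, hl⟩ := Nat.not_odd_iff_even.mp (hs j hjs hjt)
        simp only [if_true, if_neg hjs, if_neg hjt]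
        rw [hl, ← two_mul, pow_mul, pow_two, hac, one_pow]
    by_cases hit : i = t
    · subst hit
      by_cases hjs : j = s
      · subst hjs
        rw [ord_comm]
        simpa [hst.symm] using hba
      by_cases hjt : j = i
      · subst hjt; simp [hbb, hst.symm]
      · rw [ht j hjs hjt, pow_zero]
    by_cases hjs : j = s
    · subst hjs
      obtain ⟨l, hl⟩ := Nat.not_odd_iff_even.mp (hs i his hit)
      simp only [if_true, if_neg his, if_neg hit]
      rw [ord_comm, hl, ← two_mul, pow_mul, pow_two, hca, one_pow]
    by_cases hjt : j = t
    · subst hjt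
      rw [ord_comm, ht i his hit, pow_zero]
    simp [if_neg his, if_neg hit, if_neg hjs, if_neg hjt, hcc])
  have hFs : F (cs.simple s) = a := by rw [hF, if_pos rfl]
  have hFt : F (cs.simple t) = b := by rw [hF, if_neg hst.symm, if_pos rfl]
  have hFk : ∀ k, k ≠ s → k ≠ t → F (cs.simple k) = c := by
    intro k h1 h2; rw [hF, if_neg h1, if_neg h2]
  have hbase : ∀ w, ∃ τ : Equiv.Perm (ZMod n), ∀ x, (F w x).2 = τ x.2 := by
    intro w
    induction w using cs.simple_induction with
    | simple i =>
      by_cases his : i = s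
      · exact ⟨Equiv.neg _, fun x => by rw [his, hFs]; rfl⟩
      by_cases hit : i = t
      · exact ⟨Equiv.subLeft 1, fun x => by rw [hit, hFt]; rfl⟩
      · exact ⟨1, fun x => by rw [hFk i his hit]; rfl⟩
    | one => exact ⟨1, fun x => by simp⟩
    | mul w w' h h' =>
      obtain ⟨τ, hτ⟩ := h
      obtain ⟨τ', hτ'⟩ := h'
      exact ⟨τ * τ', fun x => by
        rw [map_mul, Equiv.Perm.mul_apply, hτ, hτ', Equiv.Perm.mul_apply]⟩
  choose τ hτ using hbase
  refine ⟨F, ⟨⟨τ, ?_⟩, ?_⟩, hτ, ?_, ?_, ?_⟩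
  · ext1 j
    have := hτ 1 (0, j)
    simpa using this.symm
  · intro w w'
    ext1 j
    have h1 := hτ (w * w') (0, j)
    rw [map_mul, Equiv.Perm.mul_apply, hτ, hτ] at h1
    exact h1.symm
  · intro x; rw [hFs]; rfl
  · intro x; rw [hFt]; rfl
  · intro k h1 h2 x; rw [hFk k h1 h2]; rfl

end Tree

/-! ### Spherical subsets -/

section Spherical

/-- Two involutions whose product has finite order generate a finite (dihedral) group. -/
lemma finite_closure_pair {G : Type*} [Group G] {a b : G} (ha : a * a = 1) (hb : b * b = 1)
    (h : orderOf (a * b) ≠ 0) : Finite (Subgroup.closure {a, b}) := by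
  have hinv : (a * b)⁻¹ = b * a := by
    rw [mul_inv_rev, inv_eq_of_mul_eq_one_left ha, inv_eq_of_mul_eq_one_left hb]
  set r := a * b with hr
  have hflip : ∀ k : ℤ, a * r ^ k = r ^ (-k) * a := by
    intro k
    have h1 : a * r * a⁻¹ = r⁻¹ := by
      rw [hinv, hr, inv_eq_of_mul_eq_one_left ha, ← mul_assoc, ha, one_mul]
    rw [← mul_inv_eq_iff_eq_mul, ← conj_zpow, h1, inv_zpow, zpow_neg]
  have hb' : b = r⁻¹ * a := by rw [hinv, mul_assoc, ha, mul_one]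
  have hfin : ((Subgroup.zpowers r : Set G) ∪ (fun x => x * a) '' (Subgroup.zpowers r : Set G)).Finite := by
    have : (Subgroup.zpowers r : Set G).Finite :=
      (finite_zpowers).mpr (orderOf_ne_zero_iff.mp h)
    exact this.union (this.image _)
  refine Set.Finite.to_subtype (Set.Finite.subset hfin ?_)
  intro x hx
  have key : ∃ k : ℤ, x = r ^ k ∨ x = r ^ k * a := by
    induction hx using Subgroup.closure_induction with
    | mem x hx =>
      rcases hx with rfl | rfl
      · exact ⟨0, Or.inr (by simp)⟩
      · exact ⟨-1, Or.inr (by rw [zpow_neg_one]; exact hb')⟩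
    | one => exact ⟨0, Or.inl (by simp)⟩
    | mul x y _ _ hx hy =>
      obtain ⟨k, rfl | rfl⟩ := hx <;> obtain ⟨l, rfl | rfl⟩ := hy
      · exact ⟨k + l, Or.inl (zpow_add r k l).symm⟩
      · exact ⟨k + l, Or.inr (by rw [zpow_add, mul_assoc])⟩
      · exact ⟨k + -l, Or.inr (by rw [mul_assoc, hflip, zpow_add, mul_assoc])⟩
      · exact ⟨k + -l, Or.inl (by
          rw [mul_assoc, ← mul_assoc a, hflip, mul_assoc _ a a, ha, mul_one, zpow_add])⟩
    | inv x _ hx =>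
      obtain ⟨k, rfl | rfl⟩ := hx
      · exact ⟨-k, Or.inl (zpow_neg r k).symm⟩
      · exact ⟨k, Or.inr (by
          rw [mul_inv_rev, inv_eq_of_mul_eq_one_left ha, ← zpow_neg, hflip, neg_neg])⟩
  obtain ⟨k, rfl | rfl⟩ := key
  · exact Or.inl ⟨k, rfl⟩
  · exact Or.inr ⟨_, ⟨k, rfl⟩, rfl⟩

lemma isSpherical_pair (cs : CoxeterSystem M W) {i j : B} (h : ord cs i j ≠ 0) :
    cs.IsSpherical {i, j} := by
  have := finite_closure_pair (cs.simple_mul_simple_self i) (cs.simple_mul_simple_self j) h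
  rw [CoxeterSystem.IsSpherical, CoxeterSystem.parabolic, Set.image_pair]
  exact this

lemma ord_ne_zero_of_mem (cs : CoxeterSystem M W) {T : Set B} (hT : cs.IsSpherical T) {i j : B}
    (hi : i ∈ T) (hj : j ∈ T) : ord cs i j ≠ 0 := by
  have hfin : Finite (cs.parabolic T) := hT
  have h1 : cs.simple i * cs.simple j ∈ cs.parabolic T :=
    mul_mem (Subgroup.subset_closure ⟨i, hi, rfl⟩) (Subgroup.subset_closure ⟨j, hj, rfl⟩)
  have h2 := isOfFinOrder_of_finite (⟨_, h1⟩ : cs.parabolic T)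
  rw [← orderOf_ne_zero_iff, Subgroup.orderOf_mk] at h2
  exact h2

lemma exists_isMaxSpherical [Finite B] (cs : CoxeterSystem M W) {i j : B} (h : ord cs i j ≠ 0) :
    ∃ T : Set B, cs.IsMaxSpherical T ∧ i ∈ T ∧ j ∈ T := by
  have hmem : ({i, j} : Set B) ∈ {T : Set B | cs.IsSpherical T} := by
    rw [Set.mem_ofPred_eq]; exact isSpherical_pair cs h
  obtain ⟨T, hT, hmax⟩ := (Set.toFinite {T : Set B | cs.IsSpherical T}).exists_le_maximal
    hmem
  have hs : cs.IsSpherical T := hmax.prop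
  have hiT : i ∈ T := hT (Set.mem_insert i _)
  have hjT : j ∈ T := hT (Set.mem_insert_of_mem i rfl)
  refine ⟨T, ⟨hs, fun U hU hTU => ?_⟩, hiT, hjT⟩
  exact Set.Subset.antisymm (hmax.le_of_ge hU hTU) hTU

/-- The two ends of an odd edge cannot both have further finite edges: three distinct maximal
spherical subsets would meet the edge. -/
lemma free_end [Finite B] (cs : CoxeterSystem M W) {i j : B}
    (h1 : cs.IsMaxSpherical {i, j})
    (h3 : {T : Set B | cs.IsMaxSpherical T ∧ (T ∩ {i, j}).Nonempty}.ncard ≤ 2)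
    {k l : B} (hki : k ≠ i) (hkj : k ≠ j) (hli : l ≠ i) (hlj : l ≠ j)
    (hk : ord cs i k ≠ 0) (hl : ord cs j l ≠ 0) : False := by
  obtain ⟨T, hT, hiT, hkT⟩ := exists_isMaxSpherical cs hk
  obtain ⟨U, hU, hjU, hlU⟩ := exists_isMaxSpherical cs hl
  have hTne : T ≠ {i, j} := by rintro rfl; simp [hki, hkj] at hkT
  have hUne : U ≠ {i, j} := by rintro rfl; simp [hli, hlj] at hlU
  have hTU : T ≠ U := by
    rintro rfl
    exact hTne (h1.2 T hT.1 (by rintro x (rfl | rfl) <;> assumption))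
  have hsub : ({T, U, {i, j}} : Set (Set B)) ⊆
      {T : Set B | cs.IsMaxSpherical T ∧ (T ∩ {i, j}).Nonempty} := by
    rintro X (rfl | rfl | rfl)
    · exact ⟨hT, i, hiT, by simp⟩
    · exact ⟨hU, j, hjU, by simp⟩
    · exact ⟨h1, i, by simp⟩
  have := Set.ncard_le_ncard hsub (Set.toFinite _)
  rw [Set.ncard_eq_three.mpr ⟨T, U, {i, j}, hTU, hTne, hUne, rfl⟩] at this
  omega

/-- The further finite neighbours of an end of an odd edge are finitely linked to each other,
again because at most two maximal spherical subsets meet the edge. -/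
lemma linked_neighbours [Finite B] (cs : CoxeterSystem M W) {i j : B}
    (h1 : cs.IsMaxSpherical {i, j})
    (h3 : {T : Set B | cs.IsMaxSpherical T ∧ (T ∩ {i, j}).Nonempty}.ncard ≤ 2)
    {k l : B} (hki : k ≠ i) (hkj : k ≠ j) (hli : l ≠ i) (hlj : l ≠ j)
    (hk : ord cs i k ≠ 0) (hl : ord cs i l ≠ 0) : ord cs k l ≠ 0 := by
  obtain ⟨T, hT, hiT, hkT⟩ := exists_isMaxSpherical cs hk
  obtain ⟨U, hU, hiU, hlU⟩ := exists_isMaxSpherical cs hl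
  have hTne : T ≠ {i, j} := by rintro rfl; simp [hki, hkj] at hkT
  have hUne : U ≠ {i, j} := by rintro rfl; simp [hli, hlj] at hlU
  by_cases hTU : T = U
  · subst hTU
    exact ord_ne_zero_of_mem cs hT.1 hkT hlU
  have hsub : ({T, U, {i, j}} : Set (Set B)) ⊆
      {T : Set B | cs.IsMaxSpherical T ∧ (T ∩ {i, j}).Nonempty} := by
    rintro X (rfl | rfl | rfl)
    · exact ⟨hT, i, hiT, by simp⟩
    · exact ⟨hU, i, hiU, by simp⟩
    · exact ⟨h1, i, by simp⟩
  have := Set.ncard_le_ncard hsub (Set.toFinite _)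
  rw [Set.ncard_eq_three.mpr ⟨T, U, {i, j}, hTU, hTne, hUne, rfl⟩] at this
  omega

end Spherical

/-! ### Conjugacy classes of simple reflections in the two systems -/

section Classes

lemma exists_isConj_simple (cs : CoxeterSystem M W) (cs' : CoxeterSystem M' W)
    (hR : ∀ w : W, cs'.IsReflection w ↔ cs.IsReflection w) (i' : B') :
    ∃ i, IsConj (cs.simple i) (cs'.simple i') := by
  obtain ⟨w, i, h⟩ := (hR _).mp (cs'.isReflection_simple i')
  exact ⟨i, isConj_iff.mpr ⟨w, h.symm⟩⟩

/-- Finite adjacency of two distinct classes does not depend on the system: otherwise `W` would map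
onto the infinite dihedral group with the two classes going to the two kinds of point reflections,
and a product of point reflections of different kinds has infinite order. -/
lemma adjacent_classes (cs : CoxeterSystem M W) (cs' : CoxeterSystem M' W)
    (hR : ∀ w : W, cs'.IsReflection w ↔ cs.IsReflection w) {i' j' : B'}
    (hn : ¬ IsConj (cs'.simple i') (cs'.simple j')) (h : ord cs' i' j' ≠ 0) :
    ∃ i j, IsConj (cs.simple i) (cs'.simple i') ∧ IsConj (cs.simple j) (cs'.simple j') ∧
      ord cs i j ≠ 0 := by
  classical
  by_contra hc
  push Not at hc
  let act : W → Prop := fun x => IsConj x (cs'.simple i') ∨ IsConj x (cs'.simple j')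
  obtain ⟨θ', h1, -, h3⟩ := dihedral_transfer cs cs' hR act
    (fun x y hxy => by simp only [act, isConj_congr hxy])
    (fun i => if IsConj (cs.simple i) (cs'.simple i') then (0 : ℤ) else 1) (by
      intro i j hi hj
      by_cases hi' : IsConj (cs.simple i) (cs'.simple i') <;>
        by_cases hj' : IsConj (cs.simple j) (cs'.simple i')
      · rw [if_pos hi', if_pos hj', sub_self, smul_zero]
      · rw [hc i j hi' (hj.resolve_left hj'), zero_smul]
      · rw [ord_comm, hc j i hj' (hi.resolve_left hi'), zero_smul]
      · rw [if_neg hi', if_neg hj', sub_self, smul_zero])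
  obtain ⟨i, hi⟩ := exists_isConj_simple cs cs' hR i'
  obtain ⟨j, hj⟩ := exists_isConj_simple cs cs' hR j'
  obtain ⟨a, ha⟩ := h3 i i' (Or.inl hi) hi
  obtain ⟨b, hb⟩ := h3 j j' (Or.inr hj) hj
  rw [if_pos hi] at ha
  rw [if_neg (fun hji => hn (hji.symm.trans hj))] at hb
  have h0 := h1 i' j' (Or.inl (IsConj.refl _)) (Or.inr (IsConj.refl _))
  rw [smul_eq_zero] at h0
  have := h0.resolve_left h
  omega

lemma card_class_eq [Fintype B] [Fintype B'] (cs : CoxeterSystem M W) (cs' : CoxeterSystem M' W)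
    (hR : ∀ w : W, cs'.IsReflection w ↔ cs.IsReflection w) (x : W) :
    Nat.card {i' // IsConj (cs'.simple i') x} = Nat.card {i // IsConj (cs.simple i) x} :=
  le_antisymm
    (rank_le cs cs' hR (fun y => IsConj y x) (fun _ _ h => isConj_congr h))
    (rank_le cs' cs (fun w => (hR w).symm) (fun y => IsConj y x) (fun _ _ h => isConj_congr h))

/-- `i` is a hub if it is finitely linked to a simple reflection outside its class. -/
def Hub (cs : CoxeterSystem M W) (i : B) : Prop :=
  ∃ k, ¬ IsConj (cs.simple i) (cs.simple k) ∧ ord cs i k ≠ 0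

/-- Each conjugacy class of simple reflections has at most two members, joined by an odd edge if
distinct, and at most one of them is a hub. -/
structure HasPairs (cs : CoxeterSystem M W) : Prop where
  odd : ∀ i j, i ≠ j → IsConj (cs.simple i) (cs.simple j) → Odd (ord cs i j)
  pair : ∀ i j k, IsConj (cs.simple i) (cs.simple j) → IsConj (cs.simple i) (cs.simple k) →
    i = j ∨ i = k ∨ j = k
  hub : ∀ i j, IsConj (cs.simple i) (cs.simple j) → Hub cs i → Hub cs j → i = j

lemma pair_transfer [Fintype B] [Fintype B'] (cs : CoxeterSystem M W) (cs' : CoxeterSystem M' W)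
    (hR : ∀ w : W, cs'.IsReflection w ↔ cs.IsReflection w)
    (hp : ∀ i j k, IsConj (cs.simple i) (cs.simple j) → IsConj (cs.simple i) (cs.simple k) →
      i = j ∨ i = k ∨ j = k) (i j k : B') (hij : IsConj (cs'.simple i) (cs'.simple j))
    (hik : IsConj (cs'.simple i) (cs'.simple k)) : i = j ∨ i = k ∨ j = k := by
  classical
  by_contra hne
  push Not at hne
  have h := card_class_eq cs cs' hR (cs'.simple i)
  rw [Nat.card_eq_fintype_card, Nat.card_eq_fintype_card, Fintype.card_subtype,
    Fintype.card_subtype] at h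
  have h3 : 2 < (Finset.univ.filter fun a => IsConj (cs'.simple a) (cs'.simple i)).card :=
    Finset.two_lt_card.mpr ⟨i, Finset.mem_filter.mpr ⟨Finset.mem_univ _, IsConj.refl _⟩,
      j, Finset.mem_filter.mpr ⟨Finset.mem_univ _, hij.symm⟩,
      k, Finset.mem_filter.mpr ⟨Finset.mem_univ _, hik.symm⟩,
      hne.1, hne.2.1, hne.2.2⟩
  rw [h, Finset.two_lt_card] at h3
  obtain ⟨a, ha, b, hb, c, hc, hab, hac, hbc⟩ := h3
  simp only [Finset.mem_filter, Finset.mem_univ, true_and] at ha hb hc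
  rcases hp a b c (ha.trans hb.symm) (ha.trans hc.symm) with h | h | h
  · exact hab h
  · exact hac h
  · exact hbc h

lemma odd_of_pair (cs : CoxeterSystem M W)
    (hp : ∀ i j k, IsConj (cs.simple i) (cs.simple j) → IsConj (cs.simple i) (cs.simple k) →
      i = j ∨ i = k ∨ j = k) {i j : B} (hij : i ≠ j)
    (h : IsConj (cs.simple i) (cs.simple j)) : Odd (ord cs i j) :=
  odd_of_isConj_of_class cs (fun k hk => by
    rcases hp i j k h hk with h | h | h
    · exact absurd h hij
    · exact Or.inl h.symm
    · exact Or.inr h.symm) hij h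

/-- Having a hub is a property of the class alone. -/
lemma exists_hub (cs : CoxeterSystem M W) (cs' : CoxeterSystem M' W)
    (hR : ∀ w : W, cs'.IsReflection w ↔ cs.IsReflection w) {i' : B'} (h : Hub cs' i') :
    ∃ i, IsConj (cs.simple i) (cs'.simple i') ∧ Hub cs i := by
  obtain ⟨k', hn, hk⟩ := h
  obtain ⟨i, k, hi, hk', h⟩ := adjacent_classes cs cs' hR hn hk
  exact ⟨i, hi, k, fun hc => hn (hi.symm.trans (hc.trans hk')), h⟩

lemma exists_ne_of_isConj [Fintype B] [Fintype B'] (cs : CoxeterSystem M W)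
    (cs' : CoxeterSystem M' W) (hR : ∀ w : W, cs'.IsReflection w ↔ cs.IsReflection w) {i' j' : B'}
    (hne : i' ≠ j') (hij : IsConj (cs'.simple i') (cs'.simple j')) {i : B}
    (hi : IsConj (cs.simple i) (cs'.simple i')) :
    ∃ j, j ≠ i ∧ IsConj (cs.simple j) (cs.simple i) := by
  classical
  have h := card_class_eq cs cs' hR (cs'.simple i')
  rw [Nat.card_eq_fintype_card, Nat.card_eq_fintype_card, Fintype.card_subtype,
    Fintype.card_subtype] at h
  have h3 : 1 < (Finset.univ.filter fun a => IsConj (cs'.simple a) (cs'.simple i')).card :=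
    Finset.one_lt_card.mpr ⟨i', Finset.mem_filter.mpr ⟨Finset.mem_univ _, IsConj.refl _⟩,
      j', Finset.mem_filter.mpr ⟨Finset.mem_univ _, hij.symm⟩, hne⟩
  rw [h] at h3
  obtain ⟨j, hj, hji⟩ := Finset.exists_mem_ne h3 i
  exact ⟨j, hji, (Finset.mem_filter.mp hj).2.trans hi.symm⟩

/-- The pair structure of the first system, from the hypotheses of the theorem. -/
lemma hasPairs_of_conditions [Finite B] (cs : CoxeterSystem M W)
    (h1 : ∀ i j : B, i ≠ j → Odd (ord cs i j) → cs.IsMaxSpherical {i, j})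
    (h2 : ¬ ∃ i j k : B, i ≠ j ∧ j ≠ k ∧ i ≠ k ∧ Odd (ord cs i j) ∧ Odd (ord cs j k))
    (h3 : ∀ i j : B, i ≠ j → Odd (ord cs i j) →
      {T : Set B | cs.IsMaxSpherical T ∧ (T ∩ {i, j}).Nonempty}.ncard ≤ 2) : HasPairs cs where
  odd i j hij h := odd_of_isConj cs h2 hij h
  pair i j k hij hik := by
    by_contra hc
    push Not at hc
    obtain ⟨hc1, hc2, hc3⟩ := hc
    exact h2 ⟨i, j, k, hc1, hc3, hc2, odd_of_isConj cs h2 hc1 hij,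
      odd_of_isConj cs h2 hc3 (hij.symm.trans hik)⟩
  hub i j hij hi hj := by
    by_contra hne
    obtain ⟨k, hk, hk'⟩ := hi
    obtain ⟨l, hl, hl'⟩ := hj
    have ho := odd_of_isConj cs h2 hne hij
    have hki : k ≠ i := by rintro rfl; exact hk (IsConj.refl _)
    have hkj : k ≠ j := by rintro rfl; exact hk hij
    have hlj : l ≠ j := by rintro rfl; exact hl (IsConj.refl _)
    have hli : l ≠ i := by rintro rfl; exact hl hij.symm
    exact free_end cs (h1 i j hne ho) (h3 i j hne ho) hki hkj hli hlj hk' hl'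

end Classes

/-! ### Uniqueness of hubs in the second system -/

section HubTransfer

/-- A permutation of `ℤ × ℤ/n` which preserves the fibres over `ℤ/n` and acts on each of them as a
point reflection. -/
def IsFlip {n : ℕ} (p : Equiv.Perm (ℤ × ZMod n)) : Prop :=
  ∃ κ : ZMod n → ℤ, ∀ x, p x = (κ x.2 - x.1, x.2)

/-- On every fibre, a product of two flips is a translation, so it has finite order only if the
flips agree. -/
lemma IsFlip.eq_of_pow {n : ℕ} {p q : Equiv.Perm (ℤ × ZMod n)} (hp : IsFlip p) (hq : IsFlip q)
    {m : ℕ} (hm : m ≠ 0) (h : (p * q) ^ m = 1) : p = q := by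
  obtain ⟨κ, hκ⟩ := hp
  obtain ⟨μ, hμ⟩ := hq
  have hpow : ∀ k : ℕ, ∀ x, ((p * q) ^ k) x = (x.1 + k * (κ x.2 - μ x.2), x.2) := by
    intro k
    induction k with
    | zero => intro x; simp
    | succ k ih =>
      intro x
      rw [pow_succ, Equiv.Perm.mul_apply, ih, Equiv.Perm.mul_apply, hμ, hκ]
      ext
      · push_cast; ring
      · rfl
  ext1 x
  have h1 := hpow m x
  rw [h] at h1
  have h2 := congrArg Prod.fst h1
  simp only [Equiv.Perm.one_apply, left_eq_add, mul_eq_zero, Nat.cast_eq_zero] at h2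
  have h3 := h2.resolve_left hm
  rw [hκ, hμ]
  ext
  · simp only; omega
  · rfl

/-- The second system also has at most one hub per class. Two hubs in one class of the second
system force, in the first system, a class `{s, t}` with `t` free. In the action of `W` on
`ℤ × ℤ/n` the neighbours of both hubs then act by one and the same flip, which has a single fixed
point. The hubs fix that point, so all of `W` fixes its image in `ℤ/n`; but `s` and `t` have no
common fixed point there. -/
theorem hub_transfer [Fintype B] [Fintype B'] (cs : CoxeterSystem M W) (cs' : CoxeterSystem M' W)
    (hR : ∀ w : W, cs'.IsReflection w ↔ cs.IsReflection w) (hP : HasPairs cs)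
    (hlink : ∀ i j k l, i ≠ j → IsConj (cs.simple i) (cs.simple j) →
      ¬ IsConj (cs.simple i) (cs.simple k) → ¬ IsConj (cs.simple i) (cs.simple l) →
      ord cs i k ≠ 0 → ord cs i l ≠ 0 → ord cs k l ≠ 0)
    (i' t' : B') (hit : IsConj (cs'.simple i') (cs'.simple t')) (hi : Hub cs' i')
    (ht : Hub cs' t') : i' = t' := by
  by_contra hne
  have hpair' := pair_transfer cs cs' hR hP.pair
  obtain ⟨k', hk'n, hk'⟩ := hi
  obtain ⟨l', hl'n, hl'⟩ := ht
  obtain ⟨s, k, hsi, hkk, hsk⟩ := adjacent_classes cs cs' hR hk'n hk'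
  obtain ⟨s₂, l, hst', hll, hsl⟩ := adjacent_classes cs cs' hR hl'n hl'
  have hskn : ¬ IsConj (cs.simple s) (cs.simple k) := fun h =>
    hk'n (hsi.symm.trans (h.trans hkk))
  have hsln : ¬ IsConj (cs.simple s₂) (cs.simple l) := fun h =>
    hl'n (hst'.symm.trans (h.trans hll))
  have hss : s = s₂ := hP.hub s s₂ (hsi.trans (hit.trans hst'.symm)) ⟨k, hskn, hsk⟩
    ⟨l, hsln, hsl⟩
  subst hss
  obtain ⟨t, hts, htc⟩ := exists_ne_of_isConj cs cs' hR hne hit hsi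
  have hnothub : ¬ Hub cs t := fun h => hts (hP.hub t s htc h ⟨k, hskn, hsk⟩)
  have hclass : ∀ a, IsConj (cs.simple s) (cs.simple a) → a = s ∨ a = t := by
    intro a ha
    rcases hP.pair s t a htc.symm ha with h | h | h
    · exact absurd h.symm hts
    · exact Or.inl h.symm
    · exact Or.inr h.symm
  obtain ⟨F, φ, hφ, hFs, hFt, hFk⟩ := exists_tree_hom cs hts.symm
    (fun a h1 h2 ho => by
      rcases hclass a (isConj_of_odd_ord cs ho) with h | h
      · exact h1 h
      · exact h2 h)
    (fun a h1 h2 => by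
      by_contra h0
      refine hnothub ⟨a, fun hc => ?_, h0⟩
      rcases hclass a (htc.symm.trans hc) with h | h
      · exact h1 h
      · exact h2 h)
  have hn1 : ord cs s t ≠ 1 := ord_ne_one cs hts.symm
  have hFother : ∀ a, ¬ IsConj (cs.simple s) (cs.simple a) → ∀ x,
      F (cs.simple a) x = ((if x.2 = 0 then 0 else 1) - x.1, x.2) := by
    intro a ha
    refine hFk a ?_ ?_
    · rintro rfl; exact ha (IsConj.refl _)
    · rintro rfl; exact ha htc.symm
  have hconjflip : ∀ w u, IsFlip (F u) → IsFlip (F (w * u * w⁻¹)) := by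
    intro w
    induction w using cs.simple_induction with
    | simple a =>
      rintro u ⟨κ, hκ⟩
      by_cases ha : IsConj (cs.simple s) (cs.simple a)
      · rcases hclass a ha with rfl | rfl
        · refine ⟨fun y => κ (-y), fun x => ?_⟩
          simp [hFs, hκ]
        · refine ⟨fun y => κ (1 - y), fun x => ?_⟩
          simp [hFt, hκ]
      · refine ⟨fun y => 2 * (if y = 0 then 0 else 1) - κ y, fun x => ?_⟩
        simp only [cs.inv_simple, map_mul, Equiv.Perm.mul_apply, hFother a ha, hκ]
        ext
        · simp only; ring
        · rfl
    | one => intro u hu; simpa using hu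
    | mul w w' h h' =>
      intro u hu
      have := h _ (h' u hu)
      rwa [show w * (w' * u * w'⁻¹) * w⁻¹ = w * w' * u * (w * w')⁻¹ by group] at this
  have hflip : ∀ u, cs.IsReflection u → ¬ IsConj (cs.simple s) u → IsFlip (F u) := by
    rintro u ⟨w, a, rfl⟩ hn
    refine hconjflip w _ ⟨fun y => if y = 0 then 0 else 1, hFother a fun hc => hn (hc.trans (isConj_iff.mpr ⟨w, rfl⟩))⟩
  have hsimple : ∀ a', cs.IsReflection (cs'.simple a') := fun a' =>
    (hR _).mp (cs'.isReflection_simple a')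
  have heq : ∀ a' b', ¬ IsConj (cs.simple s) (cs'.simple a') →
      ¬ IsConj (cs.simple s) (cs'.simple b') → ord cs' a' b' ≠ 0 →
      F (cs'.simple a') = F (cs'.simple b') := by
    intro a' b' ha hb h
    refine IsFlip.eq_of_pow (hflip _ (hsimple a') ha) (hflip _ (hsimple b') hb) h ?_
    rw [← map_mul, ← map_pow, pow_ord, map_one]
  have hsame : ∀ a' b', ¬ IsConj (cs.simple s) (cs'.simple a') →
      IsConj (cs'.simple a') (cs'.simple b') → F (cs'.simple a') = F (cs'.simple b') := by
    intro a' b' ha hab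
    by_cases hne : a' = b'
    · rw [hne]
    · refine heq a' b' ha (fun h => ha (h.trans hab.symm)) ?_
      exact (odd_of_pair cs' hpair' hne hab).pos.ne'
  have hk'C : ¬ IsConj (cs.simple s) (cs'.simple k') := fun h => hskn (h.trans hkk.symm)
  have hl'C : ¬ IsConj (cs.simple s) (cs'.simple l') := fun h => hsln (h.trans hll.symm)
  have hkl : F (cs'.simple k') = F (cs'.simple l') := by
    by_cases hc : IsConj (cs.simple k) (cs.simple l)
    · exact hsame k' l' hk'C (hkk.symm.trans (hc.trans hll))
    · obtain ⟨k₂, l₂, hk₂, hl₂, h⟩ := adjacent_classes cs' cs (fun w => (hR w).symm) hc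
        (hlink s t k l hts.symm htc.symm hskn hsln hsk hsl)
      rw [hsame k' k₂ hk'C (hkk.symm.trans hk₂.symm), hsame l' l₂ hl'C (hll.symm.trans hl₂.symm)]
      exact heq k₂ l₂ (fun h => hskn (h.trans hk₂)) (fun h => hsln (h.trans hl₂)) h
  -- An involution whose product with a flip `u` has finite order commutes with it in the action,
  -- because `(r u r⁻¹) u = (r u)²`.
  have hcomm : ∀ r u, r * r = 1 → IsFlip (F u) → orderOf (r * u) ≠ 0 → F r * F u = F u * F r := by
    intro r u hr hu hfin
    have h1 : F (r * u * r⁻¹) = F u := by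
      refine IsFlip.eq_of_pow (hconjflip r u hu) hu hfin ?_
      rw [← map_mul, ← map_pow, inv_eq_of_mul_eq_one_left hr, mul_assoc (r * u), ← pow_two,
        ← pow_mul, mul_comm, pow_mul, pow_orderOf_eq_one, one_pow, map_one]
    rwa [map_mul, map_inv, mul_inv_eq_iff_eq_mul, map_mul] at h1
  obtain ⟨x, hx⟩ : ∃ x, ∀ y, F (cs'.simple k') y = y ↔ y = x := by
    obtain ⟨w, hw⟩ := isConj_iff.mp hkk
    refine ⟨F w (0, 0), fun y => ?_⟩
    obtain ⟨⟨z, j⟩, rfl⟩ := (F w).surjective y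
    rw [← hw, map_mul, map_mul, map_inv, Equiv.Perm.mul_apply, Equiv.Perm.mul_apply,
      show (F w)⁻¹ (F w (z, j)) = (z, j) from (F w).symm_apply_apply _,
      (F w).injective.eq_iff, (F w).injective.eq_iff, hFother k hskn, Prod.mk.injEq, Prod.mk.injEq]
    by_cases hj : j = 0
    · simp only [hj, if_true, and_true]; omega
    · simp only [hj, if_false, and_true, and_false, iff_false]; omega
  have hfix : ∀ r u, r * r = 1 → F u = F (cs'.simple k') → IsFlip (F u) → orderOf (r * u) ≠ 0 →
      F r x = x := by
    intro r u hr hu hflip hfin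
    rw [← hx, ← hu, ← Equiv.Perm.mul_apply, ← hcomm r u hr hflip hfin, Equiv.Perm.mul_apply, hu,
      (hx x).mpr rfl]
  have hi'x := hfix _ _ (cs'.simple_mul_simple_self i') rfl (hflip _ (hsimple k') hk'C) hk'
  have ht'x := hfix _ _ (cs'.simple_mul_simple_self t') hkl.symm (hflip _ (hsimple l') hl'C) hl'
  have hall : ∀ w, φ w x.2 = x.2 := by
    intro w
    induction w using cs'.simple_induction with
    | simple a' =>
      rw [← hφ]
      by_cases ha : IsConj (cs'.simple i') (cs'.simple a')
      · rcases hpair' i' t' a' hit ha with h | h | h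
        · exact absurd h hne
        · rw [← h, hi'x]
        · rw [← h, ht'x]
      · obtain ⟨κ, hκ⟩ := hflip _ (hsimple a') (fun h => ha (hsi.symm.trans h))
        rw [hκ]
    | one => simp
    | mul w w' h h' => rw [map_mul, Equiv.Perm.mul_apply, h', h]
  have e1 := hall (cs.simple s)
  have e2 := hall (cs.simple t)
  rw [← hφ, hFs] at e1
  rw [← hφ, hFt] at e2
  simp only at e1 e2
  have e3 : ((1 : ℕ) : ZMod (ord cs s t)) = 0 := by
    rw [Nat.cast_one]
    linear_combination e2 - e1
  rw [ZMod.natCast_eq_zero_iff] at e3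
  exact hn1 (Nat.dvd_one.mp e3)

lemma hasPairs_transfer [Fintype B] [Fintype B'] (cs : CoxeterSystem M W)
    (cs' : CoxeterSystem M' W) (hR : ∀ w : W, cs'.IsReflection w ↔ cs.IsReflection w)
    (hP : HasPairs cs)
    (hlink : ∀ i j k l, i ≠ j → IsConj (cs.simple i) (cs.simple j) →
      ¬ IsConj (cs.simple i) (cs.simple k) → ¬ IsConj (cs.simple i) (cs.simple l) →
      ord cs i k ≠ 0 → ord cs i l ≠ 0 → ord cs k l ≠ 0) : HasPairs cs' where
  odd _ _ hij h := odd_of_pair cs' (pair_transfer cs cs' hR hP.pair) hij h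
  pair := pair_transfer cs cs' hR hP.pair
  hub := hub_transfer cs cs' hR hP hlink

end HubTransfer

/-! ### Matching the two systems and comparing orders -/

section Matching

/-- A bijection between the generators that respects conjugacy and hubs. -/
def IsMatching (cs : CoxeterSystem M W) (cs' : CoxeterSystem M' W) (ψ : B ≃ B') : Prop :=
  ∀ i, IsConj (cs.simple i) (cs'.simple (ψ i)) ∧ (Hub cs i ↔ Hub cs' (ψ i))

open Classical in
/-- Inside each class the hubs, and hence the non-hubs, are equally many in both systems. -/
lemma exists_matching [Fintype B] [Fintype B'] (cs : CoxeterSystem M W) (cs' : CoxeterSystem M' W)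
    (hR : ∀ w : W, cs'.IsReflection w ↔ cs.IsReflection w) (hP : HasPairs cs)
    (hP' : HasPairs cs') :
    ∃ ψ : B ≃ B', IsMatching cs cs' ψ := by
  let f : B → ConjClasses W × Prop := fun i => (ConjClasses.mk (cs.simple i), Hub cs i)
  let f' : B' → ConjClasses W × Prop := fun i => (ConjClasses.mk (cs'.simple i), Hub cs' i)
  have hhub : ∀ x, (Finset.univ.filter fun i => IsConj (cs.simple i) x ∧ Hub cs i).card =
      (Finset.univ.filter fun i => IsConj (cs'.simple i) x ∧ Hub cs' i).card := by
    intro x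
    have h1 : (Finset.univ.filter fun i => IsConj (cs.simple i) x ∧ Hub cs i).card ≤ 1 := by
      rw [Finset.card_le_one]
      intro a ha b hb
      rw [Finset.mem_filter] at ha hb
      exact hP.hub a b (ha.2.1.trans hb.2.1.symm) ha.2.2 hb.2.2
    have h2 : (Finset.univ.filter fun i => IsConj (cs'.simple i) x ∧ Hub cs' i).card ≤ 1 := by
      rw [Finset.card_le_one]
      intro a ha b hb
      rw [Finset.mem_filter] at ha hb
      exact hP'.hub a b (ha.2.1.trans hb.2.1.symm) ha.2.2 hb.2.2
    have h3 : 0 < (Finset.univ.filter fun i => IsConj (cs.simple i) x ∧ Hub cs i).card ↔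
        0 < (Finset.univ.filter fun i => IsConj (cs'.simple i) x ∧ Hub cs' i).card := by
      rw [Finset.card_pos, Finset.card_pos]
      constructor
      · rintro ⟨i, hi⟩
        rw [Finset.mem_filter] at hi
        obtain ⟨j, hj, hj'⟩ := exists_hub cs' cs (fun w => (hR w).symm) hi.2.2
        exact ⟨j, Finset.mem_filter.mpr ⟨Finset.mem_univ _, hj.trans hi.2.1, hj'⟩⟩
      · rintro ⟨i, hi⟩
        rw [Finset.mem_filter] at hi
        obtain ⟨j, hj, hj'⟩ := exists_hub cs cs' hR hi.2.2
        exact ⟨j, Finset.mem_filter.mpr ⟨Finset.mem_univ _, hj.trans hi.2.1, hj'⟩⟩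
    omega
  have hnonhub : ∀ x, (Finset.univ.filter fun i => IsConj (cs.simple i) x ∧ ¬ Hub cs i).card =
      (Finset.univ.filter fun i => IsConj (cs'.simple i) x ∧ ¬ Hub cs' i).card := by
    intro x
    have h := card_class_eq cs cs' hR x
    rw [Nat.card_eq_fintype_card, Nat.card_eq_fintype_card, Fintype.card_subtype,
      Fintype.card_subtype] at h
    have e1 := Finset.card_filter_add_card_filter_not
      (s := Finset.univ.filter fun i => IsConj (cs.simple i) x) (fun i => Hub cs i)
    have e2 := Finset.card_filter_add_card_filter_not
      (s := Finset.univ.filter fun i => IsConj (cs'.simple i) x) (fun i => Hub cs' i)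
    rw [Finset.filter_filter, Finset.filter_filter] at e1 e2
    have := hhub x
    omega
  have hcard : ∀ c, Nat.card {i // f i = c} = Nat.card {i // f' i = c} := by
    rintro ⟨q, P⟩
    obtain ⟨x, rfl⟩ := ConjClasses.mk_surjective q
    simp only [f, f', Prod.mk.injEq, ConjClasses.mk_eq_mk_iff_isConj]
    rw [Nat.card_eq_fintype_card, Nat.card_eq_fintype_card, Fintype.card_subtype,
      Fintype.card_subtype]
    by_cases hPr : P
    · simpa only [hPr, eq_iff_iff, iff_true] using hhub x
    · simpa only [hPr, eq_iff_iff, iff_false] using hnonhub x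
  have e : ∀ c, {i // f i = c} ≃ {i // f' i = c} := fun c => (Finite.card_eq.mp (hcard c)).some
  refine ⟨Equiv.ofFiberEquiv e, fun i => ?_⟩
  have h := Equiv.ofFiberEquiv_map e i
  simp only [f, f', Prod.mk.injEq, ConjClasses.mk_eq_mk_iff_isConj, eq_iff_iff] at h
  exact ⟨h.1.symm, h.2.symm⟩

/-- Orders inside a class: the dihedral quotient `D_n` of `W` supported on the class `{i, t}` is
generated by the images of `i'` and `t'`, so its rotation subgroup is killed by `m(i', t')`. -/
lemma ord_dvd_of_class (cs : CoxeterSystem M W) (cs' : CoxeterSystem M' W)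
    (hR : ∀ w : W, cs'.IsReflection w ↔ cs.IsReflection w) {i t : B} {i' t' : B'}
    (hit : IsConj (cs.simple i) (cs.simple t))
    (hcl : ∀ k, IsConj (cs.simple i) (cs.simple k) → k = i ∨ k = t)
    (hcl' : ∀ k, IsConj (cs.simple i) (cs'.simple k) → k = i' ∨ k = t')
    (hi' : IsConj (cs.simple i) (cs'.simple i')) (ht' : IsConj (cs.simple i) (cs'.simple t')) :
    ord cs i t ∣ ord cs' i' t' := by
  classical
  by_cases hne : i = t
  · rw [← hne, ord_self]; exact one_dvd _
  obtain ⟨θ', h1, h2, -⟩ := dihedral_transfer cs cs' hR (fun x => IsConj (cs.simple i) x)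
    (fun x y hxy => ⟨fun h => h.trans hxy, fun h => h.trans hxy.symm⟩)
    (fun k => if k = i then (0 : ZMod (ord cs i t)) else 1) (by
      intro k l hk hl
      rcases hcl k hk with rfl | rfl <;> rcases hcl l hl with rfl | rfl
      · simp
      · simp [Ne.symm hne]
      · rw [ord_comm]; simp [Ne.symm hne]
      · simp)
  have h3 := h2 (nsmulAddMonoidHom (α := ZMod (ord cs i t)) (ord cs' i' t')).ker (θ' i') (by
    intro k hk
    rw [AddMonoidHom.mem_ker, nsmulAddMonoidHom_apply]
    rcases hcl' k hk with rfl | rfl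
    · simp
    · rw [ord_comm cs']; exact h1 _ _ ht' hi')
  have h4 := sub_mem (h3 t hit) (h3 i (IsConj.refl _))
  rw [AddMonoidHom.mem_ker, nsmulAddMonoidHom_apply, if_neg (Ne.symm hne), if_pos rfl] at h4
  rw [← ZMod.natCast_eq_zero_iff]
  simpa using h4

lemma HasPairs.ord_ne_zero {cs : CoxeterSystem M W} (hP : HasPairs cs) {i j : B}
    (h : IsConj (cs.simple i) (cs.simple j)) : ord cs i j ≠ 0 := by
  by_cases hij : i = j
  · rw [hij, ord_self]; exact one_ne_zero
  · exact (hP.odd i j hij h).pos.ne'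

/-- Orders between two classes `{i, t}` and `{j, v}` with hubs `i` and `j`. With `n = m(i, t)`,
`p = m(i, j)`, `n' = m(j, v)`, the group `W` maps onto the generalised dihedral group of
`A = ℤ/n × ℤ/p × ℤ/n'`. In terms of the second system `A` is generated by three differences killed
by `n`, `m(i', j')` and `n'`, so comparing cardinalities gives `p ≤ m(i', j')`. -/
lemma ord_le_of_hubs (cs : CoxeterSystem M W) (cs' : CoxeterSystem M' W)
    (hR : ∀ w : W, cs'.IsReflection w ↔ cs.IsReflection w) (hP : HasPairs cs)
    {i t j v : B} {i' t' j' v' : B'}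
    (hij : ¬ IsConj (cs.simple i) (cs.simple j)) (hij0 : ord cs i j ≠ 0)
    (hit : IsConj (cs.simple i) (cs.simple t)) (hjv : IsConj (cs.simple j) (cs.simple v))
    (hcli : ∀ k, IsConj (cs.simple i) (cs.simple k) → k = i ∨ k = t)
    (hclj : ∀ k, IsConj (cs.simple j) (cs.simple k) → k = j ∨ k = v)
    (hcli' : ∀ k, IsConj (cs.simple i) (cs'.simple k) → k = i' ∨ k = t')
    (hclj' : ∀ k, IsConj (cs.simple j) (cs'.simple k) → k = j' ∨ k = v')
    (hi' : IsConj (cs.simple i) (cs'.simple i')) (ht' : IsConj (cs.simple i) (cs'.simple t'))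
    (hj' : IsConj (cs.simple j) (cs'.simple j')) (hv' : IsConj (cs.simple j) (cs'.simple v'))
    (hn : ord cs' i' t' = ord cs i t) (hn' : ord cs' j' v' = ord cs j v)
    (ha : ord cs' i' j' ≠ 0) : ord cs i j ≤ ord cs' i' j' := by
  classical
  have hubi : Hub cs i := ⟨j, hij, hij0⟩
  have hubj : Hub cs j := ⟨i, fun h => hij h.symm, by rwa [ord_comm]⟩
  have hn0 : ord cs i t ≠ 0 := hP.ord_ne_zero hit
  have hn0' : ord cs j v ≠ 0 := hP.ord_ne_zero hjv
  have hcross : ∀ k l, IsConj (cs.simple i) (cs.simple k) → IsConj (cs.simple j) (cs.simple l) →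
      ord cs k l ≠ 0 → k = i ∧ l = j := by
    intro k l hk hl h
    have hkl : ¬ IsConj (cs.simple k) (cs.simple l) := fun hc =>
      hij (hk.trans (hc.trans hl.symm))
    exact ⟨hP.hub k i hk.symm ⟨l, hkl, h⟩ hubi,
      hP.hub l j hl.symm ⟨k, fun hc => hkl hc.symm, by rwa [ord_comm]⟩ hubj⟩
  set n := ord cs i t with hndef
  set p := ord cs i j with hpdef
  set n' := ord cs j v with hndef'
  set a := ord cs' i' j' with hadef
  let e₁ : ZMod n × ZMod p × ZMod n' := (1, 0, 0)
  let e₂ : ZMod n × ZMod p × ZMod n' := (0, 1, 0)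
  let e₃ : ZMod n × ZMod p × ZMod n' := (0, 0, 1)
  have he₁ : n • e₁ = 0 := by simp [e₁]
  have he₂ : p • e₂ = 0 := by simp [e₂]
  have he₃ : n' • e₃ = 0 := by simp [e₃]
  let θ : B → ZMod n × ZMod p × ZMod n' := fun k =>
    if k = i then 0 else if k = t then e₁ else if k = j then e₂ else e₂ + e₃
  have hθi : θ i = 0 := if_pos rfl
  -- When `t = i` the modulus `n` is `1`, so `e₁ = 0`; similarly for `v = j` and `e₃`.
  have hθt : θ t = e₁ := by
    by_cases h : t = i
    · have hn1 : n = 1 := by rw [hndef, h, ord_self]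
      have : n • e₁ = e₁ := (congrArg (· • e₁) hn1).trans (one_smul _ _)
      rw [h, hθi, ← he₁, this]
    · simp only [θ, if_neg h, if_true]
  have hji : j ≠ i := by rintro rfl; exact hij (IsConj.refl _)
  have hjt : j ≠ t := by rintro rfl; exact hij hit
  have hvi : v ≠ i := by rintro rfl; exact hij hjv.symm
  have hvt : v ≠ t := by rintro rfl; exact hij (hit.trans hjv.symm)
  have hθj : θ j = e₂ := by simp only [θ, if_neg hji, if_neg hjt, if_true]
  have hθv : θ v = e₂ + e₃ := by
    by_cases h : v = j
    · have hn1 : n' = 1 := by rw [hndef', h, ord_self]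
      have h3 : n' • e₃ = e₃ := (congrArg (· • e₃) hn1).trans (one_smul _ _)
      have : e₃ = 0 := by rw [← h3, he₃]
      rw [h, hθj, this, add_zero]
    · simp only [θ, if_neg hvi, if_neg hvt, if_neg h]
  have hsymm : ∀ k l, ord cs k l • (θ k - θ l) = 0 → ord cs l k • (θ l - θ k) = 0 := by
    intro k l h
    rw [ord_comm, ← neg_sub, smul_neg, h, neg_zero]
  have hself : ∀ k, ord cs k k • (θ k - θ k) = 0 := fun k => by rw [sub_self, smul_zero]
  have hRit : ord cs i t • (θ i - θ t) = 0 := by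
    rw [hθi, hθt, zero_sub, smul_neg, ← hndef, he₁, neg_zero]
  have hRjv : ord cs j v • (θ j - θ v) = 0 := by
    rw [hθj, hθv, sub_add_cancel_left, smul_neg, ← hndef', he₃, neg_zero]
  have hRcross : ∀ k l, IsConj (cs.simple i) (cs.simple k) → IsConj (cs.simple j) (cs.simple l) →
      ord cs k l • (θ k - θ l) = 0 := by
    intro k l hk hl
    by_cases h : ord cs k l = 0
    · rw [h, zero_smul]
    · obtain ⟨rfl, rfl⟩ := hcross k l hk hl h
      rw [hθi, hθj, zero_sub, smul_neg, ← hpdef, he₂, neg_zero]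
  obtain ⟨θ', h1, h2, -⟩ := dihedral_transfer cs cs' hR
    (fun x => IsConj (cs.simple i) x ∨ IsConj (cs.simple j) x)
    (fun x y hxy => by
      have h : ∀ z : W, IsConj z x ↔ IsConj z y := fun z =>
        ⟨fun h => h.trans hxy, fun h => h.trans hxy.symm⟩
      rw [h, h]) θ (by
      rintro k l (hk | hk) (hl | hl)
      · rcases hcli k hk with rfl | rfl <;> rcases hcli l hl with rfl | rfl
        · exact hself _
        · exact hRit
        · exact hsymm _ _ hRit
        · exact hself _
      · exact hRcross k l hk hl
      · exact hsymm _ _ (hRcross l k hl hk)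
      · rcases hclj k hk with rfl | rfl <;> rcases hclj l hl with rfl | rfl
        · exact hself _
        · exact hRjv
        · exact hsymm _ _ hRjv
        · exact hself _)
  have t1 := h1 i' t' (Or.inl hi') (Or.inl ht')
  have t2 := h1 i' j' (Or.inl hi') (Or.inr hj')
  have t3 := h1 j' v' (Or.inr hj') (Or.inr hv')
  rw [hn] at t1
  rw [hn'] at t3
  rw [← hadef] at t2
  have hlift : ∀ (m : ℕ) (x : ZMod n × ZMod p × ZMod n'), m • x = 0 →
      ∃ f : ZMod m →+ ZMod n × ZMod p × ZMod n', f 1 = x := by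
    intro m x hx
    refine ⟨ZMod.lift m ⟨zmultiplesHom _ x, by simpa using hx⟩, ?_⟩
    have := ZMod.lift_coe m ⟨zmultiplesHom (ZMod n × ZMod p × ZMod n') x, by simpa using hx⟩ 1
    simpa using this
  obtain ⟨f₁, hf₁⟩ := hlift n _ t1
  obtain ⟨f₂, hf₂⟩ := hlift a _ t2
  obtain ⟨f₃, hf₃⟩ := hlift n' _ t3
  let f := f₁.coprod (f₂.coprod f₃)
  have m1 : θ' i' - θ' t' ∈ f.range := ⟨(1, 0, 0), by simp [f, hf₁]⟩
  have m2 : θ' i' - θ' j' ∈ f.range := ⟨(0, 1, 0), by simp [f, hf₂]⟩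
  have m3 : θ' j' - θ' v' ∈ f.range := ⟨(0, 0, 1), by simp [f, hf₃]⟩
  have h3 := h2 f.range (θ' i') (by
    have m4 : θ' j' - θ' i' ∈ f.range := by simpa using neg_mem m2
    rintro k (hk | hk)
    · rcases hcli' k hk with rfl | rfl
      · simp
      · simpa using neg_mem m1
    · rcases hclj' k hk with rfl | rfl
      · exact m4
      · have := sub_mem m4 m3
        rwa [sub_sub_sub_cancel_left] at this)
  have hi3 := h3 i (Or.inl (IsConj.refl _))
  have r1 : e₁ ∈ f.range := by
    have := sub_mem (h3 t (Or.inl hit)) hi3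
    rwa [sub_sub_sub_cancel_right, hθt, hθi, sub_zero] at this
  have r2 : e₂ ∈ f.range := by
    have := sub_mem (h3 j (Or.inr (IsConj.refl _))) hi3
    rwa [sub_sub_sub_cancel_right, hθj, hθi, sub_zero] at this
  have r3 : e₃ ∈ f.range := by
    have := sub_mem (h3 v (Or.inr hjv)) (h3 j (Or.inr (IsConj.refl _)))
    rwa [sub_sub_sub_cancel_right, hθj, hθv, add_sub_cancel_left] at this
  have hsurj : Function.Surjective f := by
    rintro ⟨x, y, z⟩
    obtain ⟨x, rfl⟩ := ZMod.intCast_surjective x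
    obtain ⟨y, rfl⟩ := ZMod.intCast_surjective y
    obtain ⟨z, rfl⟩ := ZMod.intCast_surjective z
    have := add_mem (add_mem (f.range.zsmul_mem r1 x) (f.range.zsmul_mem r2 y))
      (f.range.zsmul_mem r3 z)
    have he : x • e₁ + y • e₂ + z • e₃ = ((x : ZMod n), (y : ZMod p), (z : ZMod n')) := by
      simp [e₁, e₂, e₃]
    rwa [he] at this
  have : NeZero n := ⟨hn0⟩
  have : NeZero n' := ⟨hn0'⟩
  have : NeZero a := ⟨ha⟩
  have hle := Nat.card_le_card_of_surjective f hsurj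
  simp only [Nat.card_prod, Nat.card_zmod] at hle
  have h5 := Nat.le_of_mul_le_mul_left hle (Nat.pos_of_ne_zero hn0)
  exact Nat.le_of_mul_le_mul_right h5 (Nat.pos_of_ne_zero hn0')

lemma IsMatching.symm {cs : CoxeterSystem M W} {cs' : CoxeterSystem M' W} {ψ : B ≃ B'}
    (hψ : IsMatching cs cs' ψ) : IsMatching cs' cs ψ.symm := by
  intro i'
  have := hψ (ψ.symm i')
  rw [ψ.apply_symm_apply] at this
  exact ⟨this.1.symm, this.2.symm⟩

lemma IsMatching.isConj_iff {cs : CoxeterSystem M W} {cs' : CoxeterSystem M' W} {ψ : B ≃ B'}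
    (hψ : IsMatching cs cs' ψ) (i j : B) :
    IsConj (cs'.simple (ψ i)) (cs'.simple (ψ j)) ↔ IsConj (cs.simple i) (cs.simple j) :=
  ⟨fun h => (hψ i).1.trans (h.trans (hψ j).1.symm), fun h => (hψ i).1.symm.trans (h.trans (hψ j).1)⟩

lemma IsMatching.class_eq {cs : CoxeterSystem M W} {cs' : CoxeterSystem M' W} {ψ : B ≃ B'}
    (hψ : IsMatching cs cs' ψ) {i t : B}
    (hcl : ∀ k, IsConj (cs.simple i) (cs.simple k) → k = i ∨ k = t) (k : B')
    (hk : IsConj (cs.simple i) (cs'.simple k)) : k = ψ i ∨ k = ψ t := by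
  have := hcl (ψ.symm k) (hk.trans (hψ.symm k).1)
  rwa [ψ.symm_apply_eq, ψ.symm_apply_eq] at this

lemma HasPairs.exists_partner {cs : CoxeterSystem M W} (hP : HasPairs cs) (i : B) :
    ∃ t, IsConj (cs.simple i) (cs.simple t) ∧
      ∀ k, IsConj (cs.simple i) (cs.simple k) → k = i ∨ k = t := by
  by_cases h : ∃ t, t ≠ i ∧ IsConj (cs.simple i) (cs.simple t)
  · obtain ⟨t, hti, ht⟩ := h
    refine ⟨t, ht, fun k hk => ?_⟩
    rcases hP.pair i t k ht hk with h | h | h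
    · exact absurd h.symm hti
    · exact Or.inl h.symm
    · exact Or.inr h.symm
  · push Not at h
    exact ⟨i, IsConj.refl _, fun k hk => by
      by_contra hc
      exact h k (fun hki => hc (Or.inl hki)) hk⟩

lemma IsMatching.ord_dvd {cs : CoxeterSystem M W} {cs' : CoxeterSystem M' W} {ψ : B ≃ B'}
    (hψ : IsMatching cs cs' ψ) (hR : ∀ w : W, cs'.IsReflection w ↔ cs.IsReflection w)
    (hP : HasPairs cs) {i j : B} (hij : IsConj (cs.simple i) (cs.simple j)) :
    ord cs i j ∣ ord cs' (ψ i) (ψ j) := by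
  by_cases h : i = j
  · rw [h, ord_self, ord_self]
  have hcl : ∀ k, IsConj (cs.simple i) (cs.simple k) → k = i ∨ k = j := by
    intro k hk
    rcases hP.pair i j k hij hk with h' | h' | h'
    · exact absurd h' h
    · exact Or.inl h'.symm
    · exact Or.inr h'.symm
  exact ord_dvd_of_class cs cs' hR hij hcl (hψ.class_eq hcl) (hψ i).1 (hij.trans (hψ j).1)

lemma IsMatching.ord_eq_of_isConj {cs : CoxeterSystem M W} {cs' : CoxeterSystem M' W}
    {ψ : B ≃ B'} (hψ : IsMatching cs cs' ψ)
    (hR : ∀ w : W, cs'.IsReflection w ↔ cs.IsReflection w) (hP : HasPairs cs)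
    (hP' : HasPairs cs') {i j : B} (hij : IsConj (cs.simple i) (cs.simple j)) :
    ord cs' (ψ i) (ψ j) = ord cs i j := by
  refine Nat.dvd_antisymm ?_ (hψ.ord_dvd hR hP hij)
  have := hψ.symm.ord_dvd (fun w => (hR w).symm) hP' ((hψ.isConj_iff i j).mpr hij)
  rwa [ψ.symm_apply_apply, ψ.symm_apply_apply] at this

/-- Finite edges between classes only join hubs, so adjacency of classes determines them. -/
lemma IsMatching.ord_ne_zero {cs : CoxeterSystem M W} {cs' : CoxeterSystem M' W} {ψ : B ≃ B'}
    (hψ : IsMatching cs cs' ψ) (hR : ∀ w : W, cs'.IsReflection w ↔ cs.IsReflection w)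
    (hP' : HasPairs cs') {i j : B} (hij : ¬ IsConj (cs.simple i) (cs.simple j))
    (h : ord cs i j ≠ 0) : ord cs' (ψ i) (ψ j) ≠ 0 := by
  have hi : Hub cs' (ψ i) := (hψ i).2.mp ⟨j, hij, h⟩
  have hj : Hub cs' (ψ j) := (hψ j).2.mp ⟨i, fun h => hij h.symm, by rwa [ord_comm]⟩
  obtain ⟨a, b, ha, hb, hab⟩ := adjacent_classes cs' cs (fun w => (hR w).symm) hij h
  have hn : ¬ IsConj (cs'.simple a) (cs'.simple b) := fun hc =>
    hij (ha.symm.trans (hc.trans hb))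
  have ea : a = ψ i := hP'.hub a (ψ i) (ha.trans (hψ i).1) ⟨b, hn, hab⟩ hi
  have eb : b = ψ j := hP'.hub b (ψ j) (hb.trans (hψ j).1)
    ⟨a, fun hc => hn hc.symm, by rwa [ord_comm]⟩ hj
  rwa [ea, eb] at hab

lemma IsMatching.ord_le {cs : CoxeterSystem M W} {cs' : CoxeterSystem M' W} {ψ : B ≃ B'}
    (hψ : IsMatching cs cs' ψ) (hR : ∀ w : W, cs'.IsReflection w ↔ cs.IsReflection w)
    (hP : HasPairs cs) (hP' : HasPairs cs') {i j : B}
    (hij : ¬ IsConj (cs.simple i) (cs.simple j)) (h : ord cs i j ≠ 0) :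
    ord cs i j ≤ ord cs' (ψ i) (ψ j) := by
  obtain ⟨t, hit, hcli⟩ := hP.exists_partner i
  obtain ⟨v, hjv, hclj⟩ := hP.exists_partner j
  exact ord_le_of_hubs cs cs' hR hP hij h hit hjv hcli hclj (hψ.class_eq hcli)
    (hψ.class_eq hclj) (hψ i).1 (hit.trans (hψ t).1) (hψ j).1 (hjv.trans (hψ v).1)
    (hψ.ord_eq_of_isConj hR hP hP' hit) (hψ.ord_eq_of_isConj hR hP hP' hjv)
    (hψ.ord_ne_zero hR hP' hij h)

theorem IsMatching.ord_eq {cs : CoxeterSystem M W} {cs' : CoxeterSystem M' W} {ψ : B ≃ B'}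
    (hψ : IsMatching cs cs' ψ) (hR : ∀ w : W, cs'.IsReflection w ↔ cs.IsReflection w)
    (hP : HasPairs cs) (hP' : HasPairs cs') (i j : B) :
    ord cs i j = ord cs' (ψ i) (ψ j) := by
  by_cases hij : IsConj (cs.simple i) (cs.simple j)
  · exact (hψ.ord_eq_of_isConj hR hP hP' hij).symm
  have hij' : ¬ IsConj (cs'.simple (ψ i)) (cs'.simple (ψ j)) := by rwa [hψ.isConj_iff]
  have hR' : ∀ w : W, cs.IsReflection w ↔ cs'.IsReflection w := fun w => (hR w).symm
  by_cases h' : ord cs' (ψ i) (ψ j) = 0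
  · rw [h']
    by_contra h
    exact hψ.ord_ne_zero hR hP' hij h h'
  · have h := hψ.symm.ord_ne_zero hR' hP hij' h'
    have hle := hψ.symm.ord_le hR' hP' hP hij' h'
    rw [ψ.symm_apply_apply, ψ.symm_apply_apply] at h hle
    exact le_antisymm (hψ.ord_le hR hP hP' hij h) hle

end Matching

end HosakaRigid

/-- **Theorem (Hosaka).** Every Coxeter system `(W,S)` satisfying conditions (1), (2), (3)
is reflection rigid: for every Coxeter generating set `S'` of `W` having the same set of
reflections as `S`, there is a bijection `ψ : S → S'` with `m(s,t) = m'(ψ s, ψ t)`.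
(Here `orderOf x = 0` encodes infinite order.) -/
theorem reflection_rigid_of_conditions {B : Type*} [Fintype B] {W : Type*} [Group W]
    {M : CoxeterMatrix B} (cs : CoxeterSystem M W)
    (h1 : ∀ i j : B, i ≠ j → Odd (orderOf (cs.simple i * cs.simple j)) →
      cs.IsMaxSpherical {i, j})
    (h2 : ¬ ∃ i j k : B, i ≠ j ∧ j ≠ k ∧ i ≠ k ∧
      Odd (orderOf (cs.simple i * cs.simple j)) ∧ Odd (orderOf (cs.simple j * cs.simple k)))
    (h3 : ∀ i j : B, i ≠ j → Odd (orderOf (cs.simple i * cs.simple j)) →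
      {T : Set B | cs.IsMaxSpherical T ∧ (T ∩ {i, j}).Nonempty}.ncard ≤ 2) :
    ∀ (B' : Type*) [Fintype B'] (M' : CoxeterMatrix B') (cs' : CoxeterSystem M' W),
      (∀ w : W, cs'.IsReflection w ↔ cs.IsReflection w) →
      ∃ ψ : B ≃ B', ∀ i j : B,
        orderOf (cs.simple i * cs.simple j)
          = orderOf (cs'.simple (ψ i) * cs'.simple (ψ j)) := by
  intro B' _ M' cs' hR
  have hP : HosakaRigid.HasPairs cs := HosakaRigid.hasPairs_of_conditions cs h1 h2 h3
  have hP' : HosakaRigid.HasPairs cs' := HosakaRigid.hasPairs_transfer cs cs' hR hP (by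
    intro i j k l hne hij hk hl hk0 hl0
    have ho := hP.odd i j hne hij
    refine HosakaRigid.linked_neighbours cs (h1 i j hne ho) (h3 i j hne ho) ?_ ?_ ?_ ?_ hk0 hl0
    · rintro rfl; exact hk (IsConj.refl _)
    · rintro rfl; exact hk hij
    · rintro rfl; exact hl (IsConj.refl _)
    · rintro rfl; exact hl hij)
  obtain ⟨ψ, hψ⟩ := HosakaRigid.exists_matching cs cs' hR hP hP'
  exact ⟨ψ, hψ.ord_eq hR hP hP'⟩
end

section
/- Let (W,S) be a Coxeter system and let s,t ∈ S. Then s is conjugate to t in W if and only if there exists a finite sequence s_1, …, s_n of elements of S with s_1 = s, s_n = t, and m(s_i, s_{i+1}) odd for each i ∈ {1, …, n−1}. -/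
/-!
Write `a ~ b` when the order of `s_a s_b` is odd.

If `(s_a s_b) ^ (2k+1) = 1`, conjugation by `(s_a s_b) ^ k` takes `s_a` to `s_b`; following a chain
of such steps shows that linked generators are conjugate (`isConj_simple_of_odd`).

Conversely, fix `i` and send each generator to `-1 : ℤˣ` if a chain links it to `i`, and to `1`
otherwise. This respects the Coxeter relations: an even exponent (in particular `M a b = 0`) kills
everything in `ℤˣ`, and if `M a b` is odd then so is the order of `s_a s_b`, a divisor of it, so
`a` and `b` have the same sign. The resulting character `W →* ℤˣ` is constant on conjugacy classes,
hence a generator conjugate to `s_i` also has sign `-1`, i.e. is linked to `i`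
(`reflTransGen_of_isConj`). The orders `M a b` themselves never have to be computed in `W`.
-/

section

variable {B : Type*} {W : Type*} [Group W] {M : CoxeterMatrix B}

/-- Two indices are oddly adjacent when the product of their simple reflections has odd order
(infinite order, `orderOf = 0`, counts as even). -/
def OddAdj (cs : CoxeterSystem M W) (a b : B) : Prop :=
  Odd (orderOf (cs.simple a * cs.simple b))

lemma OddAdj.symm {cs : CoxeterSystem M W} {a b : B} (h : OddAdj cs a b) : OddAdj cs b a := by
  have : cs.simple b * cs.simple a = (cs.simple a * cs.simple b)⁻¹ := by simp
  unfold OddAdj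
  rwa [this, orderOf_inv]

lemma isConj_simple_of_odd {cs : CoxeterSystem M W} {a b : B} (h : OddAdj cs a b) :
    IsConj (cs.simple a) (cs.simple b) := by
  obtain ⟨k, hk⟩ := h
  have hpow : (cs.simple a * cs.simple b) ^ (2 * k + 1) = 1 := by
    rw [← hk]; exact pow_orderOf_eq_one _
  have hsemi : SemiconjBy (cs.simple a) (cs.simple a * cs.simple b)⁻¹
      (cs.simple a * cs.simple b) := by
    simp [SemiconjBy, mul_assoc]
  -- `s_a` inverts `s_a s_b`, so it inverts its `k`-th power.
  have hk' := (hsemi.pow_right k).eq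
  rw [isConj_iff]
  refine ⟨(cs.simple a * cs.simple b) ^ k, ?_⟩
  rw [← inv_pow, mul_assoc, hk', ← mul_assoc, ← pow_add, ← two_mul]
  rw [pow_succ] at hpow
  rw [eq_inv_of_mul_eq_one_left hpow]
  simp [mul_assoc]

/-- The sign character that is `-1` exactly on the generators linked to `i` separates them from
all other generators. -/
lemma reflTransGen_of_isConj (cs : CoxeterSystem M W) {i j : B}
    (h : IsConj (cs.simple i) (cs.simple j)) : Relation.ReflTransGen (OddAdj cs) i j := by
  classical
  let f : B → ℤˣ := fun b => if Relation.ReflTransGen (OddAdj cs) i b then -1 else 1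
  have hf : M.IsLiftable f := by
    intro a b
    rcases Nat.even_or_odd (M a b) with he | ho
    · obtain ⟨k, hk⟩ := he
      rw [hk, ← two_mul, pow_mul, Int.units_sq, one_pow]
    · have hab : OddAdj cs a b :=
        Odd.of_dvd_nat ho (orderOf_dvd_of_pow_eq_one (cs.simple_mul_simple_pow a b))
      have hiff : Relation.ReflTransGen (OddAdj cs) i a ↔
          Relation.ReflTransGen (OddAdj cs) i b :=
        ⟨fun h => h.tail hab, fun h => h.tail hab.symm⟩
      have hfab : f a = f b := by simp only [f, hiff]
      rw [hfab, Int.units_mul_self, one_pow]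
  have hc : IsConj (f i) (f j) := by
    simpa only [cs.lift_apply_simple hf] using (cs.lift ⟨f, hf⟩).map_isConj h
  rw [isConj_iff_eq] at hc
  by_contra hj
  simp only [f, Relation.ReflTransGen.refl, hj, if_true, if_false] at hc
  exact absurd hc (by decide)

lemma exists_fin_chain_of_reflTransGen {α : Type*} {r : α → α → Prop} {a b : α}
    (h : Relation.ReflTransGen r a b) :
    ∃ n : ℕ, ∃ f : Fin (n + 1) → α, f 0 = a ∧ f (Fin.last n) = b ∧
      ∀ k : Fin n, r (f k.castSucc) (f k.succ) := by
  induction h using Relation.ReflTransGen.head_induction_on with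
  | refl => exact ⟨0, fun _ => b, rfl, rfl, fun k => k.elim0⟩
  | @head a c hac _ ih =>
    obtain ⟨n, f, h0, hl, hs⟩ := ih
    refine ⟨n + 1, Fin.cons a f, rfl, ?_, ?_⟩
    · rw [← Fin.succ_last, Fin.cons_succ, hl]
    · intro k
      induction k using Fin.cases with
      | zero => simpa [h0] using hac
      | succ k => simpa [← Fin.succ_castSucc] using hs k

end

/-- Two simple reflections `s, t` of a Coxeter system are conjugate in `W` if and only if
there is a sequence `s = s_0, s_1, …, s_n = t` of simple reflections with
`m(s_k, s_{k+1})` odd for each `k`. -/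
theorem simple_isConj_iff {B : Type*} [Fintype B] {W : Type*} [Group W]
    {M : CoxeterMatrix B} (cs : CoxeterSystem M W) (i j : B) :
    IsConj (cs.simple i) (cs.simple j) ↔
      ∃ n : ℕ, ∃ f : Fin (n + 1) → B, f 0 = i ∧ f (Fin.last n) = j ∧
        ∀ k : Fin n, Odd (orderOf (cs.simple (f k.castSucc) * cs.simple (f k.succ))) := by
  constructor
  · intro h
    exact exists_fin_chain_of_reflTransGen (reflTransGen_of_isConj cs h)
  · rintro ⟨n, f, rfl, rfl, hs⟩
    have key : ∀ k : Fin (n + 1), IsConj (cs.simple (f 0)) (cs.simple (f k)) := by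
      intro k
      induction k using Fin.induction with
      | zero => exact IsConj.refl _
      | succ k ih => exact ih.trans (isConj_simple_of_odd (hs k))
    exact key _
end

section
/- Let (W,S) and (W',S') be Coxeter systems and suppose there is a group isomorphism φ : W → W'. Then for each maximal spherical subset T ⊆ S, there exists a unique maximal spherical subset T' ⊆ S' such that φ(W_T) = w' W'_{T'} (w')^{-1} for some w' ∈ W'. -/
namespace CoxTits

open CoxeterSystem

/-! ### The geometric representation -/

section Geometric

variable {B : Type*}

/-- The underlying real vector space of the geometric representation, with one basis vector (a
simple root) for every simple reflection. -/
abbrev V (B : Type*) := B →₀ ℝ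

/-- The simple root `α s`. -/
noncomputable abbrev α (s : B) : V B := Finsupp.single s 1

/-- The canonical symmetric bilinear form, scaled so that simple roots have norm `2`:
`⟨α s, α t⟩ = -2 cos (π / m(s,t))`. When `m(s,t) = ∞`, encoded as `M s t = 0`, division by zero
yields the customary value `-2`. -/
noncomputable def form (M : CoxeterMatrix B) : V B →ₗ[ℝ] V B →ₗ[ℝ] ℝ :=
  Finsupp.linearCombination ℝ fun s =>
    Finsupp.linearCombination ℝ fun t => -2 * Real.cos (Real.pi / M s t)

/-- The orthogonal reflection in the simple root `α s`. -/
noncomputable def σ (M : CoxeterMatrix B) (s : B) : Module.End ℝ (V B) :=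
  LinearMap.id - (form M (α s)).smulRight (α s)

variable (M : CoxeterMatrix B)

lemma form_simple (s t : B) : form M (α s) (α t) = -2 * Real.cos (Real.pi / M s t) := by
  simp [form]

lemma form_simple_self (s : B) : form M (α s) (α s) = 2 := by
  simp [form_simple]

lemma form_symm (u v : V B) : form M u v = form M v u := by
  have : form M = (form M).flip := by
    apply Finsupp.lhom_ext'
    intro s
    ext t
    simp [form, M.symmetric s t]
  exact congrArg (fun f : V B →ₗ[ℝ] V B →ₗ[ℝ] ℝ => f u v) this

lemma σ_apply (s : B) (v : V B) : σ M s v = v - form M (α s) v • α s := by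
  simp [σ]

lemma σ_self (s : B) : σ M s (α s) = -α s := by
  rw [σ_apply, form_simple_self]; module

lemma σ_σ (s : B) (v : V B) : σ M s (σ M s v) = v := by
  simp only [σ_apply, map_sub, map_smul, form_simple_self]
  module

lemma form_σ (s : B) (u v : V B) : form M (σ M s u) (σ M s v) = form M u v := by
  simp only [σ_apply, map_sub, map_smul, LinearMap.sub_apply, LinearMap.smul_apply, smul_eq_mul,
    form_simple_self, form_symm M u (α s)]
  ring

lemma σ_coord {s t : B} (h : t ≠ s) (v : V B) : σ M s v t = v t := by
  simp [σ_apply, h.symm]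

/-- The values `sin (k θ) / sin θ` for `c = cos θ` (and `k` for `c = 1`), defined through their
linear recurrence. They are the coordinates of the roots of a rank two subsystem. -/
def U (c : ℝ) : ℕ → ℝ
  | 0 => 0
  | 1 => 1
  | k + 2 => 2 * c * U c (k + 1) - U c k

lemma sin_mul_U (θ : ℝ) (k : ℕ) : Real.sin θ * U (Real.cos θ) k = Real.sin (k * θ) := by
  induction k using Nat.twoStepInduction with
  | zero => simp [U]
  | one => simp [U]
  | more k ih1 ih2 =>
    have e : Real.sin θ * U (Real.cos θ) (k + 2)
        = 2 * Real.cos θ * (Real.sin θ * U (Real.cos θ) (k + 1))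
          - Real.sin θ * U (Real.cos θ) k := by
      simp only [U]; ring
    rw [e, ih1, ih2]
    have h1 : ((k + 2 : ℕ) : ℝ) * θ = (k + 1 : ℕ) * θ + θ := by push_cast; ring
    have h2 : (k : ℝ) * θ = (k + 1 : ℕ) * θ - θ := by push_cast; ring
    rw [h1, h2, Real.sin_add, Real.sin_sub]
    ring

lemma U_one (k : ℕ) : U 1 k = k := by
  induction k using Nat.twoStepInduction with
  | zero => simp [U]
  | one => simp [U]
  | more k ih1 ih2 =>
    simp only [U, ih1, ih2]
    push_cast
    ring

lemma sin_pos_of_two_le {m : ℕ} (hm : 2 ≤ m) : 0 < Real.sin (Real.pi / m) := by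
  have hm' : (2 : ℝ) ≤ m := by exact_mod_cast hm
  apply Real.sin_pos_of_pos_of_lt_pi
  · have := Real.pi_pos
    positivity
  · rw [div_lt_iff₀ (by linarith)]
    nlinarith [Real.pi_pos]

lemma U_nonneg {m k : ℕ} (hm : m ≠ 1) (hk : m = 0 ∨ k ≤ m) :
    0 ≤ U (Real.cos (Real.pi / m)) k := by
  rcases Nat.eq_zero_or_pos m with rfl | hpos
  · simp [U_one]
  · have h2 : 2 ≤ m := by omega
    have hs := sin_pos_of_two_le h2
    have hk' : k ≤ m := by omega
    have hm' : (0 : ℝ) < m := by exact_mod_cast hpos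
    have hkm : (k : ℝ) ≤ m := by exact_mod_cast hk'
    have h := sin_mul_U (Real.pi / m) k
    have : 0 ≤ Real.sin (k * (Real.pi / m)) := by
      apply Real.sin_nonneg_of_nonneg_of_le_pi
      · have := Real.pi_pos
        positivity
      · rw [mul_div_assoc', div_le_iff₀ hm']
        nlinarith [Real.pi_pos]
    rw [← h] at this
    exact nonneg_of_mul_nonneg_right this hs

variable {M}

lemma σ_left_comb (s t : B) (p q : ℝ) :
    σ M s (p • α s + q • α t)
      = (2 * Real.cos (Real.pi / M s t) * q - p) • α s + q • α t := by
  simp only [σ_apply, map_add, map_smul, form_simple_self, form_simple M s t]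
  module

lemma σ_right_comb (s t : B) (p q : ℝ) :
    σ M t (p • α s + q • α t)
      = p • α s + (2 * Real.cos (Real.pi / M s t) * p - q) • α t := by
  rw [add_comm, σ_left_comb t s q p, M.symmetric t s, add_comm]

lemma σσ_pow_left (s t : B) (k : ℕ) :
    ((σ M s * σ M t) ^ k) (α s) = U (Real.cos (Real.pi / M s t)) (2 * k + 1) • α s
      + U (Real.cos (Real.pi / M s t)) (2 * k) • α t := by
  induction k with
  | zero => simp [U]
  | succ k ih =>
    rw [pow_succ', Module.End.mul_apply, ih, Module.End.mul_apply, σ_right_comb, σ_left_comb]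
    simp only [show 2 * (k + 1) = 2 * k + 2 by ring, U]

lemma σσ_pow_right (s t : B) (k : ℕ) :
    ((σ M s * σ M t) ^ k) (α t) = (-U (Real.cos (Real.pi / M s t)) (2 * k)) • α s
      + (U (Real.cos (Real.pi / M s t)) (2 * k + 1)
        - 2 * Real.cos (Real.pi / M s t) * U (Real.cos (Real.pi / M s t)) (2 * k)) • α t := by
  induction k with
  | zero => simp [U]
  | succ k ih =>
    rw [pow_succ', Module.End.mul_apply, ih, Module.End.mul_apply, σ_right_comb, σ_left_comb]
    simp only [show 2 * (k + 1) = 2 * k + 2 by ring, U]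
    congr 2 <;> ring

lemma σσ_pow_orthogonal (s t : B) (k : ℕ) (v : V B) (hs : form M (α s) v = 0)
    (ht : form M (α t) v = 0) : ((σ M s * σ M t) ^ k) v = v := by
  induction k with
  | zero => simp
  | succ k ih =>
    rw [pow_succ', Module.End.mul_apply, ih, Module.End.mul_apply, σ_apply, σ_apply, ht]
    simp [hs]

/-- The simple reflections satisfy the Coxeter relations: the form is nondegenerate on the plane
spanned by `α s` and `α t` when `1 < m(s,t) < ∞`, so it is enough to check the relation on this
plane and on its orthogonal complement. -/
lemma σ_liftable : M.IsLiftable (σ M) := by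
  intro s t
  by_cases hst : s = t
  · subst hst
    rw [M.diagonal, pow_one]
    exact LinearMap.ext fun v => σ_σ M s v
  rcases Nat.eq_zero_or_pos (M s t) with h0 | hpos
  · rw [h0, pow_zero]
  have h2 : 2 ≤ M s t := by
    have := M.off_diagonal s t hst
    omega
  have hm : ((M s t : ℕ) : ℝ) ≠ 0 := by exact_mod_cast hpos.ne'
  set θ := Real.pi / M s t with hθ
  have hsin : 0 < Real.sin θ := sin_pos_of_two_le h2
  set c := Real.cos θ with hc
  have hm2 : ((2 * M s t : ℕ) : ℝ) * θ = 2 * Real.pi := by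
    rw [hθ]; push_cast; field_simp
  have hU0 : U c (2 * M s t) = 0 := by
    have h := sin_mul_U θ (2 * M s t)
    rw [hm2, Real.sin_two_pi] at h
    exact (mul_eq_zero.1 h).resolve_left hsin.ne'
  have hU1 : U c (2 * M s t + 1) = 1 := by
    have h := sin_mul_U θ (2 * M s t + 1)
    have e : ((2 * M s t + 1 : ℕ) : ℝ) * θ = θ + 2 * Real.pi := by
      rw [← hm2]; push_cast; ring
    rw [e, Real.sin_add_two_pi] at h
    exact mul_left_cancel₀ hsin.ne' (by rw [h, mul_one])
  have hL : ((σ M s * σ M t) ^ M s t) (α s) = α s := by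
    rw [σσ_pow_left, ← hθ, ← hc, hU0, hU1]; simp
  have hR : ((σ M s * σ M t) ^ M s t) (α t) = α t := by
    rw [σσ_pow_right, ← hθ, ← hc, hU0, hU1]; simp
  have hdet : 1 - c ^ 2 ≠ 0 := by
    have := Real.sin_sq_add_cos_sq θ
    rw [← hc] at this
    have : 1 - c ^ 2 = Real.sin θ ^ 2 := by linarith
    rw [this]
    positivity
  refine LinearMap.ext fun v => ?_
  -- `p` and `q` are the coordinates of the orthogonal projection of `v` to the plane.
  set p := (form M (α s) v + c * form M (α t) v) / (2 * (1 - c ^ 2)) with hp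
  set q := (form M (α t) v + c * form M (α s) v) / (2 * (1 - c ^ 2)) with hq
  have h1 : form M (α s) (v - (p • α s + q • α t)) = 0 := by
    simp only [map_sub, map_add, map_smul, form_simple_self, form_simple M s t, smul_eq_mul,
      ← hθ, ← hc, hp, hq]
    field_simp
    ring
  have h2 : form M (α t) (v - (p • α s + q • α t)) = 0 := by
    simp only [map_sub, map_add, map_smul, form_simple_self, form_simple M t s, smul_eq_mul,
      M.symmetric t s, ← hθ, ← hc, hp, hq]
    field_simp
    ring
  have h3 := σσ_pow_orthogonal s t (M s t) _ h1 h2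
  rw [map_sub, map_add, map_smul, map_smul, hL, hR] at h3
  simpa using h3

end Geometric

/-! ### Sign of the image of a simple root -/

section Roots

variable {B W : Type*} [Group W] {M : CoxeterMatrix B} (cs : CoxeterSystem M W)

/-- The geometric representation of a Coxeter group. -/
noncomputable def ρ : W →* Module.End ℝ (V B) := cs.lift ⟨σ M, σ_liftable⟩

@[simp] lemma ρ_simple (s : B) : ρ cs (cs.simple s) = σ M s := by
  simp [ρ]

lemma ρ_mul (g h : W) (v : V B) : ρ cs (g * h) v = ρ cs g (ρ cs h v) := by simp

@[simp] lemma ρ_inv_self (g : W) (v : V B) : ρ cs g⁻¹ (ρ cs g v) = v := by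
  rw [← ρ_mul]; simp

@[simp] lemma ρ_self_inv (g : W) (v : V B) : ρ cs g (ρ cs g⁻¹ v) = v := by
  rw [← ρ_mul]; simp

lemma form_ρ (g : W) (u v : V B) : form M (ρ cs g u) (ρ cs g v) = form M u v := by
  induction g using cs.simple_induction_left with
  | one => simp
  | mul_simple_left g s ih => simp [form_σ, ih]

/-- An alternating product of two simple reflections maps a simple root to a combination of two
simple roots with explicit coefficients. -/
lemma ρ_alternatingWord (s t : B) (k : ℕ) :
    ρ cs (cs.wordProd (alternatingWord s t k)) (α s) =
      if Even k then U (Real.cos (Real.pi / M s t)) (k + 1) • α s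
        + U (Real.cos (Real.pi / M s t)) k • α t
      else U (Real.cos (Real.pi / M s t)) k • α s
        + U (Real.cos (Real.pi / M s t)) (k + 1) • α t := by
  rw [cs.prod_alternatingWord_eq_mul_pow]
  rcases Nat.even_or_odd' k with ⟨j, rfl | rfl⟩
  · simp [σσ_pow_left]
  · have h1 : ¬ Even (2 * j + 1) := by simp
    have h2 : (2 * j + 1) / 2 = j := by omega
    rw [if_neg h1, if_neg h1, h2, ρ_mul, map_pow, map_mul, ρ_simple, ρ_simple, σσ_pow_left,
      σ_right_comb]
    simp only [U]

/-- If `w s` is longer than `w`, then `w` sends the simple root `α s` to a nonnegative combination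
of simple roots. One strips from the right of `w` the longest possible alternating word in `s`
and a right descent `t` of `w`; what is left has neither `s` nor `t` as a descent, and the
alternating word is too short for the rank two coefficients to become negative. -/
theorem ρ_nonneg_of_length_lt (w : W) (s : B) (h : cs.length w < cs.length (w * cs.simple s)) :
    0 ≤ ρ cs w (α s) := by
  induction hn : cs.length w using Nat.strong_induction_on generalizing w s with
  | _ n ih =>
  subst hn
  by_cases hw : w = 1
  · subst hw
    simp
  obtain ⟨t, ht⟩ := cs.exists_rightDescent_of_ne_one hw
  have hst : s ≠ t := by
    rintro rfl
    exact absurd ht (not_lt.2 h.le)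
  rw [cs.isRightDescent_iff] at ht
  let P : ℕ → Prop := fun k =>
    ∃ v, w = v * cs.wordProd (alternatingWord s t k) ∧ cs.length v + k = cs.length w
  have hP1 : P 1 := ⟨w * cs.simple t, by simp [alternatingWord], ht⟩
  classical
  obtain ⟨k, hkP, hk1, hkmax⟩ : ∃ k, P k ∧ 1 ≤ k ∧ ¬ P (k + 1) := by
    have hle : 1 ≤ cs.length w := by omega
    refine ⟨Nat.findGreatest P (cs.length w), Nat.findGreatest_spec hle hP1,
      Nat.le_findGreatest hle hP1, fun hP => ?_⟩
    have h1 : Nat.findGreatest P (cs.length w) + 1 ≤ cs.length w := by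
      obtain ⟨v, -, hv⟩ := hP
      omega
    have := Nat.le_findGreatest h1 hP
    omega
  obtain ⟨v, hv, hlen⟩ := hkP
  obtain ⟨j, rfl⟩ : ∃ j, k = j + 1 := ⟨k - 1, by omega⟩
  -- The next letter to be stripped is no descent of `v`, by maximality.
  have hasc1 : cs.length v < cs.length (v * cs.simple (if Even (j + 1) then t else s)) := by
    by_contra hcon
    apply hkmax
    refine ⟨v * cs.simple (if Even (j + 1) then t else s), ?_, ?_⟩
    · rw [alternatingWord_succ', wordProd_cons, ← mul_assoc, cs.simple_mul_simple_cancel_right]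
      exact hv
    · have := cs.length_mul_simple v (if Even (j + 1) then t else s)
      omega
  -- The letter that was stripped last is no descent of `v` either.
  have hasc2 : cs.length v < cs.length (v * cs.simple (if Even j then t else s)) := by
    rw [alternatingWord_succ', wordProd_cons, ← mul_assoc] at hv
    have h1 := cs.length_mul_le (v * cs.simple (if Even j then t else s))
      (cs.wordProd (alternatingWord s t j))
    rw [← hv] at h1
    have h2 := cs.length_wordProd_le (alternatingWord s t j)
    rw [length_alternatingWord] at h2
    omega
  have hboth : cs.length v < cs.length (v * cs.simple s) ∧
      cs.length v < cs.length (v * cs.simple t) := by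
    by_cases hj : Even j
    · rw [if_pos hj] at hasc2
      rw [if_neg (by simpa [Nat.even_add_one] using hj)] at hasc1
      exact ⟨hasc1, hasc2⟩
    · rw [if_neg hj] at hasc2
      rw [if_pos (by simpa [Nat.even_add_one] using hj)] at hasc1
      exact ⟨hasc2, hasc1⟩
  have hvs := ih (cs.length v) (by omega) v s hboth.1 rfl
  have hvt := ih (cs.length v) (by omega) v t hboth.2 rfl
  -- Since `w s` is longer than `w`, the stripped word followed by `s` is still reduced.
  have hbound : M s t = 0 ∨ j + 2 ≤ M s t := by
    by_contra hcon
    push Not at hcon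
    have hsy := M.symmetric t s
    have hnr := cs.not_isReduced_alternatingWord t s (m := j + 2) (by rw [hsy]; exact hcon.1)
      (by rw [hsy]; exact hcon.2)
    apply hnr
    have e : w * cs.simple s = v * cs.wordProd (alternatingWord t s (j + 2)) := by
      rw [alternatingWord_succ, wordProd_concat, ← mul_assoc, ← hv]
    have h1 := cs.length_mul_le v (cs.wordProd (alternatingWord t s (j + 2)))
    rw [← e] at h1
    have h2 := cs.length_wordProd_le (alternatingWord t s (j + 2))
    rw [length_alternatingWord] at h2
    change cs.length _ = _
    rw [length_alternatingWord]
    omega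
  have hm1 := M.off_diagonal s t hst
  have hUa : 0 ≤ U (Real.cos (Real.pi / M s t)) (j + 1) := U_nonneg hm1 (by omega)
  have hUb : 0 ≤ U (Real.cos (Real.pi / M s t)) (j + 1 + 1) := U_nonneg hm1 (by omega)
  rw [hv, ρ_mul, ρ_alternatingWord]
  split_ifs
  · rw [map_add, map_smul, map_smul]
    exact add_nonneg (smul_nonneg hUb hvs) (smul_nonneg hUa hvt)
  · rw [map_add, map_smul, map_smul]
    exact add_nonneg (smul_nonneg hUa hvs) (smul_nonneg hUb hvt)

lemma ρ_nonpos_of_isRightDescent {w : W} {s : B} (h : cs.IsRightDescent w s) :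
    ρ cs w (α s) ≤ 0 := by
  have h1 : 0 ≤ ρ cs (w * cs.simple s) (α s) := by
    apply ρ_nonneg_of_length_lt
    rw [cs.simple_mul_simple_cancel_right]
    exact h
  rw [ρ_mul, ρ_simple, σ_self, map_neg] at h1
  exact neg_nonneg.1 h1

/-! ### Positive and negative roots -/

/-- The root system of a Coxeter group: the orbit of the simple roots. -/
def roots : Set (V B) := {v | ∃ (w : W) (s : B), v = ρ cs w (α s)}

variable {cs}

lemma simple_mem_roots (s : B) : α s ∈ roots cs := ⟨1, s, by simp⟩

lemma ρ_mem_roots (g : W) {v : V B} (hv : v ∈ roots cs) : ρ cs g v ∈ roots cs := by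
  obtain ⟨w, s, rfl⟩ := hv
  exact ⟨g * w, s, by rw [ρ_mul]⟩

lemma σ_mem_roots (s : B) {v : V B} (hv : v ∈ roots cs) : σ M s v ∈ roots cs := by
  rw [← ρ_simple cs]
  exact ρ_mem_roots _ hv

lemma form_root {v : V B} (hv : v ∈ roots cs) : form M v v = 2 := by
  obtain ⟨w, s, rfl⟩ := hv
  rw [form_ρ, form_simple_self]

lemma root_ne_zero {v : V B} (hv : v ∈ roots cs) : v ≠ 0 := by
  rintro rfl
  have := form_root hv
  simp at this

lemma neg_mem_roots {v : V B} (hv : v ∈ roots cs) : -v ∈ roots cs := by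
  obtain ⟨w, s, rfl⟩ := hv
  exact ⟨w * cs.simple s, s, by rw [ρ_mul, ρ_simple, σ_self, map_neg]⟩

lemma root_nonneg_or_nonpos {v : V B} (hv : v ∈ roots cs) : 0 ≤ v ∨ v ≤ 0 := by
  obtain ⟨w, s, rfl⟩ := hv
  by_cases h : cs.IsRightDescent w s
  · exact Or.inr (ρ_nonpos_of_isRightDescent cs h)
  · rw [cs.not_isRightDescent_iff] at h
    exact Or.inl (ρ_nonneg_of_length_lt cs w s (by omega))

/-- A simple reflection permutes the positive roots other than its own simple root. -/
lemma σ_nonneg {s : B} {v : V B} (hv : v ∈ roots cs) (h0 : 0 ≤ v) (hne : v ≠ α s) :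
    0 ≤ σ M s v := by
  refine (root_nonneg_or_nonpos (σ_mem_roots s hv)).resolve_right fun hneg => hne ?_
  have hz : ∀ t, t ≠ s → v t = 0 := fun t ht => by
    refine le_antisymm ?_ (h0 t)
    rw [← σ_coord M ht]
    exact hneg t
  have hv' : v = v s • α s := by
    ext t
    by_cases ht : t = s
    · subst ht; simp
    · simp [hz t ht, Ne.symm ht]
  have hnorm := form_root hv
  rw [hv', map_smul, map_smul, LinearMap.smul_apply, form_simple_self] at hnorm
  simp only [smul_eq_mul] at hnorm
  have h0s : 0 ≤ v s := h0 s
  have : v s = 1 := by nlinarith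
  rw [hv', this, one_smul]

variable (cs) in
/-- The inversions of `w`: the positive roots made negative by `w`. -/
def inversions (w : W) : Set (V B) := {v | v ∈ roots cs ∧ 0 ≤ v ∧ ρ cs w v ≤ 0}

lemma inversions_finite (w : W) : (inversions cs w).Finite := by
  induction w using cs.simple_induction_right with
  | one =>
    convert Set.finite_empty (α := V B)
    ext v
    simp only [inversions, Set.mem_ofPred_eq, Set.mem_empty_iff_false, iff_false]
    rintro ⟨hv, h0, h1⟩
    exact root_ne_zero hv (le_antisymm (by simpa using h1) h0)
  | mul_simple_right w s ih =>
    refine ((ih.image (σ M s)).insert (α s)).subset fun v hv => ?_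
    obtain ⟨hv, h0, h1⟩ := hv
    by_cases hne : v = α s
    · exact Or.inl hne
    · rw [ρ_mul, ρ_simple] at h1
      exact Or.inr ⟨σ M s v, ⟨σ_mem_roots s hv, σ_nonneg hv h0 hne, h1⟩, σ_σ M s v⟩

/-! ### Dominant functionals and the Tits cone -/

/-- A linear functional is dominant if it lies in the closed fundamental chamber. -/
def Dominant (y : V B →ₗ[ℝ] ℝ) : Prop := ∀ s, 0 ≤ y (α s)

/-- The simple roots on which a functional vanishes. -/
def zeros (y : V B →ₗ[ℝ] ℝ) : Set B := {s | y (α s) = 0}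

variable (cs) in
/-- A functional lies in the interior of the Tits cone: it is nonpositive on only finitely many
positive roots. -/
def InteriorTits (y : V B →ₗ[ℝ] ℝ) : Prop := {v | v ∈ roots cs ∧ 0 ≤ v ∧ y v ≤ 0}.Finite

lemma apply_eq_sum (y : V B →ₗ[ℝ] ℝ) (v : V B) : y v = v.sum fun s c => c * y (α s) := by
  conv_lhs => rw [← Finsupp.sum_single v]
  rw [Finsupp.sum, map_sum, Finsupp.sum]
  refine Finset.sum_congr rfl fun s _ => ?_
  rw [← smul_eq_mul, ← map_smul]
  simp

lemma Dominant.nonneg {y : V B →ₗ[ℝ] ℝ} (hy : Dominant y) {v : V B} (hv : 0 ≤ v) : 0 ≤ y v := by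
  rw [apply_eq_sum]
  exact Finset.sum_nonneg fun s _ => mul_nonneg (hv s) (hy s)

lemma Dominant.nonpos {y : V B →ₗ[ℝ] ℝ} (hy : Dominant y) {v : V B} (hv : v ≤ 0) : y v ≤ 0 := by
  have := hy.nonneg (neg_nonneg.2 hv)
  rw [map_neg] at this
  linarith

lemma comp_σ_of_mem_zeros {y : V B →ₗ[ℝ] ℝ} {s : B} (h : y (α s) = 0) : y ∘ₗ σ M s = y := by
  refine LinearMap.ext fun v => ?_
  rw [LinearMap.comp_apply, σ_apply, map_sub, map_smul, h]
  simp

lemma simple_mem_parabolic {T : Set B} {s : B} (hs : s ∈ T) : cs.simple s ∈ cs.parabolic T :=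
  Subgroup.subset_closure ⟨s, hs, rfl⟩

/-- The closed fundamental chamber meets each orbit at most once, and an element mapping a point
of the chamber into the chamber lies in the parabolic subgroup of that point. -/
theorem Dominant.eq_of_comp {y : V B →ₗ[ℝ] ℝ} (hy : Dominant y) (g : W)
    (hg : Dominant (y ∘ₗ ρ cs g)) : y ∘ₗ ρ cs g = y ∧ g ∈ cs.parabolic (zeros y) := by
  induction hn : cs.length g using Nat.strong_induction_on generalizing g with
  | _ n ih =>
  subst hn
  by_cases h1 : g = 1
  · subst h1
    exact ⟨by ext; simp, one_mem _⟩
  obtain ⟨s, hs⟩ := cs.exists_rightDescent_of_ne_one h1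
  have hz : (y ∘ₗ ρ cs g) (α s) = 0 :=
    le_antisymm (hy.nonpos (ρ_nonpos_of_isRightDescent cs hs)) (hg s)
  have he : y ∘ₗ ρ cs (g * cs.simple s) = y ∘ₗ ρ cs g := by
    have := comp_σ_of_mem_zeros (M := M) hz
    rw [map_mul, ρ_simple]
    exact this
  obtain ⟨h2, h3⟩ := ih _ hs (g * cs.simple s) (by rwa [he]) rfl
  rw [he] at h2
  refine ⟨h2, ?_⟩
  rw [h2] at hz
  have := mul_mem h3 (simple_mem_parabolic (cs := cs) hz)
  rwa [cs.simple_mul_simple_cancel_right] at this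

lemma comp_of_mem_parabolic {y : V B →ₗ[ℝ] ℝ} {T : Set B} (hT : T ⊆ zeros y) {g : W}
    (hg : g ∈ cs.parabolic T) : y ∘ₗ ρ cs g = y := by
  induction hg using Subgroup.closure_induction with
  | mem x hx =>
    obtain ⟨s, hs, rfl⟩ := hx
    rw [ρ_simple]
    exact comp_σ_of_mem_zeros (hT hs)
  | one => ext; simp
  | mul a b _ _ ha hb =>
    rw [map_mul, Module.End.mul_eq_comp, ← LinearMap.comp_assoc, ha, hb]
  | inv a _ ha =>
    conv_lhs => rw [← ha]
    ext; simp

lemma zeros_of_fixed {y : V B →ₗ[ℝ] ℝ} {s : B} (h : y ∘ₗ ρ cs (cs.simple s) = y) :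
    y (α s) = 0 := by
  have := congrArg (fun f : V B →ₗ[ℝ] ℝ => f (α s)) h
  simp only [LinearMap.comp_apply, ρ_simple, σ_self, map_neg] at this
  linarith

lemma InteriorTits.comp {y : V B →ₗ[ℝ] ℝ} (hy : InteriorTits cs y) (g : W) :
    InteriorTits cs (y ∘ₗ ρ cs g) := by
  refine ((inversions_finite (cs := cs) g).union (hy.image (ρ cs g⁻¹))).subset ?_
  rintro v ⟨hv, h0, h1⟩
  rcases root_nonneg_or_nonpos (ρ_mem_roots g hv) with h | h
  · exact Or.inr ⟨ρ cs g v, ⟨ρ_mem_roots g hv, h, h1⟩, by simp⟩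
  · exact Or.inl ⟨hv, h0, h⟩

/-- Every interior point of the Tits cone can be moved into the closed fundamental chamber. -/
theorem InteriorTits.exists_dominant {y : V B →ₗ[ℝ] ℝ} (hy : InteriorTits cs y) :
    ∃ g : W, Dominant (y ∘ₗ ρ cs g) := by
  -- Induction on the number of positive roots on which the functional is negative.
  induction hn : {v | v ∈ roots cs ∧ 0 ≤ v ∧ y v < 0}.ncard using Nat.strong_induction_on
    generalizing y with
  | _ n ih =>
  subst hn
  by_cases hd : Dominant y
  · exact ⟨1, by intro s; simpa using hd s⟩
  obtain ⟨s, hs⟩ : ∃ s, y (α s) < 0 := by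
    simpa [Dominant] using hd
  have hfin : {v | v ∈ roots cs ∧ 0 ≤ v ∧ y v < 0}.Finite :=
    Set.Finite.subset hy fun v hv => ⟨hv.1, hv.2.1, hv.2.2.le⟩
  have hinj : Function.Injective (σ M s) := fun u v huv => by
    rw [← σ_σ M s u, huv, σ_σ]
  have hlt : {v | v ∈ roots cs ∧ 0 ≤ v ∧ (y ∘ₗ ρ cs (cs.simple s)) v < 0}.ncard
      < {v | v ∈ roots cs ∧ 0 ≤ v ∧ y v < 0}.ncard := by
    rw [← Set.ncard_image_of_injective _ hinj]
    refine Set.ncard_lt_ncard ?_ hfin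
    rw [Set.ssubset_iff_of_subset]
    · refine ⟨α s, ⟨simple_mem_roots s, by simp, hs⟩, ?_⟩
      rintro ⟨v, ⟨-, h0, -⟩, hv⟩
      have : v = -α s := by rw [← σ_σ M s v, hv, σ_self]
      rw [this] at h0
      have := h0 s
      simp at this
      linarith
    · rintro _ ⟨v, ⟨hv, h0, h1⟩, rfl⟩
      rw [LinearMap.comp_apply, ρ_simple] at h1
      refine ⟨σ_mem_roots s hv, σ_nonneg hv h0 ?_, h1⟩
      rintro rfl
      rw [σ_self, map_neg] at h1
      linarith
  obtain ⟨g, hg⟩ := ih _ hlt (hy.comp (cs.simple s)) rfl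
  refine ⟨cs.simple s * g, ?_⟩
  rwa [map_mul, Module.End.mul_eq_comp, ← LinearMap.comp_assoc]

/-- A dominant functional in the interior of the Tits cone has a finite stabilizer: the stabilizer
acts faithfully on the finite set of roots at which the functional vanishes. -/
theorem InteriorTits.isSpherical [Finite B] {y : V B →ₗ[ℝ] ℝ} (hy : InteriorTits cs y)
    (hd : Dominant y) : cs.IsSpherical (zeros y) := by
  have hR : {v | v ∈ roots cs ∧ y v = 0}.Finite := by
    have h1 : {v | v ∈ roots cs ∧ 0 ≤ v ∧ y v ≤ 0}.Finite := hy
    refine (h1.union (h1.image (fun v => -v))).subset ?_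
    rintro v ⟨hv, h0⟩
    rcases root_nonneg_or_nonpos hv with h | h
    · exact Or.inl ⟨hv, h, h0.le⟩
    · exact Or.inr ⟨-v, ⟨neg_mem_roots hv, neg_nonneg.2 h, by simp [h0]⟩, neg_neg v⟩
  have := hR.to_subtype
  have hfix : ∀ g : cs.parabolic (zeros y), y ∘ₗ ρ cs g = y := fun g =>
    comp_of_mem_parabolic subset_rfl g.2
  let f : cs.parabolic (zeros y) → zeros y → {v | v ∈ roots cs ∧ y v = 0} := fun g s =>
    ⟨ρ cs g (α s), ρ_mem_roots _ (simple_mem_roots _), by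
      have := congrArg (fun f : V B →ₗ[ℝ] ℝ => f (α s)) (hfix g)
      simp only [LinearMap.comp_apply] at this
      exact this.trans s.2⟩
  refine Finite.of_injective f fun g h hgh => ?_
  by_contra hne
  have hne1 : (h⁻¹ * g : W) ≠ 1 := fun h1 => hne (Subtype.ext (inv_mul_eq_one.1 h1).symm)
  obtain ⟨s, hs⟩ := cs.exists_rightDescent_of_ne_one hne1
  have hneg := ρ_nonpos_of_isRightDescent cs hs
  have hys : y (α s) = 0 := by
    refine le_antisymm ?_ (hd s)
    have h1 := congrArg (fun f : V B →ₗ[ℝ] ℝ => f (α s)) (hfix (h⁻¹ * g))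
    simp only [LinearMap.comp_apply] at h1
    rw [← h1]
    exact hd.nonpos hneg
  have h2 : ρ cs g (α s) = ρ cs h (α s) :=
    congrArg Subtype.val (congrFun hgh ⟨s, hys⟩)
  rw [ρ_mul, h2, Subgroup.coe_inv, ρ_inv_self] at hneg
  have := hneg s
  simp at this
  linarith

/-- The functional vanishing on the simple roots in `T` and equal to `1` on the others. -/
noncomputable def ind (T : Set B) : V B →ₗ[ℝ] ℝ :=
  Finsupp.linearCombination ℝ (Tᶜ.indicator 1)

lemma ind_of_mem {T : Set B} {s : B} (h : s ∈ T) : ind T (α s) = 0 := by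
  simp [ind, h]

lemma ind_of_notMem {T : Set B} {s : B} (h : s ∉ T) : ind T (α s) = 1 := by
  simp [ind, h]

lemma ind_dominant (T : Set B) : Dominant (ind T) := by
  intro s
  by_cases h : s ∈ T
  · rw [ind_of_mem h]
  · rw [ind_of_notMem h]; norm_num

lemma zeros_ind (T : Set B) : zeros (ind T) = T := by
  ext s
  by_cases h : s ∈ T
  · simp [zeros, ind_of_mem h, h]
  · simp [zeros, ind_of_notMem h, h]

/-- Every root has a reflection in the group. -/
lemma exists_reflection {v : V B} (hv : v ∈ roots cs) :
    ∃ r : W, ∀ u, ρ cs r u = u - form M v u • v := by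
  obtain ⟨w, s, rfl⟩ := hv
  refine ⟨w * cs.simple s * w⁻¹, fun u => ?_⟩
  have h : form M (ρ cs w (α s)) u = form M (α s) (ρ cs w⁻¹ u) := by
    rw [← form_ρ cs w (α s), ρ_self_inv]
  rw [ρ_mul, ρ_mul, ρ_simple, σ_apply, map_sub, map_smul, ρ_self_inv, h]

/-- If `T` is spherical, then `ind T` lies in the interior of the Tits cone: the positive roots on
which it vanishes have their reflections in the finite group `W_T`, and distinct positive roots
have distinct reflections. -/
lemma interiorTits_ind {T : Set B} (hT : cs.IsSpherical T) : InteriorTits cs (ind T) := by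
  have hfin : Finite (cs.parabolic T) := hT
  have key : ∀ v : {v | v ∈ roots cs ∧ 0 ≤ v ∧ ind T v ≤ 0}, ∃ r : cs.parabolic T,
      ∀ u, ρ cs r u = u - form M v.1 u • v.1 := by
    rintro ⟨v, hv, h0, h1⟩
    obtain ⟨r, hr⟩ := exists_reflection hv
    have hz : ind T v = 0 := le_antisymm h1 ((ind_dominant T).nonneg h0)
    have he : ind T ∘ₗ ρ cs r = ind T := by
      refine LinearMap.ext fun u => ?_
      rw [LinearMap.comp_apply, hr, map_sub, map_smul, hz]
      simp
    have := ((ind_dominant T).eq_of_comp r (by rw [he]; exact ind_dominant T)).2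
    rw [zeros_ind] at this
    exact ⟨⟨r, this⟩, hr⟩
  choose f hf using key
  rw [InteriorTits, ← Set.finite_coe_iff]
  refine Finite.of_injective f fun a b hab => ?_
  obtain ⟨a, ha, ha0, ha1⟩ := a
  obtain ⟨b, hb, hb0, hb1⟩ := b
  have h1 := hf ⟨a, ha, ha0, ha1⟩ a
  rw [hab, hf] at h1
  simp only [form_root ha] at h1
  have h2 : form M b a • b = (2 : ℝ) • a := by
    have : a - (a - form M b a • b) = a - (a - (2 : ℝ) • a) := by rw [h1]
    simpa using this
  have h3 : a = (form M b a / 2) • b := by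
    rw [div_eq_inv_mul, mul_smul, h2, smul_smul]; norm_num
  set c := form M b a / 2 with hc
  have h4 := form_root ha
  rw [h3, map_smul, map_smul, LinearMap.smul_apply, form_root hb] at h4
  simp only [smul_eq_mul] at h4
  have hcc : (c - 1) * (c + 1) = 0 := by linarith
  rcases mul_eq_zero.1 hcc with hc1 | hc1
  · have : c = 1 := by linarith
    rw [this, one_smul] at h3
    exact Subtype.ext h3
  · have : c = -1 := by linarith
    rw [this, neg_one_smul] at h3
    exact absurd (le_antisymm (neg_nonneg.1 (h3 ▸ ha0)) hb0) (root_ne_zero hb)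

/-! ### Finite subgroups and maximal spherical subsets -/

lemma InteriorTits.segment {y z : V B →ₗ[ℝ] ℝ} (hy : InteriorTits cs y) (hz : InteriorTits cs z)
    {a b : ℝ} (ha : 0 ≤ a) (hb : 0 ≤ b) (hab : 0 < a + b) : InteriorTits cs (a • y + b • z) := by
  refine (Set.Finite.union hy hz).subset ?_
  rintro v ⟨hv, h0, h1⟩
  by_contra hcon
  have hy0 : 0 < y v := by
    by_contra h
    exact hcon (Or.inl ⟨hv, h0, not_lt.1 h⟩)
  have hz0 : 0 < z v := by
    by_contra h
    exact hcon (Or.inr ⟨hv, h0, not_lt.1 h⟩)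
  simp only [LinearMap.add_apply, LinearMap.smul_apply, smul_eq_mul] at h1
  rcases ha.lt_or_eq with h | h
  · nlinarith [mul_pos h hy0, mul_nonneg hb hz0.le]
  · nlinarith [mul_nonneg ha hy0.le, mul_pos (show 0 < b by linarith) hz0]

/-- A finite subgroup fixes an interior point of the Tits cone, namely the average of the orbit of
a point in the open fundamental chamber. -/
lemma exists_fixed (G : Subgroup W) [Finite G] :
    ∃ y : V B →ₗ[ℝ] ℝ, InteriorTits cs y ∧ ∀ g ∈ G, y ∘ₗ ρ cs g = y := by
  have := Fintype.ofFinite G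
  refine ⟨∑ g : G, ind ∅ ∘ₗ ρ cs g, ?_, ?_⟩
  · refine (Set.finite_iUnion fun g : G => inversions_finite (cs := cs) g).subset ?_
    rintro v ⟨hv, h0, h1⟩
    by_contra hcon
    simp only [Set.mem_iUnion, not_exists] at hcon
    refine absurd h1 (not_le.2 ?_)
    rw [LinearMap.sum_apply]
    refine Finset.sum_pos (fun g _ => ?_) ⟨1, Finset.mem_univ _⟩
    have hr := ρ_mem_roots (g : W) hv
    have hpos : 0 ≤ ρ cs g v := (root_nonneg_or_nonpos hr).resolve_right fun h =>
      hcon g ⟨hv, h0, h⟩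
    obtain ⟨s, hs⟩ := Finsupp.ne_iff.1 (root_ne_zero hr)
    rw [LinearMap.comp_apply, apply_eq_sum]
    refine Finset.sum_pos (fun t ht => ?_) ⟨s, by simpa using hs⟩
    change 0 < _ * ind ∅ (α t)
    rw [ind_of_notMem (Set.notMem_empty t), mul_one]
    exact lt_of_le_of_ne (hpos t) (Ne.symm (by simpa using ht))
  · intro h hh
    refine LinearMap.ext fun v => ?_
    simp only [LinearMap.comp_apply, LinearMap.sum_apply]
    refine Fintype.sum_equiv (Equiv.mulRight (⟨h, hh⟩ : G)) _ _ fun g => ?_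
    simp

lemma mem_conjSubgroup {G : Type*} [Group G] {g x : G} {H : Subgroup G} :
    x ∈ conjSubgroup g H ↔ g⁻¹ * x * g ∈ H := by
  constructor
  · rintro ⟨h, hh, rfl⟩
    simpa [mul_assoc] using hh
  · intro h
    exact ⟨_, h, by simp [mul_assoc]⟩

/-- Every finite subgroup is contained in a conjugate of a finite standard parabolic subgroup. -/
theorem finite_le_conj [Finite B] (G : Subgroup W) [Finite G] :
    ∃ (U : Set B) (g : W), cs.IsSpherical U ∧ G ≤ conjSubgroup g (cs.parabolic U) := by
  obtain ⟨x, hx, hfix⟩ := exists_fixed (cs := cs) G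
  obtain ⟨g, hg⟩ := hx.exists_dominant
  refine ⟨zeros (x ∘ₗ ρ cs g), g, (hx.comp g).isSpherical hg, fun h hh => ?_⟩
  rw [mem_conjSubgroup]
  refine (hg.eq_of_comp (g⁻¹ * h * g) ?_).2
  have e : (x ∘ₗ ρ cs g) ∘ₗ ρ cs (g⁻¹ * h * g) = x ∘ₗ ρ cs g := by
    refine LinearMap.ext fun v => ?_
    have := congrArg (fun f : V B →ₗ[ℝ] ℝ => f (ρ cs g v)) (hfix h hh)
    simpa using this
  rwa [e]

/-- If `T` is maximal spherical, every fixed point of `W_T` in the interior of the Tits cone is in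
the relative interior of the face of type `T` of the fundamental chamber. Otherwise, the first
point where the segment from `ind T` leaves that face would have a strictly larger, and still
finite, parabolic stabilizer. -/
lemma fixed_dominant [Finite B] {T : Set B} (hT : cs.IsMaxSpherical T) {x : V B →ₗ[ℝ] ℝ}
    (hx : InteriorTits cs x) (hfix : ∀ g ∈ cs.parabolic T, x ∘ₗ ρ cs g = x) :
    Dominant x ∧ zeros x = T := by
  have hxT : ∀ s ∈ T, x (α s) = 0 := fun s hs =>
    zeros_of_fixed (hfix _ (simple_mem_parabolic hs))
  by_cases hpos : ∀ s, s ∉ T → 0 < x (α s)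
  · refine ⟨fun s => ?_, Set.ext fun s => ⟨fun hs => ?_, hxT s⟩⟩
    · by_cases hs : s ∈ T
      · rw [hxT s hs]
      · exact (hpos s hs).le
    · by_contra hs'
      exact (hpos s hs').ne' hs
  exfalso
  push Not at hpos
  obtain ⟨s₀, hs₀, hneg₀⟩ := hpos
  -- With `a` minus the least value of `x` on simple roots outside `T`, the functional
  -- `a • ind T + x` is, up to scaling, the point where the segment leaves the face.
  obtain ⟨s, hs, hmin⟩ := Set.exists_min_image {s | s ∉ T} (fun s => x (α s)) (Set.toFinite _)
    ⟨s₀, hs₀⟩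
  have hneg : x (α s) ≤ 0 := (hmin s₀ hs₀).trans hneg₀
  set a := -x (α s) with ha
  have ha0 : 0 ≤ a := by linarith
  set z := a • ind T + (1 : ℝ) • x with hz
  have hzI : InteriorTits cs z :=
    (interiorTits_ind hT.1).segment hx ha0 zero_le_one (by linarith)
  have hzT : ∀ t ∈ T, z (α t) = 0 := fun t ht => by
    simp [hz, ind_of_mem ht, hxT t ht]
  have hzn : ∀ t, t ∉ T → z (α t) = a + x (α t) := fun t ht => by
    simp [hz, ind_of_notMem ht]
  have hzD : Dominant z := fun t => by
    by_cases ht : t ∈ T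
    · rw [hzT t ht]
    · rw [hzn t ht]
      have := hmin t ht
      linarith
  have hsz : s ∈ zeros z := by
    change z (α s) = 0
    rw [hzn s hs, ha]
    ring
  have heq := hT.2 (zeros z) (hzI.isSpherical hzD) hzT
  rw [heq] at hsz
  exact hs hsz

/-- A maximal spherical parabolic subgroup is not contained in any other conjugate of a finite
standard parabolic subgroup. -/
theorem eq_of_le_conj [Finite B] {T U : Set B} (hT : cs.IsMaxSpherical T)
    (hU : cs.IsSpherical U) {h : W} (hle : cs.parabolic T ≤ conjSubgroup h (cs.parabolic U)) :
    T = U ∧ cs.parabolic T = conjSubgroup h (cs.parabolic U) := by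
  obtain ⟨hd, hz⟩ := fixed_dominant hT ((interiorTits_ind hU).comp h⁻¹) fun g hg => by
    have h1 := comp_of_mem_parabolic (zeros_ind U).ge (mem_conjSubgroup.1 (hle hg))
    refine LinearMap.ext fun v => ?_
    have := congrArg (fun f : V B →ₗ[ℝ] ℝ => f (ρ cs h⁻¹ v)) h1
    simpa using this
  obtain ⟨h1, h2⟩ := (ind_dominant U).eq_of_comp h⁻¹ hd
  rw [h1, zeros_ind] at hz
  rw [zeros_ind] at h2
  subst hz
  have h3 : h ∈ cs.parabolic U := by simpa using inv_mem h2
  refine ⟨rfl, le_antisymm hle fun g hg => ?_⟩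
  have := mul_mem (mul_mem h3 (mem_conjSubgroup.1 hg)) h2
  simpa [mul_assoc] using this

lemma exists_maxSpherical [Finite B] {U : Set B} (hU : cs.IsSpherical U) :
    ∃ T, cs.IsMaxSpherical T ∧ U ⊆ T := by
  obtain ⟨T, hUT, hT⟩ := (Set.toFinite {T : Set B | cs.IsSpherical T}).exists_le_maximal hU
  exact ⟨T, ⟨hT.1, fun T' hT' h => (hT.2 hT' h).antisymm h⟩, hUT⟩

lemma parabolic_mono {T U : Set B} (h : T ⊆ U) : cs.parabolic T ≤ cs.parabolic U :=
  Subgroup.closure_mono (Set.image_mono h)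

end Roots

end CoxTits

open CoxTits in
/-- If `φ : W → W'` is an isomorphism of Coxeter groups, then for each maximal spherical
subset `T ⊆ S` there is a unique maximal spherical subset `T' ⊆ S'` such that
`φ(W_T) = w' W'_{T'} w'⁻¹` for some `w' ∈ W'`. -/
theorem exists_unique_maxSpherical_conj {B B' : Type*} [Fintype B] [Fintype B']
    {W W' : Type*} [Group W] [Group W']
    {M : CoxeterMatrix B} (cs : CoxeterSystem M W)
    {M' : CoxeterMatrix B'} (cs' : CoxeterSystem M' W')
    (φ : W ≃* W') (T : Set B) (hT : cs.IsMaxSpherical T) :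
    ∃! T' : Set B', cs'.IsMaxSpherical T' ∧
      ∃ w' : W', Subgroup.map φ.toMonoidHom (cs.parabolic T)
        = conjSubgroup w' (cs'.parabolic T') := by
  have hfin : Finite (cs.parabolic T) := hT.1
  have hfin1 : Finite (Subgroup.map φ.toMonoidHom (cs.parabolic T)) :=
    inferInstanceAs (Finite (φ.toMonoidHom '' (cs.parabolic T : Set W)))
  obtain ⟨U, g, hU, hle⟩ := finite_le_conj (cs := cs')
    (Subgroup.map φ.toMonoidHom (cs.parabolic T))
  obtain ⟨T', hT', hUT'⟩ := exists_maxSpherical hU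
  have hle' : Subgroup.map φ.toMonoidHom (cs.parabolic T) ≤ conjSubgroup g (cs'.parabolic T') :=
    hle.trans (Subgroup.map_mono (parabolic_mono hUT'))
  refine ⟨T', ⟨hT', g, le_antisymm hle' ?_⟩, ?_⟩
  -- Pulled back to `W`, this conjugate is trapped between `W_T` and a conjugate of a finite
  -- standard parabolic subgroup, which must be `W_T` by maximality.
  · have hfin' : Finite (cs'.parabolic T') := hT'.1
    have hfin2 : Finite (conjSubgroup g (cs'.parabolic T')) :=
      inferInstanceAs (Finite ((MulAut.conj g).toMonoidHom '' (cs'.parabolic T' : Set W')))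
    have hfin3 : Finite (Subgroup.map φ.symm.toMonoidHom (conjSubgroup g (cs'.parabolic T'))) :=
      inferInstanceAs (Finite (φ.symm.toMonoidHom ''
        (conjSubgroup g (cs'.parabolic T') : Set W')))
    obtain ⟨X, h, hX, hle2⟩ := finite_le_conj (cs := cs)
      (Subgroup.map φ.symm.toMonoidHom (conjSubgroup g (cs'.parabolic T')))
    have hle3 : cs.parabolic T ≤ conjSubgroup h (cs.parabolic X) := fun w hw =>
      hle2 ⟨φ w, hle' ⟨w, hw, rfl⟩, by simp⟩
    have heq := (eq_of_le_conj hT hX hle3).2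
    intro w' hw'
    refine ⟨φ.symm w', ?_, by simp⟩
    have : φ.symm w' ∈ conjSubgroup h (cs.parabolic X) := hle2 ⟨w', hw', rfl⟩
    rw [← heq] at this
    exact this
  · rintro T₂ ⟨hT₂, g₂, hg₂⟩
    refine (eq_of_le_conj hT₂ hT'.1 (h := g₂⁻¹ * g) fun w hw => ?_).1
    have h1 : g₂ * w * g₂⁻¹ ∈ conjSubgroup g (cs'.parabolic T') := by
      apply hle'
      rw [hg₂, mem_conjSubgroup]
      simpa [mul_assoc] using hw
    rw [mem_conjSubgroup] at h1 ⊢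
    simpa [mul_assoc] using h1
end

section
/- Let (W,S) be a Coxeter system satisfying: (0) for all s,t ∈ S with m(s,t) even, m(s,t) = 2; (1) for all s ≠ t ∈ S with m(s,t) odd, {s,t} is a maximal spherical subset of S. Let w, v, x ∈ W, and let w = s_1⋯s_l and v = t_1⋯t_m (s_i, t_j ∈ S) be reduced representations (i.e., ℓ(w) = l and ℓ(v) = m). Suppose that the parabolic subgroup W_{{s_1,…,s_l}} is isomorphic to (ℤ/2ℤ)^l, that W_{{t_1,…,t_m}} is isomorphic to (ℤ/2ℤ)^m, and that l ≥ 2. If w = x v x^{-1}, then w = v. -/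
namespace CoxeterSystem

variable {B W : Type*} [Group W] {M : CoxeterMatrix B} (cs : CoxeterSystem M W)

theorem end_mul_apply {α : Type*} (f g : Function.End α) (a : α) : (f * g) a = f (g a) := rfl

/-! ### The signed reflection action and the exchange condition -/

open Classical in
/-- The action of the simple reflection `s i` on signed elements:
`(t, ε) ↦ (s i * t * s i, ε + [t = s i])`. It is defined on all of `W × ZMod 2`, which avoids
carrying a proof that `t` is a reflection. -/
noncomputable def signedAct (i : B) : Function.End (W × ZMod 2) :=
  fun p => (cs.simple i * p.1 * cs.simple i, p.2 + if p.1 = cs.simple i then 1 else 0)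

theorem pow_mul_simple_mul_pow (i j : B) (k : ℕ) :
    (cs.simple i * cs.simple j) ^ k * cs.simple j * (cs.simple i * cs.simple j) ^ k
      = cs.simple j := by
  induction k with
  | zero => simp
  | succ k ih =>
    have h : (cs.simple i * cs.simple j) * cs.simple j * (cs.simple i * cs.simple j)
        = cs.simple j := by simp [mul_assoc]
    calc _ = (cs.simple i * cs.simple j) ^ k * ((cs.simple i * cs.simple j) * cs.simple j *
          (cs.simple i * cs.simple j)) * (cs.simple i * cs.simple j) ^ k := by
            rw [pow_succ]
            nth_rewrite 2 [← pow_succ]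
            rw [pow_succ']
            simp only [mul_assoc]
      _ = _ := by rw [h, ih]

open Classical in
/-- With `c = s i * s j`, the sign changes along the `2 k` steps of `(s i * s j) ^ k` occur exactly
at the indices `n` with `c ^ n * t = s j`. -/
theorem signedAct_mul_pow (i j : B) (k : ℕ) (t : W) (ε : ZMod 2) :
    ((cs.signedAct i * cs.signedAct j) ^ k) (t, ε) =
      ((cs.simple i * cs.simple j) ^ k * t * ((cs.simple i * cs.simple j) ^ k)⁻¹,
        ε + ∑ n ∈ Finset.range (2 * k),
          if (cs.simple i * cs.simple j) ^ n * t = cs.simple j then 1 else 0) := by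
  induction k with
  | zero => simp [Function.End.one_def]
  | succ k ih =>
    rw [pow_succ', end_mul_apply, ih, end_mul_apply]
    have key := cs.pow_mul_simple_mul_pow i j k
    set c := cs.simple i * cs.simple j with hc
    have e1 : (c ^ k * t * (c ^ k)⁻¹ = cs.simple j) ↔ (c ^ (2 * k) * t = cs.simple j) := by
      rw [mul_inv_eq_iff_eq_mul, two_mul, pow_add, mul_assoc (c ^ k) (c ^ k) t]
      nth_rewrite 2 [← key]
      rw [mul_assoc (c ^ k) (cs.simple j), mul_right_inj]
    have e2 : (cs.simple j * (c ^ k * t * (c ^ k)⁻¹) * cs.simple j = cs.simple i) ↔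
        (c ^ (2 * k + 1) * t = cs.simple j) := by
      have : (cs.simple j * (c ^ k * t * (c ^ k)⁻¹) * cs.simple j = cs.simple i) ↔
          c * (c ^ k * t * (c ^ k)⁻¹) = cs.simple j := by
        rw [← mul_right_inj (cs.simple i), hc, cs.simple_mul_simple_self,
          ← mul_left_inj (cs.simple j)]
        simp only [mul_assoc, cs.simple_mul_simple_self, mul_one, one_mul]
      rw [this, ← mul_assoc, ← mul_assoc, mul_inv_eq_iff_eq_mul, ← pow_succ',
        show 2 * k + 1 = k + (k + 1) by ring, pow_add c k (k + 1), mul_assoc (c ^ k) (c ^ (k + 1)) t]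
      nth_rewrite 2 [← key]
      rw [mul_assoc (c ^ k) (cs.simple j), mul_right_inj]
    ext
    · simp [signedAct, pow_succ', hc, mul_assoc]
    · simp only [signedAct, e1, e2]
      rw [show 2 * (k + 1) = 2 * k + 1 + 1 by ring, Finset.sum_range_succ, Finset.sum_range_succ]
      ring

theorem isLiftable_signedAct : M.IsLiftable cs.signedAct := by
  classical
  intro i j
  funext ⟨t, ε⟩
  rw [signedAct_mul_pow, two_mul, Finset.sum_range_add]
  simp only [pow_add, cs.simple_mul_simple_pow, one_mul, inv_one, mul_one, Function.End.one_def, id]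
  -- The sum over `2 m` indices is twice the sum over one period, hence zero modulo 2.
  rw [CharTwo.add_self_eq_zero, add_zero]

/-- The signed reflection action of `W`. -/
noncomputable def signedHom : W →* Function.End (W × ZMod 2) :=
  cs.lift ⟨cs.signedAct, cs.isLiftable_signedAct⟩

open Classical in
theorem signedHom_wordProd (ω : List B) (t : W) (ε : ZMod 2) :
    cs.signedHom (cs.wordProd ω) (t, ε) =
      (cs.wordProd ω * t * (cs.wordProd ω)⁻¹, ε + ((cs.rightInvSeq ω).count t : ℕ)) := by
  induction ω with
  | nil => simp [Function.End.one_def]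
  | cons i ω ih =>
    rw [wordProd_cons, map_mul, end_mul_apply, ih]
    have h : cs.signedHom (cs.simple i) = cs.signedAct i := cs.lift_apply_simple _ i
    have e : (cs.wordProd ω * t * (cs.wordProd ω)⁻¹ = cs.simple i) ↔
        ((cs.wordProd ω)⁻¹ * cs.simple i * cs.wordProd ω = t) := by
      constructor
      · intro h
        rw [← h]; group
      · intro h
        rw [← h]; group
    rw [h]
    ext
    · simp [signedAct, mul_assoc]
    · simp only [signedAct, rightInvSeq, List.count_cons, e, beq_iff_eq]
      split_ifs <;> push_cast <;> ring

/-- A right descent occurs in the right inversion sequence of every word for the element: the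
parity of its multiplicity depends only on the element, and it is one for a reduced word ending in
that descent. -/
theorem simple_mem_rightInvSeq (ω : List B) (i : B)
    (h : cs.length (cs.wordProd ω * cs.simple i) < cs.length (cs.wordProd ω)) :
    cs.simple i ∈ cs.rightInvSeq ω := by
  classical
  obtain ⟨α, hα, hα'⟩ := cs.exists_isReduced (cs.wordProd ω * cs.simple i)
  have hp : cs.wordProd (α.concat i) = cs.wordProd ω := by
    rw [wordProd_concat, ← hα']; simp
  have hred : cs.IsReduced (α.concat i) := by
    unfold IsReduced at *
    have h2 := cs.length_mul_simple (cs.wordProd ω) i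
    rw [hp]
    rw [hα', hα] at h h2
    simp only [List.concat_eq_append, List.length_append, List.length_singleton]
    omega
  have hmem : cs.simple i ∈ cs.rightInvSeq (α.concat i) := by
    rw [rightInvSeq_concat]; simp
  have hcount := List.count_eq_one_of_mem hred.nodup_rightInvSeq hmem
  have e1 := cs.signedHom_wordProd (α.concat i) (cs.simple i) 0
  rw [hp, signedHom_wordProd, hcount] at e1
  have e2 := congrArg Prod.snd e1
  simp only [zero_add] at e2
  by_contra hn
  rw [List.count_eq_zero_of_not_mem hn] at e2
  simp at e2

/-- The exchange condition. -/
theorem exchange_left (ω : List B) (i : B)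
    (h : cs.length (cs.simple i * cs.wordProd ω) < cs.length (cs.wordProd ω)) :
    ∃ j, j < ω.length ∧ cs.simple i * cs.wordProd ω = cs.wordProd (ω.eraseIdx j) := by
  have h1 : cs.simple i ∈ cs.rightInvSeq ω.reverse := by
    apply cs.simple_mem_rightInvSeq
    rw [wordProd_reverse, cs.length_inv, ← cs.length_inv]
    simpa using h
  rw [rightInvSeq_reverse, List.mem_reverse] at h1
  obtain ⟨j, hj, hji⟩ := List.mem_iff_getElem.mp h1
  refine ⟨j, by simpa using hj, ?_⟩
  rw [← cs.getD_leftInvSeq_mul_wordProd, List.getD_eq_getElem _ 1 hj, hji]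

/-- The exchange condition for a product `u * q`: the letter is removed either from `u` or
from `q`. -/
theorem exchange_mul (u q : W) (i : B)
    (h : cs.length (cs.simple i * (u * q)) < cs.length (u * q)) :
    cs.length (cs.simple i * u) < cs.length u ∨
      ∃ q', cs.length q' < cs.length q ∧ cs.simple i * (u * q) = u * q' := by
  obtain ⟨α, hα, rfl⟩ := cs.exists_isReduced u
  obtain ⟨β, hβ, rfl⟩ := cs.exists_isReduced q
  rw [← wordProd_append] at h
  obtain ⟨j, hj, he⟩ := cs.exchange_left _ _ h
  rw [List.length_append] at hj
  by_cases hjα : j < α.length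
  · left
    rw [List.eraseIdx_append_of_lt_length hjα, wordProd_append, wordProd_append, ← mul_assoc,
      mul_left_inj] at he
    rw [he, hα.eq]
    have h1 := cs.length_wordProd_le (α.eraseIdx j)
    have h2 := List.length_eraseIdx_add_one hjα
    omega
  · right
    rw [List.eraseIdx_append_of_length_le (by omega), wordProd_append, wordProd_append] at he
    refine ⟨_, ?_, he⟩
    rw [hβ.eq]
    have h1 := cs.length_wordProd_le (β.eraseIdx (j - α.length))
    have h2 := List.length_eraseIdx_add_one (l := β) (i := j - α.length) (by omega)
    omega

/-! ### Descents and finite parabolic subgroups -/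

theorem exists_reduced_word_of_mem_parabolic (T : Set B) (z : W) (hz : z ∈ cs.parabolic T) :
    ∃ α : List B, (∀ i ∈ α, i ∈ T) ∧ cs.IsReduced α ∧ z = cs.wordProd α := by
  have step : ∀ i ∈ T, ∀ z, (∃ α : List B, (∀ i ∈ α, i ∈ T) ∧ cs.IsReduced α ∧ z = cs.wordProd α) →
      ∃ α : List B, (∀ i ∈ α, i ∈ T) ∧ cs.IsReduced α ∧ cs.simple i * z = cs.wordProd α := by
    rintro i hi _ ⟨α, hαT, hα, rfl⟩
    rcases cs.length_simple_mul (cs.wordProd α) i with h | h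
    · refine ⟨i :: α, by simpa using ⟨hi, hαT⟩, ?_, (cs.wordProd_cons i α).symm⟩
      rw [IsReduced, wordProd_cons, h, hα.eq, List.length_cons]
    · obtain ⟨j, hj, he⟩ := cs.exchange_left α i (by omega)
      refine ⟨α.eraseIdx j, fun k hk => hαT k (List.mem_of_mem_eraseIdx hk), ?_, he⟩
      have h2 := List.length_eraseIdx_add_one hj
      rw [IsReduced, ← he]
      rw [hα.eq] at h
      omega
  induction hz using Subgroup.closure_induction_left with
  | one => exact ⟨[], by simp, by simp [IsReduced], by simp⟩
  | mul_left a ha y hy ih =>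
    obtain ⟨i, hi, rfl⟩ := ha
    exact step i hi y ih
  | inv_mul_cancel a ha y hy ih =>
    obtain ⟨i, hi, rfl⟩ := ha
    rw [inv_simple]
    exact step i hi y ih

/-- If all elements of `T` are left descents of `y`, then every reduced word in `T` is an initial
segment of a reduced word for `y`. -/
theorem exists_prefix_of_leftDescent (T : Set B) (y : W)
    (hT : ∀ i ∈ T, cs.length (cs.simple i * y) < cs.length y) (α : List B)
    (hαT : ∀ i ∈ α, i ∈ T) (hα : cs.IsReduced α) :
    ∃ q, y = cs.wordProd α * q ∧ α.length + cs.length q ≤ cs.length y := by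
  induction α with
  | nil => exact ⟨y, by simp, by simp⟩
  | cons i α ih =>
    have hα' : cs.IsReduced α := by simpa using hα.drop 1
    obtain ⟨q, hq, hlen⟩ := ih (fun k hk => hαT k (List.mem_cons_of_mem _ hk)) hα'
    have hd := hT i (hαT i (by simp))
    rw [hq] at hd
    rcases cs.exchange_mul _ _ _ hd with h | ⟨q', hq', he⟩
    · rw [← wordProd_cons, hα.eq, hα'.eq, List.length_cons] at h
      omega
    · refine ⟨q', ?_, ?_⟩
      · rw [wordProd_cons, mul_assoc, ← he, cs.simple_mul_simple_cancel_left, ← hq]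
      · rw [List.length_cons]; omega

theorem finite_parabolic_of_leftDescent [Finite B] (T : Set B) (y : W)
    (hT : ∀ i ∈ T, cs.length (cs.simple i * y) < cs.length y) : cs.IsSpherical T := by
  have hfin : Set.Finite (cs.wordProd '' {l : List B | l.length ≤ cs.length y}) :=
    (List.finite_length_le B _).image _
  refine Set.Finite.subset hfin ?_
  intro z hz
  obtain ⟨α, hαT, hα, rfl⟩ := cs.exists_reduced_word_of_mem_parabolic T z hz
  obtain ⟨q, -, hlen⟩ := cs.exists_prefix_of_leftDescent T y hT α hαT hα
  exact ⟨α, by simp only [Set.mem_ofPred_eq]; omega, rfl⟩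

/-! ### Products of commuting simple reflections -/

theorem commute_wordProd (a : W) (α : List B) (h : ∀ i ∈ α, Commute a (cs.simple i)) :
    Commute a (cs.wordProd α) := by
  apply Commute.list_prod_right
  simpa using h

theorem length_wordProd_mul_of_commute (x : W) (α : List B) (hα : cs.IsReduced α)
    (hc : ∀ i ∈ α, ∀ j ∈ α, Commute (cs.simple i) (cs.simple j))
    (hx : ∀ i ∈ α, ¬ cs.length (cs.simple i * x) < cs.length x) :
    cs.length (cs.wordProd α * x) = α.length + cs.length x := by
  induction α with
  | nil => simp
  | cons i α ih =>
    have hα' : cs.IsReduced α := by simpa using hα.drop 1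
    have ih' := ih hα' (fun a ha b hb => hc a (by simp [ha]) b (by simp [hb]))
      (fun a ha => hx a (by simp [ha]))
    rw [wordProd_cons, mul_assoc]
    rcases cs.length_simple_mul (cs.wordProd α * x) i with h | h
    · rw [h, ih', List.length_cons]; omega
    · exfalso
      rcases cs.exchange_mul (cs.wordProd α) x i (by omega) with h | ⟨q', hq', he⟩
      · rw [← wordProd_cons, hα.eq, hα'.eq, List.length_cons] at h
        omega
      · have hcomm := cs.commute_wordProd (cs.simple i) α
          (fun j hj => hc i (by simp) j (by simp [hj]))
        rw [← mul_assoc, hcomm.eq, mul_assoc, mul_right_inj] at he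
        exact hx i (by simp) (he ▸ hq')

theorem nodup_of_commute (α : List B) (hα : cs.IsReduced α)
    (hc : ∀ i ∈ α, ∀ j ∈ α, Commute (cs.simple i) (cs.simple j)) : α.Nodup := by
  induction α with
  | nil => simp
  | cons i α ih =>
    have hα' : cs.IsReduced α := by simpa using hα.drop 1
    refine List.nodup_cons.mpr ⟨fun hi => ?_,
      ih hα' (fun a ha b hb => hc a (by simp [ha]) b (by simp [hb]))⟩
    -- A repeated letter could be moved to the front of `α` and cancelled.
    obtain ⟨β, γ, rfl⟩ := List.append_of_mem hi
    have hcomm := cs.commute_wordProd (cs.simple i) β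
      (fun j hj => hc i (by simp) j (by simp [hj]))
    have he : cs.wordProd (i :: (β ++ i :: γ)) = cs.wordProd (β ++ γ) := by
      rw [wordProd_cons, wordProd_append, wordProd_cons, ← mul_assoc, hcomm.eq, mul_assoc,
        cs.simple_mul_simple_cancel_left, ← wordProd_append]
    have h1 := cs.length_wordProd_le (β ++ γ)
    rw [← he, hα.eq] at h1
    simp at h1

theorem commute_of_parabolic_equiv (T : Set B) {A : Type*} [CommGroup A]
    (e : cs.parabolic T ≃* A) (i j : B) (hi : i ∈ T) (hj : j ∈ T) :
    Commute (cs.simple i) (cs.simple j) := by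
  have hi' : cs.simple i ∈ cs.parabolic T := Subgroup.subset_closure ⟨i, hi, rfl⟩
  have hj' : cs.simple j ∈ cs.parabolic T := Subgroup.subset_closure ⟨j, hj, rfl⟩
  have h : (⟨_, hi'⟩ : cs.parabolic T) * ⟨_, hj'⟩ = ⟨_, hj'⟩ * ⟨_, hi'⟩ := by
    apply e.injective
    rw [map_mul, map_mul, mul_comm]
  exact congrArg Subtype.val h

/-- Under conditions (0) and (1), a simple reflection `s` outside a set `I` of at least two
simple reflections (the letters of `ω`) commutes with all of `I` as soon as `I ∪ {s}` is spherical. -/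
theorem commute_of_isSpherical
    (h0 : ∀ i j : B, orderOf (cs.simple i * cs.simple j) ≠ 0 →
      Even (orderOf (cs.simple i * cs.simple j)) → orderOf (cs.simple i * cs.simple j) = 2)
    (h1 : ∀ i j : B, i ≠ j → Odd (orderOf (cs.simple i * cs.simple j)) →
      cs.IsMaxSpherical {i, j})
    (ω : List B) (hnd : ω.Nodup) (hl : 2 ≤ ω.length)
    (s : B) (hs : s ∉ ω) (hfin : cs.IsSpherical (insert s {b | b ∈ ω}))
    (t : B) (ht : t ∈ ω) : Commute (cs.simple s) (cs.simple t) := by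
  have hst : s ≠ t := fun h => hs (h ▸ ht)
  have hpos : orderOf (cs.simple s * cs.simple t) ≠ 0 := by
    have hm : cs.simple s * cs.simple t ∈ cs.parabolic (insert s {b | b ∈ ω}) :=
      mul_mem (Subgroup.subset_closure ⟨s, by simp, rfl⟩)
        (Subgroup.subset_closure ⟨t, by simp [ht], rfl⟩)
    have : Finite (cs.parabolic (insert s {b | b ∈ ω})) := hfin
    rw [← Subgroup.orderOf_mk _ hm]
    exact (orderOf_pos _).ne'
  rcases Nat.even_or_odd (orderOf (cs.simple s * cs.simple t)) with he | ho
  · have h2 := pow_orderOf_eq_one (cs.simple s * cs.simple t)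
    rw [h0 s t hpos he, pow_two] at h2
    have h3 := eq_inv_of_mul_eq_one_left h2
    rwa [mul_inv_rev, inv_simple, inv_simple] at h3
  · exfalso
    obtain ⟨u, hu, hut⟩ : ∃ u ∈ ω, u ≠ t := by
      by_contra hn
      push Not at hn
      have := (hnd.subperm (fun a ha => by simpa using hn a ha : ω ⊆ [t])).length_le
      simp at this
      omega
    have heq := (h1 s t hst ho).2 _ hfin (by
      rintro a (rfl | rfl)
      · simp
      · simp [ht])
    have hmem : u ∈ ({s, t} : Set B) := heq ▸ (by simp [hu])
    rcases hmem with h | h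
    · exact hs (h ▸ hu)
    · exact hut h

end CoxeterSystem

/-- Let `(W,S)` satisfy conditions (0) and (1). Let `w = s_1 ⋯ s_l` and `v = t_1 ⋯ t_m`
be reduced representations with `W_{{s_1,…,s_l}} ≅ (ℤ/2ℤ)^l`, `W_{{t_1,…,t_m}} ≅ (ℤ/2ℤ)^m`
and `l ≥ 2`. If `w = x v x⁻¹` for some `x ∈ W`, then `w = v`. -/
theorem eq_of_conj_of_parabolic_z2 {B : Type*} [Fintype B] {W : Type*} [Group W]
    {M : CoxeterMatrix B} (cs : CoxeterSystem M W)
    (h0 : ∀ i j : B, orderOf (cs.simple i * cs.simple j) ≠ 0 →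
      Even (orderOf (cs.simple i * cs.simple j)) → orderOf (cs.simple i * cs.simple j) = 2)
    (h1 : ∀ i j : B, i ≠ j → Odd (orderOf (cs.simple i * cs.simple j)) →
      cs.IsMaxSpherical {i, j})
    (w v x : W) (ω ν : List B)
    (hw : w = cs.wordProd ω) (hv : v = cs.wordProd ν)
    (hwred : cs.length w = ω.length) (hvred : cs.length v = ν.length)
    (hWω : Nonempty ((cs.parabolic {b | b ∈ ω}) ≃* Multiplicative (Fin ω.length → ZMod 2)))
    (hWν : Nonempty ((cs.parabolic {b | b ∈ ν}) ≃* Multiplicative (Fin ν.length → ZMod 2)))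
    (hl : 2 ≤ ω.length)
    (hconj : w = x * v * x⁻¹) :
    w = v := by
  obtain ⟨eω⟩ := hWω
  obtain ⟨eν⟩ := hWν
  have hcω : ∀ i ∈ ω, ∀ j ∈ ω, Commute (cs.simple i) (cs.simple j) :=
    fun i hi j hj => cs.commute_of_parabolic_equiv _ eω i j hi hj
  have hcν : ∀ i ∈ ν, ∀ j ∈ ν, Commute (cs.simple i) (cs.simple j) :=
    fun i hi j hj => cs.commute_of_parabolic_equiv _ eν i j hi hj
  have hrω : cs.IsReduced ω := by rw [CoxeterSystem.IsReduced, ← hw, hwred]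
  have hrν : cs.IsReduced ν := by rw [CoxeterSystem.IsReduced, ← hv, hvred]
  have hnd := cs.nodup_of_commute ω hrω hcω
  replace hconj : w * x = x * v := by rw [hconj]; group
  induction hn : cs.length x using Nat.strong_induction_on generalizing x with
  | _ n ih =>
  subst hn
  -- Multiplying `x` on the left by a descent commuting with `w` shortens it.
  have left_step : ∀ s, cs.length (cs.simple s * x) < cs.length x →
      Commute (cs.simple s) w → w = v := by
    intro s hs hsw
    refine ih _ hs (cs.simple s * x) ?_ rfl
    rw [← mul_assoc, ← hsw.eq, mul_assoc, hconj, mul_assoc]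
  by_cases hL : ∃ s ∈ ω, cs.length (cs.simple s * x) < cs.length x
  · obtain ⟨s, hs, hsx⟩ := hL
    exact left_step s hsx (hw ▸ cs.commute_wordProd _ ω (fun j hj => hcω s hs j hj))
  by_cases hR : ∃ s ∈ ν, cs.length (x * cs.simple s) < cs.length x
  · obtain ⟨s, hs, hsx⟩ := hR
    have hsv : Commute (cs.simple s) v :=
      hv ▸ cs.commute_wordProd _ ν (fun j hj => hcν s hs j hj)
    refine ih _ hsx (x * cs.simple s) ?_ rfl
    rw [← mul_assoc, hconj, mul_assoc, mul_assoc, hsv.eq]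
  by_cases hx1 : x = 1
  · simpa [hx1] using hconj
  push Not at hL hR
  have lenL : cs.length (w * x) = ω.length + cs.length x := by
    rw [hw]
    exact cs.length_wordProd_mul_of_commute x ω hrω hcω (fun i hi => not_lt.mpr (hL i hi))
  have lenR : cs.length (x * v) = ν.length + cs.length x := by
    have h := cs.length_wordProd_mul_of_commute x⁻¹ ν.reverse hrν.reverse
      (fun i hi j hj => hcν i (by simpa using hi) j (by simpa using hj))
      (fun i hi => by
        have h := hR i (by simpa using hi)
        rw [← cs.length_inv (x * _), mul_inv_rev, cs.inv_simple, ← cs.length_inv x] at h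
        exact not_lt.mpr h)
    rwa [cs.wordProd_reverse, ← mul_inv_rev, cs.length_inv, cs.length_inv, List.length_reverse,
      ← hv] at h
  obtain ⟨s, hs⟩ := cs.exists_leftDescent_of_ne_one hx1
  have hsx : cs.length (cs.simple s * x) < cs.length x := hs
  have hsω : s ∉ ω := fun h => absurd hsx (not_lt.mpr (hL s h))
  have hfin : cs.IsSpherical (insert s {b | b ∈ ω}) := by
    apply cs.finite_parabolic_of_leftDescent _ (w * x)
    rintro i (rfl | hi)
    · have h := cs.length_mul_le (cs.simple i * x) v
      rw [hconj, lenR, ← mul_assoc]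
      omega
    · have h := cs.length_mul_le (cs.simple i * w) x
      have hiw : cs.length (cs.simple i * w) < cs.length w := by
        -- The letter `i` can be moved to the front of `ω`, where it cancels.
        obtain ⟨β, γ, hβγ⟩ := List.append_of_mem hi
        have hcomm := cs.commute_wordProd (cs.simple i) β
          (fun j hj => hcω i hi j (by simp [hβγ, hj]))
        have he : cs.simple i * w = cs.wordProd (β ++ γ) := by
          rw [hw, hβγ, cs.wordProd_append, cs.wordProd_cons, ← mul_assoc, hcomm.eq, mul_assoc,
            cs.simple_mul_simple_cancel_left, ← cs.wordProd_append]
        have h1 := cs.length_wordProd_le (β ++ γ)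
        rw [he, hwred, hβγ]
        simp only [List.length_append, List.length_cons] at h1 ⊢
        omega
      rw [lenL, ← mul_assoc]
      omega
  exact left_step s hsx (hw ▸ cs.commute_wordProd _ ω
    (fun t ht => cs.commute_of_isSpherical h0 h1 ω hnd hl s hsω hfin t ht))
end

section
/- Let (W,S) be a Coxeter system satisfying: (0) for all s,t ∈ S with m(s,t) even, m(s,t) = 2; (1) for all s ≠ t ∈ S with m(s,t) odd, {s,t} is a maximal spherical subset of S; (2) there is no three-element subset {s,t,u} ⊆ S such that m(s,t) and m(t,u) are both odd; (3) for all s ≠ t ∈ S with m(s,t) odd, the number of maximal spherical subsets of S intersecting {s,t} is at most two. Let x ∈ W and let T, U ⊆ S be subsets such that W_T ≅ (ℤ/2ℤ)^{|T|}, W_U ≅ (ℤ/2ℤ)^{|U|}, |T| ≥ 2 and |U| ≥ 2. Then W_T ∩ x W_U x^{-1} ⊆ W_{T ∩ U}. -/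
namespace CoxeterSystem

variable {B W : Type*} [Group W] {M : CoxeterMatrix B} (cs : CoxeterSystem M W)

/-- The relation `i ~ j`: the product `s_i s_j` has odd order. The order is computed in `W`, so
`i ~ j` also holds when `s_i = s_j`. -/
def OddRel (i j : B) : Prop := Odd (orderOf (cs.simple i * cs.simple j))

lemma oddRel_refl (i : B) : cs.OddRel i i := by simp [OddRel]

lemma OddRel.symm {cs : CoxeterSystem M W} {i j : B} (h : cs.OddRel i j) : cs.OddRel j i := by
  unfold OddRel at *
  rwa [← orderOf_inv, mul_inv_rev, cs.inv_simple, cs.inv_simple]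

lemma OddRel.trans {cs : CoxeterSystem M W}
    (h2 : ¬ ∃ i j k : B, i ≠ j ∧ j ≠ k ∧ i ≠ k ∧
      Odd (orderOf (cs.simple i * cs.simple j)) ∧ Odd (orderOf (cs.simple j * cs.simple k)))
    {i j k : B} (hij : cs.OddRel i j) (hjk : cs.OddRel j k) : cs.OddRel i k := by
  by_cases h : i = j
  · rwa [h]
  by_cases h' : j = k
  · rwa [← h']
  by_cases h'' : i = k
  · rw [h'']; exact cs.oddRel_refl k
  exact (h2 ⟨i, j, k, h, h', h'', hij, hjk⟩).elim

open Classical in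
/-- The parity homomorphism `φ_i`: it respects the relation for `s_j, s_k` because the target has
exponent `2` if `m(j, k)` is even or infinite, and because `j ~ k` if `m(j, k)` is odd. -/
lemma exists_parityHom
    (h2 : ¬ ∃ i j k : B, i ≠ j ∧ j ≠ k ∧ i ≠ k ∧
      Odd (orderOf (cs.simple i * cs.simple j)) ∧ Odd (orderOf (cs.simple j * cs.simple k)))
    (i : B) : ∃ φ : W →* Multiplicative (ZMod 2),
      ∀ j, φ (cs.simple j) = if cs.OddRel i j then Multiplicative.ofAdd 1 else 1 := by
  have sq : ∀ a : Multiplicative (ZMod 2), a * a = 1 := by decide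
  have hf : M.IsLiftable (fun j ↦
      if cs.OddRel i j then Multiplicative.ofAdd (1 : ZMod 2) else 1) := by
    intro j k
    rcases Nat.even_or_odd (M j k) with ⟨n, hn⟩ | hodd
    · rw [hn, ← two_mul, pow_mul, pow_two, sq, one_pow]
    · have hjk : cs.OddRel j k :=
        hodd.of_dvd_nat (orderOf_dvd_of_pow_eq_one (cs.simple_mul_simple_pow j k))
      have : cs.OddRel i j ↔ cs.OddRel i k :=
        ⟨fun h ↦ h.trans h2 hjk, fun h ↦ h.trans h2 hjk.symm⟩
      simp only [this, sq, one_pow]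
  exact ⟨cs.lift ⟨_, hf⟩, fun j ↦ cs.lift_apply_simple hf j⟩

variable {cs}

lemma commute_of_mem {T : Set B}
    (hT : Nonempty ((cs.parabolic T) ≃* Multiplicative (T → ZMod 2)))
    {i j : B} (hi : i ∈ T) (hj : j ∈ T) : Commute (cs.simple i) (cs.simple j) := by
  obtain ⟨e⟩ := hT
  let a : cs.parabolic T := ⟨cs.simple i, Subgroup.subset_closure ⟨i, hi, rfl⟩⟩
  let b : cs.parabolic T := ⟨cs.simple j, Subgroup.subset_closure ⟨j, hj, rfl⟩⟩
  have h : a * b = b * a := e.injective (by rw [map_mul, map_mul, mul_comm])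
  exact congrArg Subtype.val h

lemma isSpherical_of_equiv [Finite B] {T : Set B}
    (hT : Nonempty ((cs.parabolic T) ≃* Multiplicative (T → ZMod 2))) : cs.IsSpherical T := by
  obtain ⟨e⟩ := hT
  have : Finite (Multiplicative (T → ZMod 2)) := inferInstanceAs (Finite (T → ZMod 2))
  exact Finite.of_equiv _ e.symm.toEquiv

/-- Distinct elements of `T` are not equivalent: otherwise `T = {i, j}` by maximality of `{i, j}`,
and `s_i = s_j` because they commute, leaving `W_T` of order at most `2` rather than `4`. -/
lemma eq_of_odd_of_mem [Finite B]
    (h1 : ∀ i j : B, i ≠ j → Odd (orderOf (cs.simple i * cs.simple j)) →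
      cs.IsMaxSpherical {i, j})
    {T : Set B} (hT : Nonempty ((cs.parabolic T) ≃* Multiplicative (T → ZMod 2)))
    {i j : B} (hi : i ∈ T) (hj : j ∈ T) (hij : cs.OddRel i j) : i = j := by
  by_contra hne
  have hTeq : T = {i, j} := (h1 i j hne hij).2 T (isSpherical_of_equiv hT)
    (by rintro k (rfl | rfl) <;> assumption)
  have hsq : (cs.simple i * cs.simple j) ^ 2 = 1 := by
    rw [(commute_of_mem hT hi hj).mul_pow, cs.simple_sq, cs.simple_sq, one_mul]
  have hone : cs.simple i * cs.simple j = 1 := by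
    rw [← orderOf_eq_one_iff]
    exact Nat.Coprime.eq_one_of_dvd hij.coprime_two_right (orderOf_dvd_of_pow_eq_one hsq)
  have hs : cs.simple i = cs.simple j := by
    rw [mul_eq_one_iff_eq_inv.1 hone, cs.inv_simple]
  have hcard : Nat.card (cs.parabolic T) = 4 := by
    obtain ⟨e⟩ := hT
    have h := Nat.card_congr e.toEquiv
    have h' : Nat.card (Multiplicative (T → ZMod 2)) = Nat.card (T → ZMod 2) := rfl
    rw [h, h', Nat.card_fun, Nat.card_zmod, Nat.card_coe_set_eq, hTeq, Set.ncard_pair hne]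
    norm_num
  have hz : cs.parabolic T = Subgroup.zpowers (cs.simple i) := by
    rw [parabolic, hTeq, Set.image_pair, ← hs, Set.pair_eq_singleton, Subgroup.zpowers_eq_closure]
  rw [hz, Nat.card_zpowers] at hcard
  have := orderOf_le_of_pow_eq_one two_pos (cs.simple_sq i)
  omega

lemma exists_isMaxSpherical [Finite B] {T : Set B} (hT : cs.IsSpherical T) :
    ∃ T', T ⊆ T' ∧ cs.IsMaxSpherical T' := by
  obtain ⟨T', hle, hmax⟩ := (Set.toFinite {V : Set B | cs.IsSpherical V}).exists_le_maximal hT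
  exact ⟨T', hle, hmax.1, fun V hV h ↦ (hmax.2 hV h).antisymm h⟩

/-- As `j ∉ T` by `eq_of_odd_of_mem`, any second element of `T` lies outside `{i, j}`. -/
lemma not_subset_pair [Finite B]
    (h1 : ∀ i j : B, i ≠ j → Odd (orderOf (cs.simple i * cs.simple j)) →
      cs.IsMaxSpherical {i, j})
    {T : Set B} (hT : Nonempty ((cs.parabolic T) ≃* Multiplicative (T → ZMod 2)))
    (hTcard : 2 ≤ T.ncard) {i j : B} (hi : i ∈ T) (hne : i ≠ j) (hij : cs.OddRel i j) :
    ¬ T ⊆ {i, j} := by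
  intro hsub
  obtain ⟨r, hr, hri⟩ := Set.exists_ne_of_one_lt_ncard (by omega : 1 < T.ncard) i
  rcases hsub hr with h | h
  · exact hri h
  · obtain rfl : r = j := h
    exact hne (eq_of_odd_of_mem h1 hT hi hr hij)

lemma eq_of_odd_of_mem_of_mem [Finite B]
    (h1 : ∀ i j : B, i ≠ j → Odd (orderOf (cs.simple i * cs.simple j)) →
      cs.IsMaxSpherical {i, j})
    (h3 : ∀ i j : B, i ≠ j → Odd (orderOf (cs.simple i * cs.simple j)) →
      {T : Set B | cs.IsMaxSpherical T ∧ (T ∩ {i, j}).Nonempty}.ncard ≤ 2)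
    {T U : Set B}
    (hT : Nonempty ((cs.parabolic T) ≃* Multiplicative (T → ZMod 2)))
    (hU : Nonempty ((cs.parabolic U) ≃* Multiplicative (U → ZMod 2)))
    (hTcard : 2 ≤ T.ncard) (hUcard : 2 ≤ U.ncard)
    {i j : B} (hi : i ∈ T) (hj : j ∈ U) (hij : cs.OddRel i j) : i = j := by
  by_contra hne
  have hpair := h1 i j hne hij
  obtain ⟨T', hTT', hT'⟩ := exists_isMaxSpherical (isSpherical_of_equiv hT)
  obtain ⟨U', hUU', hU'⟩ := exists_isMaxSpherical (isSpherical_of_equiv hU)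
  have hT'ne : T' ≠ {i, j} := fun h ↦
    not_subset_pair h1 hT hTcard hi hne hij (h ▸ hTT')
  have hU'ne : U' ≠ {i, j} := fun h ↦
    not_subset_pair h1 hU hUcard hj (Ne.symm hne) hij.symm (by rw [Set.pair_comm]; exact h ▸ hUU')
  have hTU : T' = U' := by
    by_contra hTU
    have hsub : ({T', U', {i, j}} : Set (Set B)) ⊆
        {T : Set B | cs.IsMaxSpherical T ∧ (T ∩ {i, j}).Nonempty} := by
      rintro V (rfl | rfl | rfl)
      · exact ⟨hT', i, hTT' hi, by simp⟩
      · exact ⟨hU', j, hUU' hj, by simp⟩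
      · exact ⟨hpair, i, by simp⟩
    have hle := Set.ncard_le_ncard hsub (Set.toFinite _)
    have hthree : ({T', U', {i, j}} : Set (Set B)).ncard = 3 :=
      Set.ncard_eq_three.2 ⟨T', U', {i, j}, hTU, hT'ne, hU'ne, rfl⟩
    have := h3 i j hne hij
    omega
  refine hT'ne (hpair.2 T' hT'.1 ?_)
  rintro k (rfl | rfl)
  · exact hTT' hi
  · rw [hTU]; exact hUU' hj

/-- Since the generators in `T` are commuting involutions, every element of `W_T` is a product of
distinct generators. -/
lemma exists_nodup_word {T : Set B}
    (hc : ∀ i ∈ T, ∀ j ∈ T, Commute (cs.simple i) (cs.simple j))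
    {y : W} (hy : y ∈ cs.parabolic T) :
    ∃ l : List B, l.Nodup ∧ (∀ i ∈ l, i ∈ T) ∧ cs.wordProd l = y := by
  classical
  have step : ∀ i ∈ T, ∀ y : W,
      (∃ l : List B, l.Nodup ∧ (∀ i ∈ l, i ∈ T) ∧ cs.wordProd l = y) →
      ∃ l : List B, l.Nodup ∧ (∀ i ∈ l, i ∈ T) ∧ cs.wordProd l = cs.simple i * y := by
    rintro i hi _ ⟨l, hnd, hl, rfl⟩
    by_cases hil : i ∈ l
    · refine ⟨l.erase i, hnd.erase i, fun j hj ↦ hl j (List.mem_of_mem_erase hj), ?_⟩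
      have hperm : (l.map cs.simple).Perm ((i :: l.erase i).map cs.simple) :=
        (List.perm_cons_erase hil).map _
      have hpw : (l.map cs.simple).Pairwise Commute := by
        rw [List.pairwise_map]
        exact List.pairwise_of_forall_mem_list (fun a ha b hb ↦ hc a (hl a ha) b (hl b hb))
      have := hperm.prod_eq' hpw
      change cs.wordProd l = cs.wordProd (i :: l.erase i) at this
      rw [this, cs.wordProd_cons, cs.simple_mul_simple_cancel_left]
    · refine ⟨i :: l, List.nodup_cons.2 ⟨hil, hnd⟩, ?_, cs.wordProd_cons i l⟩
      rintro j (_ | ⟨_, hj⟩)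
      · exact hi
      · exact hl j hj
  refine Subgroup.closure_induction_left (p := fun y _ ↦ ∃ l : List B, l.Nodup ∧
    (∀ i ∈ l, i ∈ T) ∧ cs.wordProd l = y) ⟨[], by simp⟩ ?_ ?_ hy
  · rintro _ ⟨i, hi, rfl⟩ y _ h
    exact step i hi y h
  · rintro _ ⟨i, hi, rfl⟩ y _ h
    rw [cs.inv_simple]
    exact step i hi y h

end CoxeterSystem

open CoxeterSystem in
/-- Let `(W,S)` satisfy conditions (0)–(3), let `x ∈ W` and let `T, U ⊆ S` with
`W_T ≅ (ℤ/2ℤ)^{|T|}`, `W_U ≅ (ℤ/2ℤ)^{|U|}`, `|T| ≥ 2` and `|U| ≥ 2`. Then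
`W_T ∩ x W_U x⁻¹ ⊆ W_{T ∩ U}`. -/
theorem inf_conj_le_parabolic_inter {B : Type*} [Fintype B] {W : Type*} [Group W]
    {M : CoxeterMatrix B} (cs : CoxeterSystem M W)
    (h0 : ∀ i j : B, orderOf (cs.simple i * cs.simple j) ≠ 0 →
      Even (orderOf (cs.simple i * cs.simple j)) → orderOf (cs.simple i * cs.simple j) = 2)
    (h1 : ∀ i j : B, i ≠ j → Odd (orderOf (cs.simple i * cs.simple j)) →
      cs.IsMaxSpherical {i, j})
    (h2 : ¬ ∃ i j k : B, i ≠ j ∧ j ≠ k ∧ i ≠ k ∧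
      Odd (orderOf (cs.simple i * cs.simple j)) ∧ Odd (orderOf (cs.simple j * cs.simple k)))
    (h3 : ∀ i j : B, i ≠ j → Odd (orderOf (cs.simple i * cs.simple j)) →
      {T : Set B | cs.IsMaxSpherical T ∧ (T ∩ {i, j}).Nonempty}.ncard ≤ 2)
    (x : W) (T U : Set B)
    (hT : Nonempty ((cs.parabolic T) ≃* Multiplicative (T → ZMod 2)))
    (hU : Nonempty ((cs.parabolic U) ≃* Multiplicative (U → ZMod 2)))
    (hTcard : 2 ≤ T.ncard) (hUcard : 2 ≤ U.ncard) :
    cs.parabolic T ⊓ conjSubgroup x (cs.parabolic U) ≤ cs.parabolic (T ∩ U) := by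
  classical
  rintro y ⟨hyT, z, hz, hzy⟩
  obtain ⟨l, hnd, hl, rfl⟩ := exists_nodup_word
    (fun i hi j hj ↦ commute_of_mem hT hi hj) hyT
  have key : ∀ i ∈ l, i ∈ U := by
    intro i hil
    obtain ⟨φ, hφ⟩ := cs.exists_parityHom h2 i
    have hφz : φ (cs.wordProd l) = φ z := by
      rw [← hzy]
      simp
    -- Within `l`, only the single occurrence of `i` contributes to `φ`.
    have hφl : φ (cs.wordProd l) = Multiplicative.ofAdd 1 := by
      have hmap : l.map (φ ∘ cs.simple) =
          l.map (fun j ↦ if j = i then Multiplicative.ofAdd 1 else 1) := by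
        refine List.map_congr_left fun j hj ↦ ?_
        have : cs.OddRel i j ↔ j = i :=
          ⟨fun h ↦ (eq_of_odd_of_mem h1 hT (hl i hil) (hl j hj) h).symm,
            fun h ↦ h ▸ cs.oddRel_refl _⟩
        simp only [Function.comp, hφ, this]
      rw [CoxeterSystem.wordProd, map_list_prod, List.map_map, hmap,
        List.prod_map_ite_eq, List.count_eq_one_of_mem hnd hil]
      simp
    have hex : ∃ j ∈ U, cs.OddRel i j := by
      by_contra! hno
      have hker : cs.parabolic U ≤ φ.ker := by
        rw [CoxeterSystem.parabolic, Subgroup.closure_le]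
        rintro _ ⟨j, hj, rfl⟩
        simp [MonoidHom.mem_ker, hφ, hno j hj]
      have h1z : φ z = 1 := hker hz
      rw [hφl, h1z] at hφz
      exact absurd hφz (by decide)
    obtain ⟨j, hj, hij⟩ := hex
    rw [eq_of_odd_of_mem_of_mem h1 h3 hT hU hTcard hUcard (hl i hil) hj hij]
    exact hj
  refine Subgroup.list_prod_mem _ fun w hw ↦ ?_
  obtain ⟨i, hi, rfl⟩ := List.mem_map.1 hw
  exact Subgroup.subset_closure ⟨i, ⟨hl i hi, key i hi⟩, rfl⟩
end

section
/- Let (W,S) and (W',S') be Coxeter systems, and suppose there exists a group isomorphism φ : W → W' and that (W',S') satisfies: (2') there is no three-element subset {s',t',u'} ⊆ S' such that m'(s',t') and m'(t',u') are both odd. Let {s,t} and T be maximal spherical subsets of S with m(s,t) odd, and let {s',t'} and T' be maximal spherical subsets of S' such that φ(W_{{s,t}}) is conjugate in W' to W'_{{s',t'}} and φ(W_T) is conjugate in W' to W'_{T'}. If {s,t} ∩ T ≠ ∅, then {s',t'} ∩ T' ≠ ∅. -/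
/-- In a group generated by two involutions `a`, `b`, every element is a rotation (a power of `ab`)
or a reflection (`a` times a power of `ab`). -/
lemma mem_closure_pair_involutions {G : Type*} [Group G] {a b : G} (ha : a * a = 1)
    (hb : b * b = 1) {x : G} (hx : x ∈ Subgroup.closure ({a, b} : Set G)) :
    ∃ k : ℤ, x = (a * b) ^ k ∨ x = a * (a * b) ^ k := by
  have ha' : a⁻¹ = a := inv_eq_of_mul_eq_one_left ha
  have hb' : b⁻¹ = b := inv_eq_of_mul_eq_one_left hb
  have hbe : b = a * (a * b) := by rw [← mul_assoc, ha, one_mul]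
  -- Left multiplication by a generator preserves the set of rotations and reflections.
  have hmul : ∀ g ∈ ({a, b} : Set G), ∀ y : G,
      (∃ k : ℤ, y = (a * b) ^ k ∨ y = a * (a * b) ^ k) →
      ∃ k : ℤ, g * y = (a * b) ^ k ∨ g * y = a * (a * b) ^ k := by
    rintro g hg y ⟨k, hy⟩
    rcases hg with rfl | hg
    · rcases hy with rfl | rfl
      · exact ⟨k, Or.inr rfl⟩
      · exact ⟨k, Or.inl (by rw [← mul_assoc, ha, one_mul])⟩
    · rw [Set.mem_singleton_iff] at hg
      subst hg
      rcases hy with rfl | rfl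
      · refine ⟨1 + k, Or.inr ?_⟩
        rw [zpow_add, zpow_one, ← mul_assoc, ← hbe]
      · refine ⟨-1 + k, Or.inl ?_⟩
        rw [zpow_add, zpow_neg_one, mul_inv_rev, ha', hb', mul_assoc]
  induction hx using Subgroup.closure_induction_left with
  | one => exact ⟨0, Or.inl (by simp)⟩
  | mul_left g hg y _ ih => exact hmul g hg y ih
  | inv_mul_cancel g hg y _ ih =>
    have : g⁻¹ = g := by
      rcases hg with rfl | hg
      · exact ha'
      · rw [Set.mem_singleton_iff] at hg
        rw [hg, hb']
    rw [this]
    exact hmul g hg y ih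

lemma finite_closure_pair_involutions {G : Type*} [Group G] {a b : G} (ha : a * a = 1)
    (hb : b * b = 1) (hab : IsOfFinOrder (a * b)) :
    Finite (Subgroup.closure ({a, b} : Set G)) := by
  have hZ : (Subgroup.zpowers (a * b) : Set G).Finite := hab.finite_zpowers
  refine Set.Finite.subset (hZ.union (hZ.image (a * ·))) ?_
  intro x hx
  obtain ⟨k, rfl | rfl⟩ := mem_closure_pair_involutions ha hb hx
  · exact Or.inl ⟨k, rfl⟩
  · exact Or.inr ⟨_, ⟨k, rfl⟩, rfl⟩

/-- If two pairs of nontrivial involutions generate the same subgroup and the product of the first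
pair has odd order, then so has the product of the second. -/
lemma dihedral_odd_transfer {G : Type*} [Group G] {a b c d : G} (ha : a * a = 1)
    (hb : b * b = 1) (hc : c * c = 1) (hd : d * d = 1) (hc1 : c ≠ 1) (hd1 : d ≠ 1)
    (h : Subgroup.closure ({a, b} : Set G) = Subgroup.closure {c, d})
    (hodd : Odd (orderOf (a * b))) : Odd (orderOf (c * d)) := by
  have hcm : c ∈ Subgroup.closure ({a, b} : Set G) := h ▸ Subgroup.subset_closure (by simp)
  have hdm : d ∈ Subgroup.closure ({a, b} : Set G) := h ▸ Subgroup.subset_closure (by simp)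
  obtain ⟨k, hk | hk⟩ := mem_closure_pair_involutions ha hb (mul_mem hcm hdm)
  · refine hodd.of_dvd_nat (orderOf_dvd_of_pow_eq_one ?_)
    rw [hk, ← zpow_natCast, ← zpow_mul, mul_comm, zpow_mul, zpow_natCast, pow_orderOf_eq_one,
      one_zpow]
  · -- Here `cd` is a reflection, hence an involution, so that `c` and `d` commute.
    have hinv : a * (a * b) ^ k * (a * (a * b) ^ k) = 1 := by
      have h1 : a * (a * b) ^ k * a⁻¹ = (a * (a * b) * a⁻¹) ^ k := (conj_zpow).symm
      have ha' : a⁻¹ = a := inv_eq_of_mul_eq_one_left ha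
      have hb' : b⁻¹ = b := inv_eq_of_mul_eq_one_left hb
      have h2 : a * (a * b) * a⁻¹ = (a * b)⁻¹ := by
        rw [mul_inv_rev, ha', hb', ← mul_assoc, ha, one_mul]
      rw [h2, ha'] at h1
      rw [← mul_assoc, h1, inv_zpow, inv_mul_cancel]
    rw [← hk] at hinv
    have hcomm : c * d = d * c := by
      have h3 := eq_inv_of_mul_eq_one_left hinv
      rwa [mul_inv_rev, inv_eq_of_mul_eq_one_left hc, inv_eq_of_mul_eq_one_left hd] at h3
    have habcomm : a * b = b * a := by
      have ham : a ∈ Subgroup.closure ({c, d} : Set G) := h ▸ Subgroup.subset_closure (by simp)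
      have hbm : b ∈ Subgroup.closure ({c, d} : Set G) := h ▸ Subgroup.subset_closure (by simp)
      have hall : ∀ x ∈ ({c, d} : Set G), ∀ y ∈ ({c, d} : Set G), x * y = y * x := by
        rintro x (rfl | rfl) y (rfl | rfl)
        exacts [rfl, hcomm, hcomm.symm, rfl]
      have := Subgroup.isMulCommutative_closure hall
      exact setLike_mul_comm ham hbm
    -- The order of `ab` is odd and divides `2`, so the whole group is `{1, a}` and `c = d = a`.
    have hab : a * b = 1 := by
      have hsq : (a * b) ^ 2 = 1 := by
        rw [sq]
        nth_rewrite 2 [habcomm]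
        rw [mul_assoc, ← mul_assoc b, hb, one_mul, ha]
      have hcop : Nat.Coprime 2 (orderOf (a * b)) := (Nat.coprime_two_left).2 hodd
      exact orderOf_eq_one_iff.1
        (Nat.eq_one_of_dvd_coprimes hcop (orderOf_dvd_of_pow_eq_one hsq) dvd_rfl)
    have key : ∀ x ∈ Subgroup.closure ({a, b} : Set G), x ≠ 1 → x = a := by
      intro x hx hx1
      obtain ⟨l, hl | hl⟩ := mem_closure_pair_involutions ha hb hx
      · rw [hab, one_zpow] at hl
        exact absurd hl hx1
      · rwa [hab, one_zpow, mul_one] at hl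
    rw [key c hcm hc1, key d hdm hd1, ha]
    simp

/-- If `C` is a union of connected components of the graph of odd labels, there is a character
with values in `{±1}` sending the simple reflections in `C` to `-1` and the others to `1`. -/
lemma CoxeterSystem.exists_character {B W : Type*} [Group W] {M : CoxeterMatrix B}
    (cs : CoxeterSystem M W) (C : Set B)
    (hC : ∀ i ∈ C, ∀ j, Odd (M i j) → j ∈ C) :
    ∃ χ : W →* ℤˣ, (∀ i ∈ C, χ (cs.simple i) = -1) ∧ ∀ i ∉ C, χ (cs.simple i) = 1 := by
  classical
  have hf : M.IsLiftable (fun i => if i ∈ C then (-1 : ℤˣ) else 1) := by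
    intro i j
    by_cases hij : Odd (M i j)
    · have hiff : i ∈ C ↔ j ∈ C :=
        ⟨fun h => hC i h j hij, fun h => hC j h i (M.symmetric i j ▸ hij)⟩
      by_cases hj : j ∈ C <;> simp [hiff, hj]
    · obtain ⟨l, hl⟩ := Nat.not_odd_iff_even.1 hij
      rw [hl, ← two_mul, pow_mul, Int.units_sq, one_pow]
  refine ⟨cs.lift ⟨_, hf⟩, fun i hi => ?_, fun i hi => ?_⟩
  · rw [cs.lift_apply_simple hf, if_pos hi]
  · rw [cs.lift_apply_simple hf, if_neg hi]

lemma CoxeterSystem.simple_ne_one' {B W : Type*} [Group W] {M : CoxeterMatrix B}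
    (cs : CoxeterSystem M W) (i : B) : cs.simple i ≠ 1 := by
  obtain ⟨χ, hχ, -⟩ := cs.exists_character Set.univ (fun _ _ _ _ => trivial)
  intro h
  have := hχ i trivial
  rw [h, map_one] at this
  exact absurd this (by decide)

/-- Let `φ : W → W'` be an isomorphism of Coxeter groups, where `(W',S')` satisfies
condition (2'). Let `{s,t}` and `T` be maximal spherical subsets of `S` with `m(s,t)` odd,
and let `{s',t'}` and `T'` be maximal spherical subsets of `S'` with `φ(W_{{s,t}})`
conjugate to `W'_{{s',t'}}` and `φ(W_T)` conjugate to `W'_{T'}`. If `{s,t} ∩ T ≠ ∅`,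
then `{s',t'} ∩ T' ≠ ∅`. -/
theorem inter_nonempty_of_conj {B B' : Type*} [Fintype B] [Fintype B']
    {W W' : Type*} [Group W] [Group W']
    {M : CoxeterMatrix B} (cs : CoxeterSystem M W)
    {M' : CoxeterMatrix B'} (cs' : CoxeterSystem M' W')
    (φ : W ≃* W')
    (h2' : ¬ ∃ i j k : B', i ≠ j ∧ j ≠ k ∧ i ≠ k ∧
      Odd (orderOf (cs'.simple i * cs'.simple j)) ∧
      Odd (orderOf (cs'.simple j * cs'.simple k)))
    (s t : B) (hst : s ≠ t) (hodd : Odd (orderOf (cs.simple s * cs.simple t)))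
    (hstmax : cs.IsMaxSpherical {s, t})
    (T : Set B) (hT : cs.IsMaxSpherical T)
    (s' t' : B') (hstmax' : cs'.IsMaxSpherical {s', t'})
    (T' : Set B') (hT' : cs'.IsMaxSpherical T')
    (hconj1 : ∃ w' : W', Subgroup.map φ.toMonoidHom (cs.parabolic {s, t})
      = conjSubgroup w' (cs'.parabolic {s', t'}))
    (hconj2 : ∃ w' : W', Subgroup.map φ.toMonoidHom (cs.parabolic T)
      = conjSubgroup w' (cs'.parabolic T'))
    (hne : (({s, t} : Set B) ∩ T).Nonempty) :
    (({s', t'} : Set B') ∩ T').Nonempty := by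
  obtain ⟨w, hw⟩ := hconj1
  obtain ⟨v, hv⟩ := hconj2
  have hpair : cs.parabolic {s, t} = Subgroup.closure {cs.simple s, cs.simple t} := by
    rw [CoxeterSystem.parabolic, Set.image_pair]
  have hpair' : ∀ i j : B', cs'.parabolic {i, j}
      = Subgroup.closure {cs'.simple i, cs'.simple j} := fun i j => by
    rw [CoxeterSystem.parabolic, Set.image_pair]
  -- The simple reflections of `{s', t'}` are moved into `φ(W_{s,t})` by conjugation with `w`.
  have hclos : Subgroup.closure ({φ (cs.simple s), φ (cs.simple t)} : Set W')
      = Subgroup.closure {w * cs'.simple s' * w⁻¹, w * cs'.simple t' * w⁻¹} := by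
    rw [hpair, hpair', conjSubgroup, MonoidHom.map_closure, MonoidHom.map_closure,
      Set.image_pair, Set.image_pair] at hw
    exact hw
  have hsq' : ∀ i, w * cs'.simple i * w⁻¹ * (w * cs'.simple i * w⁻¹) = 1 := fun i => by
    rw [conj_mul, cs'.simple_mul_simple_self, mul_one, mul_inv_cancel]
  have hne' : ∀ i, w * cs'.simple i * w⁻¹ ≠ 1 := fun i h =>
    cs'.simple_ne_one' i (conj_eq_one_iff.1 h)
  have hsq : ∀ i, φ (cs.simple i) * φ (cs.simple i) = 1 := fun i => by
    rw [← map_mul, cs.simple_mul_simple_self, map_one]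
  have hoddφ : Odd (orderOf (φ (cs.simple s) * φ (cs.simple t))) := by
    rwa [← map_mul, MulEquiv.orderOf_eq]
  have hodd' : Odd (orderOf (cs'.simple s' * cs'.simple t')) := by
    have h := dihedral_odd_transfer (hsq s) (hsq t) (hsq' s') (hsq' t') (hne' s') (hne' t')
      hclos hoddφ
    rw [conj_mul] at h
    have h4 := MulEquiv.orderOf_eq (MulAut.conj w) (cs'.simple s' * cs'.simple t')
    rw [MulAut.conj_apply] at h4
    rwa [h4] at h
  have hMdvd : ∀ i j, Odd (M' i j) → Odd (orderOf (cs'.simple i * cs'.simple j)) :=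
    fun i j h => h.of_dvd_nat (orderOf_dvd_of_pow_eq_one (cs'.simple_mul_simple_pow i j))
  have hC : ∀ i ∈ ({s', t'} : Set B'), ∀ j, Odd (M' i j) → j ∈ ({s', t'} : Set B') := by
    intro i hi j hij
    by_contra hj
    by_cases hst' : s' = t'
    · subst hst'
      have hi' : i = s' := by simpa using hi
      subst hi'
      have hfin : cs'.IsSpherical {i, j} := by
        rw [CoxeterSystem.IsSpherical, hpair']
        exact finite_closure_pair_involutions (cs'.simple_mul_simple_self i)
          (cs'.simple_mul_simple_self j) (orderOf_pos_iff.1 (hMdvd i j hij).pos)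
      -- An odd edge at `s'` contradicts the maximality of `{s'}`.
      have := hstmax'.2 {i, j} hfin (by simp)
      exact hj (this ▸ by simp)
    · simp only [Set.mem_insert_iff, Set.mem_singleton_iff, not_or] at hj
      rcases hi with rfl | hi
      · exact h2' ⟨j, i, t', hj.1, hst', hj.2, hMdvd j i (M'.symmetric i j ▸ hij), hodd'⟩
      · rw [Set.mem_singleton_iff] at hi
        subst hi
        exact h2' ⟨s', i, j, hst', Ne.symm hj.2, Ne.symm hj.1, hodd', hMdvd i j hij⟩
  obtain ⟨χ, hχC, hχ⟩ := cs'.exists_character _ hC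
  have hconjχ : ∀ g x : W', χ (g * x * g⁻¹) = χ x := fun g x => by
    rw [map_mul, map_mul, map_inv, mul_comm, inv_mul_cancel_left]
  have hχst : χ (φ (cs.simple s)) = χ (φ (cs.simple t)) := by
    have h5 : (χ (φ (cs.simple s) * φ (cs.simple t)))
        ^ orderOf (φ (cs.simple s) * φ (cs.simple t)) = 1 := by
      rw [← map_pow, pow_orderOf_eq_one, map_one]
    rw [Int.units_pow_eq_pow_mod_two, Nat.odd_iff.1 hoddφ, pow_one, map_mul] at h5
    rw [← Int.units_inv_eq_self (χ (φ (cs.simple t)))]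
    exact eq_inv_of_mul_eq_one_left h5
  -- `χ ∘ φ` is nontrivial on `W_{s,t}`, so its common value on `s` and `t` is `-1`.
  have hχs : χ (φ (cs.simple s)) ≠ 1 := by
    intro h1
    have hle : Subgroup.closure ({φ (cs.simple s), φ (cs.simple t)} : Set W') ≤ χ.ker := by
      rw [Subgroup.closure_le]
      rintro x (rfl | rfl)
      · exact h1
      · exact MonoidHom.mem_ker.2 (hχst.symm.trans h1)
    have h6 : w * cs'.simple s' * w⁻¹ ∈ χ.ker :=
      hle (hclos ▸ Subgroup.subset_closure (by simp))
    rw [MonoidHom.mem_ker, hconjχ, hχC s' (by simp)] at h6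
    exact absurd h6 (by decide)
  by_contra hemp
  have hker : cs'.parabolic T' ≤ χ.ker := by
    rw [CoxeterSystem.parabolic, Subgroup.closure_le]
    rintro _ ⟨i, hi, rfl⟩
    exact hχ i fun hi' => hemp ⟨i, hi', hi⟩
  obtain ⟨x, hx, hxT⟩ := hne
  have hxm : φ (cs.simple x) ∈ conjSubgroup v (cs'.parabolic T') := by
    rw [← hv]
    exact ⟨_, Subgroup.subset_closure ⟨x, hxT, rfl⟩, rfl⟩
  obtain ⟨y, hy, hyx⟩ := hxm
  have h7 : χ (φ (cs.simple x)) = 1 := by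
    rw [← hyx]
    exact (hconjχ v y).trans (hker hy)
  rcases hx with rfl | rfl
  · exact hχs h7
  · exact hχs (hχst.trans h7)
end
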